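/- arXiv:math/0610820 — 3 statements merged into one kernel-verified Lean document; each statement's English description precedes it below -/
import Mathlib

section
/- No solenoid can be embedded into a surface. That is, for any sequence of integers w₁, w₂, … with each wₙ > 1, there is no topological embedding of the solenoid Θ of type (w₁, w₂, …) into any surface F. -/
open Topology

/-- The solenoid of type `(w 0, w 1, …)` (denoted `(w₁, w₂, …)` in the paper),
as a subgroup of the product of countably many circles:
`{(x₀, x₁, …) : xₙ₋₁ = xₙ ^ wₙ for all n ≥ 1}`. -/
noncomputable def solenoidSubgroup (w : ℕ → ℕ) : Subgroup (ℕ → Circle) where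
  carrier := {x | ∀ n, x n = x (n + 1) ^ w n}
  one_mem' := by intro n; simp
  mul_mem' := by intro a b ha hb n; simp only [Pi.mul_apply, ha n, hb n, mul_pow]
  inv_mem' := by intro a ha n; simp only [Pi.inv_apply, ha n, inv_pow]

/-- The solenoid as a topological space, with the subspace topology from the
product topology. -/
noncomputable abbrev Solenoid (w : ℕ → ℕ) : Type :=
  ↥(solenoidSubgroup w)

/-- A surface: a nonempty Hausdorff, second-countable space in which every point
has an open neighborhood homeomorphic to an open subset of ℝ². -/
def IsSurface (F : Type*) [TopologicalSpace F] : Prop :=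
  Nonempty F ∧ T2Space F ∧ SecondCountableTopology F ∧
    ∀ x : F, ∃ (U : Set F) (V : Set (EuclideanSpace ℝ (Fin 2))),
      IsOpen U ∧ x ∈ U ∧ IsOpen V ∧ Nonempty (↥U ≃ₜ ↥V)

/-!
Translating an arc of the one-parameter subgroup gives a continuous family of injective arcs, and
two translates by distinct points over the same point of a circle are disjoint. For disjoint plane
arcs `γ`, `δ` near a common injective arc, the total turning of `δ v - γ u` from `(u, v) = (0, 1)`
to `(1, 0)` decides which arc lies to the right. This is a linear order: after a rotation and
scaling, it compares the heights at which the arcs first cross a suitable vertical line. A change of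
charts preserves or reverses it, so whether two pairs of arcs are ordered in the same way does not
depend on the chart.

Let `K` be a small closed subgroup of the solenoid, the kernel of a projection to a circle. Ordering
two pairs of elements of `x K` in the same way is a locally constant condition on `x`, hence
constant, because the solenoid is connected. Comparing a pair in `K` with its translate by `τ ∈ K`
and using this at `x = 1` and `x = τ` shows that translation by `U = τ ^ 2` preserves the order of
`K`. So `1, U, U ^ 2, …` is strictly monotone if `U ≠ 1`. But the powers of `U` accumulate at `1`
by compactness, which the stability of the order of `1` and `U` forbids.
-/

open Complex Filter Set unitInterval

universe u

instance : LocallyPathConnectedSpace I :=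
  (convex_Icc (0 : ℝ) 1).locallyPathConnectedSpace

instance : ContractibleSpace I :=
  (convex_Icc (0 : ℝ) 1).contractibleSpace ⟨0, by simp⟩

section ContinuousLog

variable {X : Type*} [TopologicalSpace X]

lemma exists_continuous_log [SimplyConnectedSpace X] [LocallyPathConnectedSpace X]
    {g : X → ℂ} (hg : Continuous g) (hg0 : ∀ x, g x ≠ 0) {x₀ : X} {c : ℂ} (hc : exp c = g x₀) :
    ∃ l : X → ℂ, Continuous l ∧ l x₀ = c ∧ ∀ x, exp (l x) = g x := by
  obtain ⟨l, ⟨hl₀, hl⟩, -⟩ :=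
    isCoveringMapOn_exp.existsUnique_continuousMap_lifts ⟨g, hg⟩ hc hg0
  exact ⟨l, l.continuous, hl₀, congrFun hl⟩

lemma sub_eq_sub_of_exp_eq_mul_exp [PreconnectedSpace X] {f g : X → ℂ} (hf : Continuous f)
    (hg : Continuous g) {c : ℂ} (h : ∀ x, exp (f x) = c * exp (g x)) (x y : X) :
    f x - f y = g x - g y := by
  have hexp (x : X) : exp (f x - g x) = c := by
    rw [exp_sub, h, mul_div_cancel_right₀ _ (exp_ne_zero _)]
  have hconst : f x - g x = f y - g y :=
    (T2Space.isSeparatedMap _).const_of_comp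
      isCoveringMap_exp.isLocalHomeomorph.isLocallyInjective (hf.sub hg)
      (fun x y ↦ Subtype.ext <| (hexp x).trans (hexp y).symm) x y
  linear_combination hconst

lemma sameRay_exp_of_im_eq {a b : ℂ} (h : a.im = b.im) : SameRay ℝ (exp a) (exp b) := by
  have hab : a = (a.re - b.re : ℝ) + b := by
    apply Complex.ext <;> simp [h]
  rw [hab, exp_add, ← ofReal_exp, ← real_smul]
  exact SameRay.sameRay_nonneg_smul_left _ (Real.exp_nonneg _)

lemma im_lt_im_iff_of_not_sameRay [PreconnectedSpace X] {f g : X → ℂ} (hf : Continuous f)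
    (hg : Continuous g) (h : ∀ x, ¬ SameRay ℝ (exp (f x)) (exp (g x))) (x y : X) :
    (f x).im < (g x).im ↔ (f y).im < (g y).im := by
  have himp (x y : X) (hx : (f x).im < (g x).im) : (f y).im < (g y).im := by
    by_contra! hy
    obtain ⟨z, hz⟩ := intermediate_value_univ₂ (continuous_im.comp hf) (continuous_im.comp hg)
      hx.le hy
    exact h z (sameRay_exp_of_im_eq hz)
  exact ⟨himp x y, himp y x⟩

end ContinuousLog

/-- Arcs in `F` parametrised by the unit interval; self-intersections are allowed. -/
abbrev Arc (F : Type*) [TopologicalSpace F] := C(I, F)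

/-- `L` is a continuous logarithm of the difference `δ v - γ u` of two plane arcs. -/
def IsDifferenceLog (L : I × I → ℂ) (γ δ : Arc ℂ) : Prop :=
  Continuous L ∧ ∀ u v, exp (L (u, v)) = δ v - γ u

lemma exists_isDifferenceLog {γ δ : Arc ℂ} (h : Disjoint (range γ) (range δ)) :
    ∃ L, IsDifferenceLog L γ δ := by
  have hne (p : I × I) : δ p.2 - γ p.1 ≠ 0 :=
    sub_ne_zero.2 (disjoint_range_iff.1 h p.1 p.2).symm
  obtain ⟨L, hL, -, hexp⟩ := exists_continuous_log (by fun_prop) hne (exp_log (hne 0))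
  exact ⟨L, hL, fun u v ↦ hexp (u, v)⟩

section Normed

variable {E : Type*} [NormedAddCommGroup E]

lemma isOpen_setOf_not_sameRay [NormedSpace ℝ E] : IsOpen {p : E × E | ¬ SameRay ℝ p.1 p.2} := by
  simp only [sameRay_iff_norm_smul_eq]
  exact (isClosed_eq (by fun_prop) (by fun_prop)).isOpen_compl

lemma eventually_not_sameRay_sub_swap [NormedSpace ℝ E] {X : Type*} [TopologicalSpace X]
    {g : X → E} (hg : Continuous g) {a b : X} (h : g a ≠ g b) :
    ∀ᶠ z : (X × X) × (X × X) in 𝓝 ((a, b), (b, a)),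
      ¬ SameRay ℝ (g z.1.2 - g z.1.1) (g z.2.2 - g z.2.1) := by
  have hab : ¬ SameRay ℝ (g b - g a) (g a - g b) := by
    rw [← neg_sub (g b)]
    exact mt eq_zero_of_sameRay_self_neg (sub_ne_zero.2 h.symm)
  exact (isOpen_setOf_not_sameRay.preimage (f := fun z : (X × X) × (X × X) ↦
    (g z.1.2 - g z.1.1, g z.2.2 - g z.2.1)) (by fun_prop)).mem_nhds hab

lemma isOpen_setOf_disjoint_range {X : Type*} [TopologicalSpace X] [CompactSpace X] :
    IsOpen {p : C(X, E) × C(X, E) | Disjoint (range p.1) (range p.2)} := by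
  have hpre : {p : C(X, E) × C(X, E) | Disjoint (range p.1) (range p.2)} =
      (fun p ↦ p.2.comp .snd - p.1.comp .fst : C(X, E) × C(X, E) → C(X × X, E)) ⁻¹'
        {g | MapsTo g univ {0}ᶜ} := by
    ext p
    simp only [mem_ofPred_eq, disjoint_range_iff, MapsTo, mem_preimage, mem_univ, true_imp_iff,
      Prod.forall, mem_compl_singleton_iff, ContinuousMap.sub_apply, ContinuousMap.comp_apply,
      ContinuousMap.fst_apply, ContinuousMap.snd_apply, sub_ne_zero]
    exact forall₂_congr fun _ _ ↦ ne_comm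
  rw [hpre]
  exact (ContinuousMap.isOpen_setOfPred_mapsTo isCompact_univ isOpen_compl_singleton).preimage
    (by fun_prop)

end Normed

namespace Arc

/-- For disjoint plane arcs that are close to a common injective arc, `γ.RightOf δ` says that `γ`
lies to the right of `δ`. It is read off from the total turning of the vector `δ v - γ u` as
`(u, v)` moves from `(0, 1)` to `(1, 0)`. -/
def RightOf (γ δ : Arc ℂ) : Prop :=
  ∃ L, IsDifferenceLog L γ δ ∧ (L (0, 1)).im < (L (1, 0)).im

/-- The condition under which `RightOf` is stable under perturbation and antisymmetric. -/
def Comparable (γ δ : Arc ℂ) : Prop :=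
  Disjoint (range γ) (range δ) ∧ ¬ SameRay ℝ (δ 1 - γ 0) (δ 0 - γ 1)

variable {γ δ : Arc ℂ}

lemma rightOf_iff {L : I × I → ℂ} (hL : IsDifferenceLog L γ δ) :
    γ.RightOf δ ↔ (L (0, 1)).im < (L (1, 0)).im := by
  refine ⟨fun ⟨L', hL', h⟩ ↦ ?_, fun h ↦ ⟨L, hL, h⟩⟩
  have hsub : L (0, 1) - L (1, 0) = L' (0, 1) - L' (1, 0) :=
    sub_eq_sub_of_exp_eq_mul_exp hL.1 hL'.1 (c := 1)
      (fun p ↦ by rw [one_mul, hL.2, hL'.2]) _ _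
  have him := congrArg im hsub
  simp only [sub_im] at him
  linarith

lemma Comparable.rightOf_swap (h : γ.Comparable δ) : δ.RightOf γ ↔ ¬ γ.RightOf δ := by
  obtain ⟨L, hL⟩ := exists_isDifferenceLog h.1
  have hswap : IsDifferenceLog (fun p ↦ L p.swap + Real.pi * Complex.I) δ γ :=
    ⟨(hL.1.comp continuous_swap).add continuous_const, fun u v ↦ by
      simp [exp_add_pi_mul_I, hL.2]⟩
  have hne : (L (0, 1)).im ≠ (L (1, 0)).im := fun him ↦
    h.2 <| by simpa only [hL.2] using sameRay_exp_of_im_eq him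
  rw [rightOf_iff hL, rightOf_iff hswap]
  simpa using hne.symm.le_iff_lt.symm

lemma rightOf_iff_of_homotopy {T : Type*} [TopologicalSpace T] [ContractibleSpace T]
    [LocallyPathConnectedSpace T] {Γ Δ : T → Arc ℂ} (hΓ : Continuous Γ) (hΔ : Continuous Δ)
    (h : ∀ t, (Γ t).Comparable (Δ t)) (s t : T) :
    (Γ s).RightOf (Δ s) ↔ (Γ t).RightOf (Δ t) := by
  have hne (p : T × I × I) : Δ p.1 p.2.2 - Γ p.1 p.2.1 ≠ 0 :=
    sub_ne_zero.2 (disjoint_range_iff.1 (h p.1).1 _ _).symm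
  obtain ⟨L, hL, -, hexp⟩ :=
    exists_continuous_log (by fun_prop) hne (exp_log (hne (s, 0, 0)))
  have hlog (t : T) : IsDifferenceLog (fun p ↦ L (t, p)) (Γ t) (Δ t) :=
    ⟨by fun_prop, fun u v ↦ hexp (t, u, v)⟩
  rw [rightOf_iff (hlog s), rightOf_iff (hlog t)]
  exact im_lt_im_iff_of_not_sameRay (f := fun t ↦ L (t, 0, 1)) (g := fun t ↦ L (t, 1, 0))
    (by fun_prop) (by fun_prop) (fun t ↦ by simpa only [hexp] using (h t).2) s t

lemma isOpen_setOf_comparable : IsOpen {p : Arc ℂ × Arc ℂ | p.1.Comparable p.2} :=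
  isOpen_setOf_disjoint_range.inter (isOpen_setOf_not_sameRay.preimage
    (f := fun p : Arc ℂ × Arc ℂ ↦ (p.2 1 - p.1 0, p.2 0 - p.1 1)) (by fun_prop))

lemma Comparable.eventually_rightOf_iff (h : γ.Comparable δ) :
    ∀ᶠ p : Arc ℂ × Arc ℂ in 𝓝 (γ, δ), p.1.RightOf p.2 ↔ γ.RightOf δ := by
  obtain ⟨r, hr, hball⟩ := Metric.isOpen_iff.1 isOpen_setOf_comparable (γ, δ) h
  let B := Metric.ball (γ, δ) r
  have : LocallyPathConnectedSpace B := (convex_ball _ r).locallyPathConnectedSpace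
  have : ContractibleSpace B := (convex_ball _ r).contractibleSpace ⟨_, Metric.mem_ball_self hr⟩
  filter_upwards [Metric.ball_mem_nhds _ hr] with p hp
  exact rightOf_iff_of_homotopy (T := B) (Γ := fun p ↦ p.1.1) (Δ := fun p ↦ p.1.2) (by fun_prop)
    (by fun_prop) (fun p ↦ hball p.2) ⟨p, hp⟩ ⟨_, Metric.mem_ball_self hr⟩

/-- The initial part of an arc up to parameter `s`, reparametrised over the unit interval. -/
def head {F : Type*} [TopologicalSpace F] (γ : Arc F) (s : I) : Arc F :=
  γ.comp ⟨fun u ↦ s * u, by fun_prop⟩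

section Head

variable {F : Type*} [TopologicalSpace F]

@[simp] lemma head_apply (γ : Arc F) (s u : I) : γ.head s u = γ (s * u) := rfl

@[simp] lemma head_one (γ : Arc F) : γ.head 1 = γ := by ext; simp

@[fun_prop] lemma continuous_head : Continuous fun p : Arc F × I ↦ p.1.head p.2 :=
  ContinuousMap.continuous_of_continuous_uncurry _ <| by
    simp only [Function.uncurry_def, head_apply]
    fun_prop

lemma range_head_subset (γ : Arc F) (s : I) : range (γ.head s) ⊆ range γ :=
  range_comp_subset_range (fun u ↦ s * u) γ

lemma eventually_not_sameRay_sub {α : Arc ℂ} (h : α 0 ≠ α 1) :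
    ∀ᶠ p : Arc ℂ × Arc ℂ in 𝓝 (α, α), ¬ SameRay ℝ (p.2 1 - p.1 0) (p.2 0 - p.1 1) := by
  have hlim : Tendsto (fun p : Arc ℂ × Arc ℂ ↦ ((p.1 0, p.2 1), (p.1 1, p.2 0))) (𝓝 (α, α))
      (𝓝 ((α 0, α 1), (α 1, α 0))) := Continuous.tendsto (by fun_prop) (α, α)
  exact hlim.eventually (eventually_not_sameRay_sub_swap continuous_id h)

lemma eventually_rightOf_head_iff {α : Arc ℂ} (hα : Function.Injective α) {a : I} (ha : 0 < a) :
    ∀ᶠ q : (Arc ℂ × Arc ℂ) × (I × I) in 𝓝 ((α, α), (a, a)),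
      Disjoint (range q.1.1) (range q.1.2) →
        ((q.1.1.head q.2.1).RightOf (q.1.2.head q.2.2) ↔ q.1.1.RightOf q.1.2) := by
  have hev : ∀ᶠ q : (Arc ℂ × Arc ℂ) × (I × I) in 𝓝 ((α, α), (a, a)), ∀ t ∈ (univ : Set I),
      ¬ SameRay ℝ (q.1.2 (t ⊔ q.2.2) - q.1.1 0) (q.1.2 0 - q.1.1 (t ⊔ q.2.1)) := by
    refine isCompact_univ.eventually_forall_of_forall_eventually fun t _ ↦ ?_
    have hcont : Continuous fun z : ((Arc ℂ × Arc ℂ) × (I × I)) × I ↦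
        (z.1.1.1.head (z.2 ⊔ z.1.2.1), z.1.1.2.head (z.2 ⊔ z.1.2.2)) := by fun_prop
    have hne : α.head (t ⊔ a) 0 ≠ α.head (t ⊔ a) 1 := by
      simpa using hα.ne (ha.trans_le le_sup_right).ne
    have := hcont.tendsto ((((α, α), (a, a)), t) : ((Arc ℂ × Arc ℂ) × (I × I)) × I)
    simpa using this.eventually (eventually_not_sameRay_sub hne)
  filter_upwards [hev] with q hq hdisj
  have hcomp (t : I) : (q.1.1.head (t ⊔ q.2.1)).Comparable (q.1.2.head (t ⊔ q.2.2)) :=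
    ⟨hdisj.mono (range_head_subset _ _) (range_head_subset _ _), by simpa using hq t trivial⟩
  simpa [sup_of_le_left le_one'] using rightOf_iff_of_homotopy (by fun_prop) (by fun_prop) hcomp 0 1

end Head
end Arc

section FirstTime

/-- The first parameter at which `f` reaches the level `b`; it is `1` if there is none. -/
noncomputable def firstTime (f : C(I, ℝ)) (b : ℝ) : I := sInf {u | b ≤ f u}

lemma firstTime_le {f : C(I, ℝ)} {b : ℝ} {u : I} (h : b ≤ f u) : firstTime f b ≤ u :=
  sInf_le h

lemma monotone_firstTime (f : C(I, ℝ)) : Monotone (firstTime f) :=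
  fun _ _ hb ↦ sInf_le_sInf fun _ hu ↦ hb.trans hu

lemma apply_firstTime {f : C(I, ℝ)} {b : ℝ} (h₀ : f 0 ≤ b) (h₁ : b ≤ f 1) :
    f (firstTime f b) = b := by
  have hmem : b ≤ f (firstTime f b) :=
    (isClosed_le continuous_const f.continuous).csInf_mem ⟨1, h₁⟩ (OrderBot.bddBelow _)
  obtain ⟨u, hu, rfl⟩ := intermediate_value_Icc (nonneg' (t := firstTime f b))
    f.continuous.continuousOn ⟨h₀, hmem⟩
  rw [← hu.2.antisymm (firstTime_le le_rfl)]

lemma apply_le_of_le_firstTime {f : C(I, ℝ)} {b : ℝ} (h₀ : f 0 ≤ b) (h₁ : b ≤ f 1) {u : I}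
    (hu : u ≤ firstTime f b) : f u ≤ b := by
  by_contra! h
  rw [hu.antisymm (firstTime_le h.le), apply_firstTime h₀ h₁] at h
  exact h.false

lemma exists_continuousAt_firstTime {f : C(I, ℝ)} (h : f 0 < f 1) :
    ∃ b ∈ Ioo (f 0) (f 1), ContinuousAt (firstTime f) b := by
  by_contra! hdisc
  exact Cardinal.Real.Ioo_countable_iff.not.2 h.not_ge
    ((monotone_firstTime f).countable_not_continuousAt.mono hdisc)

lemma continuousAt_firstTime_left {f : C(I, ℝ)} {b : ℝ} (h : ContinuousAt (firstTime f) b) :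
    ContinuousAt (fun g ↦ firstTime g b) f := by
  have hdist : Tendsto (fun g ↦ dist g f) (𝓝 f) (𝓝 0) :=
    tendsto_iff_dist_tendsto_zero.1 tendsto_id
  have hgf (g : C(I, ℝ)) (u : I) : |g u - f u| ≤ dist g f :=
    (Real.dist_eq _ _).symm.trans_le (ContinuousMap.dist_apply_le_dist u)
  refine tendsto_of_tendsto_of_tendsto_of_le_of_le
    (g := fun g ↦ firstTime f (b - dist g f)) (h := fun g ↦ firstTime f (b + dist g f))
    (h.tendsto.comp (by simpa using hdist.const_sub b))
    (h.tendsto.comp (by simpa using hdist.const_add b))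
    (fun g ↦ sInf_le_sInf fun u hu ↦ ?_) (fun g ↦ sInf_le_sInf fun u hu ↦ ?_)
  all_goals
    have := abs_le.1 (hgf g u)
    simp only [mem_ofPred_eq] at hu ⊢
    linarith

end FirstTime

namespace Arc

variable {γ δ : Arc ℂ}

lemma rightOf_of_im_lt (hdisj : Disjoint (range γ) (range δ)) (hγ : ∀ u, (γ u).re ≤ (γ 1).re)
    (hδ : ∀ v, (δ v).re ≤ (δ 1).re) (hre : (γ 1).re = (δ 1).re) (hγ₀ : (γ 0).re < (γ 1).re)
    (hδ₀ : (δ 0).re < (δ 1).re) (him : (γ 1).im < (δ 1).im) : γ.RightOf δ := by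
  have mem_slitPlane {z : ℂ} (hz : 0 ≤ z.re) (hz₀ : z ≠ 0) : z ∈ slitPlane :=
    hz.lt_or_eq.imp id fun h him ↦ hz₀ (Complex.ext h.symm him)
  have hne := disjoint_range_iff.1 hdisj
  obtain ⟨L, hL⟩ := exists_isDifferenceLog hdisj
  refine ⟨L, hL, ?_⟩
  have hleft : L (1, 1) - L (0, 1) = log (δ 1 - γ 1) - log (δ 1 - γ 0) :=
    sub_eq_sub_of_exp_eq_mul_exp (f := fun u ↦ L (u, 1)) (g := fun u ↦ log (δ 1 - γ u)) (c := 1)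
      (hL.1.comp (by fun_prop))
      (Continuous.clog (by fun_prop) fun u ↦
        mem_slitPlane (by simpa [hre] using hγ u) (sub_ne_zero.2 (hne u 1).symm))
      (fun u ↦ by rw [one_mul, hL.2, exp_log (sub_ne_zero.2 (hne u 1).symm)]) 1 0
  have hright : L (1, 0) - L (1, 1) = log (γ 1 - δ 0) - log (γ 1 - δ 1) :=
    sub_eq_sub_of_exp_eq_mul_exp (f := fun v ↦ L (1, v)) (g := fun v ↦ log (γ 1 - δ v)) (c := -1)
      (hL.1.comp (by fun_prop))
      (Continuous.clog (by fun_prop) fun v ↦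
        mem_slitPlane (by simpa [hre] using hδ v) (sub_ne_zero.2 (hne 1 v)))
      (fun v ↦ by rw [hL.2, exp_log (sub_ne_zero.2 (hne 1 v))]; ring) 0 1
  have hup : arg (δ 1 - γ 1) = Real.pi / 2 := arg_eq_pi_div_two_iff.2 (by simp [hre, him])
  have hdown : arg (γ 1 - δ 1) = -(Real.pi / 2) := by
    rw [arg_eq_neg_pi_div_two_iff]; simp [hre, him]
  have hγarg := abs_lt.1 (abs_arg_lt_pi_div_two_iff.2 (.inl (by simpa [← hre] using hγ₀) :
    0 < (δ 1 - γ 0).re ∨ δ 1 - γ 0 = 0))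
  have hδarg := abs_lt.1 (abs_arg_lt_pi_div_two_iff.2 (.inl (by simpa [hre] using hδ₀) :
    0 < (γ 1 - δ 0).re ∨ γ 1 - δ 0 = 0))
  have hleft' := congrArg im hleft
  have hright' := congrArg im hright
  simp only [sub_im, log_im] at hleft' hright'
  linarith

lemma rightOf_iff_im_lt (hdisj : Disjoint (range γ) (range δ)) (hγ : ∀ u, (γ u).re ≤ (γ 1).re)
    (hδ : ∀ v, (δ v).re ≤ (δ 1).re) (hre : (γ 1).re = (δ 1).re) (hγ₀ : (γ 0).re < (γ 1).re)
    (hδ₀ : (δ 0).re < (δ 1).re) : γ.RightOf δ ↔ (γ 1).im < (δ 1).im := by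
  refine ⟨fun h ↦ ?_, rightOf_of_im_lt hdisj hγ hδ hre hγ₀ hδ₀⟩
  have hcomp : γ.Comparable δ := ⟨hdisj, fun hray ↦ by
    obtain h | h | ⟨r, s, hr, hs, h⟩ := hray <;> have := congrArg re h <;> simp at this
    · linarith
    · linarith
    · nlinarith⟩
  by_contra! hle
  have hne : (δ 1).im ≠ (γ 1).im := fun him ↦
    disjoint_range_iff.1 hdisj 1 1 (Complex.ext hre him.symm)
  exact hcomp.rightOf_swap.1
    (rightOf_of_im_lt hdisj.symm hδ hγ hre.symm hδ₀ hγ₀ (hle.lt_of_ne hne)) h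

lemma rightOf_smul {c : ℂ} (hc : c ≠ 0) : (c • γ).RightOf (c • δ) ↔ γ.RightOf δ := by
  have himp {γ δ : Arc ℂ} {c : ℂ} (hc : c ≠ 0) : γ.RightOf δ → (c • γ).RightOf (c • δ) := by
    rintro ⟨L, hL, h⟩
    refine ⟨fun p ↦ L p + log c, ⟨hL.1.add_const _, fun u v ↦ ?_⟩, by simpa using h⟩
    rw [exp_add, exp_log hc, hL.2]
    simp only [ContinuousMap.smul_apply, smul_eq_mul]
    ring
  exact ⟨fun h ↦ by simpa [smul_smul, hc] using himp (inv_ne_zero hc) h, himp hc⟩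

/-- The first parameter at which the real part of the arc reaches `b`. -/
noncomputable def crossing (b : ℝ) (γ : Arc ℂ) : I := firstTime ((reCLM : C(ℂ, ℝ)).comp γ) b

lemma re_le_of_le_crossing {b : ℝ} (hb : b ∈ Ioo (γ 0).re (γ 1).re) {u : I}
    (hu : u ≤ γ.crossing b) : (γ u).re ≤ b :=
  apply_le_of_le_firstTime (f := (reCLM : C(ℂ, ℝ)).comp γ) hb.1.le hb.2.le hu

lemma re_crossing {b : ℝ} (hb : b ∈ Ioo (γ 0).re (γ 1).re) : (γ (γ.crossing b)).re = b :=
  apply_firstTime (f := (reCLM : C(ℂ, ℝ)).comp γ) hb.1.le hb.2.le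

lemma crossing_pos {b : ℝ} (hb : b ∈ Ioo (γ 0).re (γ 1).re) : 0 < γ.crossing b :=
  unitInterval.pos_iff_ne_zero.2 fun h ↦ hb.1.ne (by rw [← re_crossing hb, h])

lemma exists_continuousAt_crossing {α : Arc ℂ} (h : (α 0).re < (α 1).re) :
    ∃ b ∈ Ioo (α 0).re (α 1).re, ContinuousAt (crossing b) α := by
  obtain ⟨b, hb, hcont⟩ := exists_continuousAt_firstTime (f := (reCLM : C(ℂ, ℝ)).comp α) h
  exact ⟨b, hb, (continuousAt_firstTime_left hcont).comp
    (ContinuousMap.continuous_postcomp _).continuousAt⟩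

lemma rightOf_head_crossing_iff (h : Disjoint (range γ) (range δ)) {b : ℝ}
    (hγ : b ∈ Ioo (γ 0).re (γ 1).re) (hδ : b ∈ Ioo (δ 0).re (δ 1).re) :
    (γ.head (γ.crossing b)).RightOf (δ.head (δ.crossing b)) ↔
      (γ (γ.crossing b)).im < (δ (δ.crossing b)).im := by
  simpa using rightOf_iff_im_lt (h.mono (range_head_subset γ _) (range_head_subset δ _))
    (fun u ↦ by simpa [re_crossing hγ] using re_le_of_le_crossing hγ mul_le_left)
    (fun u ↦ by simpa [re_crossing hδ] using re_le_of_le_crossing hδ mul_le_left)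
    (by simp [re_crossing hγ, re_crossing hδ]) (by simpa [re_crossing hγ] using hγ.1)
    (by simpa [re_crossing hδ] using hδ.1)

lemma exists_height_of_re_lt {α : Arc ℂ} (hα : Function.Injective α) (h : (α 0).re < (α 1).re) :
    ∃ Y : Arc ℂ → ℝ, ∀ᶠ p : Arc ℂ × Arc ℂ in 𝓝 (α, α),
      Disjoint (range p.1) (range p.2) → (p.1.RightOf p.2 ↔ Y p.1 < Y p.2) := by
  obtain ⟨b, hb, hcont⟩ := exists_continuousAt_crossing h
  have hcross : ∀ᶠ γ in 𝓝 α, b ∈ Ioo (γ 0).re (γ 1).re :=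
    ((continuous_re.comp (continuous_eval_const 0)).continuousAt.eventually_lt_const hb.1).and
      ((continuous_re.comp (continuous_eval_const 1)).continuousAt.eventually_const_lt hb.2)
  have hlim : Tendsto (fun p : Arc ℂ × Arc ℂ ↦ (p, p.1.crossing b, p.2.crossing b)) (𝓝 (α, α))
      (𝓝 ((α, α), α.crossing b, α.crossing b)) :=
    tendsto_id.prodMk_nhds ((hcont.tendsto.comp (continuous_fst.tendsto (α, α))).prodMk_nhds
      (hcont.tendsto.comp (continuous_snd.tendsto (α, α))))
  refine ⟨fun γ ↦ (γ (γ.crossing b)).im, ?_⟩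
  filter_upwards [hlim.eventually (eventually_rightOf_head_iff hα (crossing_pos hb)),
    hcross.prod_nhds hcross] with p hp ⟨hp₁, hp₂⟩ hdisj
  rw [← hp hdisj, rightOf_head_crossing_iff hdisj hp₁ hp₂]

lemma exists_height {α : Arc ℂ} (hα : Function.Injective α) :
    ∃ Y : Arc ℂ → ℝ, ∀ᶠ p : Arc ℂ × Arc ℂ in 𝓝 (α, α),
      Disjoint (range p.1) (range p.2) → (p.1.RightOf p.2 ↔ Y p.1 < Y p.2) := by
  have hne : α 1 - α 0 ≠ 0 := sub_ne_zero.2 (hα.ne one_ne_zero)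
  set c := (α 1 - α 0)⁻¹
  have hc : c ≠ 0 := inv_ne_zero hne
  have hre : (c * α 0).re < (c * α 1).re := by
    have : (c * α 1 - c * α 0).re = 1 := by rw [← mul_sub, inv_mul_cancel₀ hne, one_re]
    rw [sub_re] at this
    linarith
  obtain ⟨Y, hY⟩ := exists_height_of_re_lt (α := c • α) ((mul_right_injective₀ hc).comp hα) hre
  have hlim : Tendsto (fun p : Arc ℂ × Arc ℂ ↦ (c • p.1, c • p.2)) (𝓝 (α, α))
      (𝓝 (c • α, c • α)) :=
    Continuous.tendsto (by fun_prop) (α, α)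
  refine ⟨fun γ ↦ Y (c • γ), ?_⟩
  filter_upwards [hlim.eventually hY] with p hp hdisj
  rw [← rightOf_smul hc, hp]
  exact disjoint_range_iff.2 fun u v ↦
    (mul_right_injective₀ hc).ne (disjoint_range_iff.1 hdisj u v)

end Arc

section ChartChange

/-- `L` is a continuous logarithm of the differences `k (p + exp l) - k p` of a plane map `k`,
viewed as a function of `p` and of a logarithm `l` of the displacement. Interchanging the two end
points amounts to adding an odd multiple of `π i` to `l`; the odd integer `d` is the factor by which
`L` multiplies it. It is positive when `k` preserves orientation. -/
structure IsDifferenceLift (k : C(ℂ, ℂ)) (L : ℂ × ℂ → ℂ) (d : ℤ) : Prop where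
  odd : Odd d
  continuous : Continuous L
  exp_eq : ∀ p l, exp (L (p, l)) = k (p + exp l) - k p
  apply_add : ∀ p l (m : ℤ), L (p + exp l, l + (2 * m + 1) * (Real.pi * Complex.I)) =
    L (p, l) + d * ((2 * m + 1) * (Real.pi * Complex.I))

variable {k : C(ℂ, ℂ)}

lemma exists_eq_add_odd_mul_pi_mul_I {z z' : ℂ} (h : exp z' = -exp z) :
    ∃ m : ℤ, z' = z + (2 * m + 1) * (Real.pi * Complex.I) := by
  rw [← exp_add_pi_mul_I] at h
  obtain ⟨m, hm⟩ := exp_eq_exp_iff_exists_int.1 h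
  exact ⟨m, by rw [hm]; ring⟩

lemma exists_isDifferenceLift (hk : Function.Injective k) :
    ∃ L d, IsDifferenceLift k L d := by
  have hne (q : ℂ × ℂ) : k (q.1 + exp q.2) - k q.1 ≠ 0 :=
    sub_ne_zero.2 (hk.ne (by simp))
  obtain ⟨L, hL, -, hexp⟩ := exists_continuous_log (by fun_prop) hne (exp_log (hne 0))
  let flip (q : ℂ × ℂ) : ℂ × ℂ := (q.1 + exp q.2, q.2 + Real.pi * Complex.I)
  have hflip (q : ℂ × ℂ) : exp (L (flip q)) = -exp (L q) := by
    simp [hexp, flip, exp_add_pi_mul_I]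
  obtain ⟨n, hn⟩ := exists_eq_add_odd_mul_pi_mul_I (hflip 0)
  let M (q : ℂ × ℂ) : ℂ := L q - (2 * n + 1) * q.2
  have hM (q : ℂ × ℂ) : M (flip q) = M q := by
    have := sub_eq_sub_of_exp_eq_mul_exp (c := -1) (hL.comp (by fun_prop : Continuous flip)) hL
      (fun q ↦ by simpa using hflip q) q 0
    simp only [Function.comp_apply] at this
    simp only [M, flip] at hn this ⊢
    linear_combination this + hn
  have hperiodic (p : ℂ) : Function.Periodic (fun l ↦ M (p, l)) (2 * (Real.pi * Complex.I)) := by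
    intro l
    change M (p, l + 2 * (Real.pi * Complex.I)) = M (p, l)
    rw [← hM (p, l), ← hM (flip (p, l))]
    simp only [flip, exp_add_pi_mul_I]
    ring_nf
  refine ⟨L, 2 * n + 1, ⟨n, rfl⟩, hL, fun p l ↦ hexp (p, l), fun p l m ↦ ?_⟩
  have h := (hperiodic (p + exp l)).int_mul m (l + Real.pi * Complex.I)
  have h' := hM (p, l)
  simp only [M, flip] at h h'
  have hl : l + (2 * m + 1) * (Real.pi * Complex.I) =
      l + Real.pi * Complex.I + m * (2 * (Real.pi * Complex.I)) := by ring
  rw [hl]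
  push_cast
  linear_combination h + h'

lemma IsDifferenceLift.im_lt_im_iff_of_swap {L : ℂ × ℂ → ℂ} {d : ℤ} (hL : IsDifferenceLift k L d)
    {a b l₁ l₂ : ℂ} (h₁ : exp l₁ = b - a) (h₂ : exp l₂ = a - b) :
    (L (a, l₁)).im < (L (b, l₂)).im ↔ (l₁.im < l₂.im ↔ 0 < d) := by
  obtain ⟨m, hm⟩ := exists_eq_add_odd_mul_pi_mul_I (z := l₁) (z' := l₂) (by rw [h₁, h₂, neg_sub])
  have hLm := hL.apply_add a l₁ m
  rw [← hm, h₁, add_sub_cancel] at hLm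
  have hsign (x : ℝ) (c : ℤ) : x < x + c * Real.pi ↔ 0 < c := by
    rw [lt_add_iff_pos_right, mul_pos_iff_of_pos_right Real.pi_pos, Int.cast_pos]
  have him (z : ℂ) (c : ℤ) : (z + c * (Real.pi * Complex.I)).im = z.im + c * Real.pi := by simp
  have hl : l₁.im < l₂.im ↔ 0 < 2 * m + 1 := by
    rw [hm, ← hsign, ← him, Int.cast_add, Int.cast_mul, Int.cast_ofNat, Int.cast_one]
  have hL' : (L (a, l₁)).im < (L (b, l₂)).im ↔ 0 < d * (2 * m + 1) := by
    rw [hLm, ← hsign, ← him, Int.cast_mul, Int.cast_add, Int.cast_mul, Int.cast_ofNat,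
      Int.cast_one, mul_assoc]
  obtain ⟨n, rfl⟩ := hL.odd
  rw [hl, hL', mul_pos_iff]
  omega

lemma IsDifferenceLift.eventually_im_lt_im_iff {L : ℂ × ℂ → ℂ} {d : ℤ}
    (hk : Function.Injective k) (hL : IsDifferenceLift k L d)
    {a b : ℂ} (hab : a ≠ b) :
    ∀ᶠ z : (ℂ × ℂ) × (ℂ × ℂ) in 𝓝 ((a, b), (b, a)), ∀ l₁ l₂, exp l₁ = z.1.2 - z.1.1 →
      exp l₂ = z.2.2 - z.2.1 →
        ((L (z.1.1, l₁)).im < (L (z.2.1, l₂)).im ↔ (l₁.im < l₂.im ↔ 0 < d)) := by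
  obtain ⟨r, hr, hball⟩ := Metric.eventually_nhds_iff_ball.1
    ((eventually_not_sameRay_sub_swap continuous_id hab).and
      (eventually_not_sameRay_sub_swap k.continuous (hk.ne hab)))
  let N := Metric.ball ((a, b), (b, a)) r
  have : LocallyPathConnectedSpace N := (convex_ball _ r).locallyPathConnectedSpace
  have : ContractibleSpace N := (convex_ball _ r).contractibleSpace ⟨_, Metric.mem_ball_self hr⟩
  have hne (z : N) : z.1.1.2 - z.1.1.1 ≠ 0 ∧ z.1.2.2 - z.1.2.1 ≠ 0 := by
    have := (hball z z.2).1
    constructor <;> rintro h <;> simp [h] at this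
  filter_upwards [Metric.ball_mem_nhds _ hr] with z hz l₁ l₂ h₁ h₂
  obtain ⟨Λ₁, hΛ₁, rfl, hexp₁⟩ := exists_continuous_log (X := N) (x₀ := ⟨z, hz⟩)
    (g := fun z ↦ z.1.1.2 - z.1.1.1) (by fun_prop) (fun z ↦ (hne z).1) h₁
  obtain ⟨Λ₂, hΛ₂, rfl, hexp₂⟩ := exists_continuous_log (X := N) (x₀ := ⟨z, hz⟩)
    (g := fun z ↦ z.1.2.2 - z.1.2.1) (by fun_prop) (fun z ↦ (hne z).2) h₂
  let c : N := ⟨((a, b), (b, a)), Metric.mem_ball_self hr⟩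
  have hLcont := hL.continuous
  rw [im_lt_im_iff_of_not_sameRay hΛ₁ hΛ₂ (fun z ↦ by simpa [hexp₁, hexp₂] using (hball z z.2).1)
      ⟨z, hz⟩ c,
    im_lt_im_iff_of_not_sameRay (f := fun z : N ↦ L (z.1.1.1, Λ₁ z))
      (g := fun z : N ↦ L (z.1.2.1, Λ₂ z)) (by fun_prop) (by fun_prop)
      (fun z ↦ by simpa [hL.exp_eq, hexp₁, hexp₂] using (hball z z.2).2) ⟨z, hz⟩ c]
  exact hL.im_lt_im_iff_of_swap (hexp₁ c) (hexp₂ c)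

lemma Arc.exists_eventually_rightOf_comp_iff (hk : Function.Injective k) {α : Arc ℂ}
    (hα : α 0 ≠ α 1) :
    ∃ ε : Prop, ∀ᶠ p : Arc ℂ × Arc ℂ in 𝓝 (α, α), Disjoint (range p.1) (range p.2) →
      (Arc.RightOf (k.comp p.1) (k.comp p.2) ↔ (p.1.RightOf p.2 ↔ ε)) := by
  obtain ⟨L, d, hL⟩ := exists_isDifferenceLift hk
  refine ⟨0 < d, ?_⟩
  have hlim : Tendsto (fun p : Arc ℂ × Arc ℂ ↦ ((p.1 0, p.2 1), (p.1 1, p.2 0))) (𝓝 (α, α))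
      (𝓝 ((α 0, α 1), (α 1, α 0))) := Continuous.tendsto (by fun_prop) (α, α)
  filter_upwards [hlim.eventually (hL.eventually_im_lt_im_iff hk hα)] with p hp hdisj
  obtain ⟨l, hl⟩ := exists_isDifferenceLog hdisj
  have hkl : IsDifferenceLog (fun q ↦ L (p.1 q.1, l q)) (k.comp p.1) (k.comp p.2) :=
    ⟨hL.continuous.comp (.prodMk (by fun_prop) hl.1), fun u v ↦ by simp [hL.exp_eq, hl.2]⟩
  rw [rightOf_iff hl, rightOf_iff hkl]
  exact hp _ _ (hl.2 0 1) (hl.2 1 0)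

end ChartChange

section Charts

variable {F : Type*} [TopologicalSpace F]

/-- The local condition on a surface: every point has an open neighbourhood homeomorphic to an open
subset of the plane. -/
def IsLocallyPlanar (F : Type*) [TopologicalSpace F] : Prop :=
  ∀ x : F, ∃ (U : Set F) (V : Set (EuclideanSpace ℝ (Fin 2))),
    IsOpen U ∧ x ∈ U ∧ IsOpen V ∧ Nonempty (↥U ≃ₜ ↥V)

lemma exists_isOpenEmbedding_complex_euclideanSpace {p : EuclideanSpace ℝ (Fin 2)}
    {O : Set (EuclideanSpace ℝ (Fin 2))} (hO : O ∈ 𝓝 p) :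
    ∃ g : ℂ → EuclideanSpace ℝ (Fin 2), IsOpenEmbedding g ∧ g 0 = p ∧ range g ⊆ O := by
  obtain ⟨r, hr, hball⟩ := Metric.mem_nhds_iff.1 hO
  let B := OpenPartialHomeomorph.univBall p r
  let J := orthonormalBasisOneI.repr
  have hsource : B.source = univ := OpenPartialHomeomorph.univBall_source p r
  refine ⟨B ∘ J, (B.isOpenEmbedding hsource).comp J.toHomeomorph.isOpenEmbedding, by simp [B], ?_⟩
  rintro _ ⟨z, rfl⟩
  apply hball
  rw [← OpenPartialHomeomorph.univBall_target p hr]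
  exact B.map_source (hsource ▸ mem_univ (J z))

lemma IsLocallyPlanar.exists_chart (hF : IsLocallyPlanar F) {x : F} {W : Set F} (hW : W ∈ 𝓝 x) :
    ∃ ψ : C(ℂ, F), IsOpenEmbedding ψ ∧ x ∈ range ψ ∧ range ψ ⊆ W := by
  obtain ⟨U, V, hU, hxU, hV, ⟨h⟩⟩ := hF x
  let e : V → F := (↑) ∘ h.symm
  have he : IsOpenEmbedding e := hU.isOpenEmbedding_subtypeVal.comp h.symm.isOpenEmbedding
  let v := h ⟨x, hxU⟩
  have hv : e v = x := by simp [e, v]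
  have hO : (↑) '' (e ⁻¹' W) ∈ 𝓝 (v : EuclideanSpace ℝ (Fin 2)) :=
    hV.isOpenEmbedding_subtypeVal.image_mem_nhds.2 (he.continuous.continuousAt (hv ▸ hW))
  obtain ⟨g, hg, hg₀, hgO⟩ := exists_isOpenEmbedding_complex_euclideanSpace hO
  choose g' hg'W hg' using range_subset_iff.1 hgO
  have hge : IsOpenEmbedding g' :=
    .of_comp _ hV.isOpenEmbedding_subtypeVal (by convert hg using 1; exact funext hg')
  refine ⟨⟨e ∘ g', (he.comp hge).continuous⟩, he.comp hge, ⟨0, ?_⟩, range_subset_iff.2 hg'W⟩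
  have : g' 0 = v := Subtype.ext ((hg' 0).trans hg₀)
  simp [this, hv]

lemma exists_comp_eq_of_range_subset {X Y Z : Type*} [TopologicalSpace X] [TopologicalSpace Y]
    [TopologicalSpace Z] {ψ : C(Y, Z)} (hψ : IsEmbedding ψ) {g : C(X, Z)}
    (h : range g ⊆ range ψ) : ∃ k : C(X, Y), ψ.comp k = g := by
  choose k hk using range_subset_iff.1 h
  exact ⟨⟨k, hψ.continuous_iff.2 ((funext hk : ψ ∘ k = g) ▸ g.continuous)⟩, ContinuousMap.ext hk⟩

namespace Arc

lemma range_comp_of_isOpenEmbedding {ψ : C(ℂ, F)} (hψ : IsOpenEmbedding ψ) :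
    range (ψ.comp : Arc ℂ → Arc F) = {γ : Arc F | range γ ⊆ range ψ} :=
  Subset.antisymm (range_subset_iff.2 fun γ ↦ range_comp_subset_range γ ψ) fun _ ↦
    exists_comp_eq_of_range_subset hψ.isEmbedding

lemma isOpenEmbedding_comp {ψ : C(ℂ, F)} (hψ : IsOpenEmbedding ψ) :
    IsOpenEmbedding (ψ.comp : Arc ℂ → Arc F) where
  toIsEmbedding := ContinuousMap.isEmbedding_postcomp ψ hψ.isEmbedding
  isOpen_range := by
    rw [range_comp_of_isOpenEmbedding hψ]
    exact ContinuousMap.isOpen_setOfPred_range_subset hψ.isOpen_range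

lemma exists_pos_range_head_subset {γ : Arc F} {U : Set F} (hU : U ∈ 𝓝 (γ 0)) :
    ∃ s : I, 0 < s ∧ range (γ.head s) ⊆ U := by
  have hcont : Continuous γ.head := by fun_prop
  have h₀ : range (γ.head 0) ⊆ interior U :=
    range_subset_iff.2 fun u ↦ by simpa using mem_interior_iff_mem_nhds.2 hU
  have hev := hcont.continuousAt.eventually
    (ContinuousMap.eventually_range_subset isOpen_interior h₀)
  have : (𝓝[>] (0 : I)).NeBot := nhdsGT_neBot_of_exists_gt ⟨1, zero_lt_one⟩
  have hpos : ∀ᶠ s in 𝓝[>] (0 : I), 0 < s := self_mem_nhdsWithin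
  obtain ⟨s, hs, hs₀⟩ := ((hev.filter_mono nhdsWithin_le_nhds).and hpos).exists
  exact ⟨s, hs₀, hs.trans interior_subset⟩

lemma head_head (γ : Arc F) (s t : I) : (γ.head s).head t = γ.head (s * t) := by
  ext
  simp [mul_assoc]

lemma injective_head {γ : Arc F} (hγ : Function.Injective γ) {s : I} (hs : 0 < s) :
    Function.Injective (γ.head s) := fun u v h ↦ by
  simpa using mul_left_cancel₀ hs.ne' (hγ h)

end Arc

/-- A chart for arcs: the initial part up to parameter `scale` of an arc is read in the plane
through `toFun`. -/
structure ArcChart (F : Type*) [TopologicalSpace F] where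
  toFun : C(ℂ, F)
  isOpenEmbedding : IsOpenEmbedding toFun
  scale : I
  scale_pos : 0 < scale

namespace ArcChart

/-- The arcs whose initial part lies in the chart. -/
def source (e : ArcChart F) : Set (Arc F) := {γ | range (γ.head e.scale) ⊆ range e.toFun}

/-- The initial part of an arc, as a plane arc. It is meaningful on `source`. -/
noncomputable def read (e : ArcChart F) (γ : Arc F) : Arc ℂ :=
  ((Arc.isOpenEmbedding_comp e.isOpenEmbedding).toOpenPartialHomeomorph _).symm (γ.head e.scale)

variable {e : ArcChart F} {γ δ : Arc F}

lemma isOpen_source (e : ArcChart F) : IsOpen e.source :=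
  (ContinuousMap.isOpen_setOfPred_range_subset e.isOpenEmbedding.isOpen_range).preimage
    (by fun_prop : Continuous fun γ : Arc F ↦ γ.head e.scale)

lemma head_mem_range_comp (h : γ ∈ e.source) : γ.head e.scale ∈ range e.toFun.comp := by
  rwa [Arc.range_comp_of_isOpenEmbedding e.isOpenEmbedding]

lemma comp_read (h : γ ∈ e.source) : e.toFun.comp (e.read γ) = γ.head e.scale :=
  IsOpenEmbedding.toOpenPartialHomeomorph_right_inv _ (Arc.isOpenEmbedding_comp e.isOpenEmbedding)
    (head_mem_range_comp h)

lemma apply_read (h : γ ∈ e.source) (u : I) : e.toFun (e.read γ u) = γ (e.scale * u) :=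
  DFunLike.congr_fun (comp_read h) u

lemma continuousAt_read (h : γ ∈ e.source) : ContinuousAt e.read γ := by
  refine ContinuousAt.comp (f := fun γ : Arc F ↦ γ.head e.scale) ?_ (by fun_prop)
  refine OpenPartialHomeomorph.continuousAt _ ?_
  simpa using head_mem_range_comp h

lemma injective_read (h : γ ∈ e.source) (hγ : Function.Injective γ) :
    Function.Injective (e.read γ) := fun u v huv ↦ by
  apply Arc.injective_head hγ e.scale_pos
  rw [← comp_read h, ContinuousMap.comp_apply, huv, ContinuousMap.comp_apply]

lemma disjoint_range_read (hγ : γ ∈ e.source) (hδ : δ ∈ e.source)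
    (h : Disjoint (range γ) (range δ)) : Disjoint (range (e.read γ)) (range (e.read δ)) :=
  disjoint_range_iff.2 fun u v huv ↦ disjoint_range_iff.1 h (e.scale * u) (e.scale * v) <| by
    rw [← apply_read hγ, ← apply_read hδ, huv]

lemma exists_mem_source (hF : IsLocallyPlanar F) (γ : Arc F) : ∃ e : ArcChart F, γ ∈ e.source := by
  obtain ⟨ψ, hψ, hγ, -⟩ := hF.exists_chart (x := γ 0) univ_mem
  obtain ⟨s, hs, hsub⟩ := Arc.exists_pos_range_head_subset (hψ.isOpen_range.mem_nhds hγ)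
  exact ⟨⟨ψ, hψ, s, hs⟩, hsub⟩

/-- `e'` reads a smaller initial part of arcs than `e`, in a smaller chart domain. -/
def Refines (e' e : ArcChart F) : Prop :=
  range e'.toFun ⊆ range e.toFun ∧ ∃ t, 0 < t ∧ e'.scale = e.scale * t

lemma exists_refines (hF : IsLocallyPlanar F) {e₁ e₂ : ArcChart F} (h₁ : γ ∈ e₁.source)
    (h₂ : γ ∈ e₂.source) : ∃ e : ArcChart F, γ ∈ e.source ∧ e.Refines e₁ ∧ e.Refines e₂ := by
  have h₀ {e : ArcChart F} (h : γ ∈ e.source) : range e.toFun ∈ 𝓝 (γ 0) :=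
    e.isOpenEmbedding.isOpen_range.mem_nhds (h ⟨0, by simp⟩)
  obtain ⟨ψ, hψ, hγ, hsub⟩ := hF.exists_chart (inter_mem (h₀ h₁) (h₀ h₂))
  obtain ⟨s, hs, hs'⟩ := Arc.exists_pos_range_head_subset (hψ.isOpen_range.mem_nhds hγ)
  refine ⟨⟨ψ, hψ, s * (e₁.scale * e₂.scale), mul_pos hs (mul_pos e₁.scale_pos e₂.scale_pos)⟩, ?_,
    ⟨hsub.trans inter_subset_left, s * e₂.scale, mul_pos hs e₂.scale_pos, mul_left_comm _ _ _⟩,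
    ⟨hsub.trans inter_subset_right, s * e₁.scale, mul_pos hs e₁.scale_pos, ?_⟩⟩
  · have := ((γ.head s).range_head_subset (e₁.scale * e₂.scale)).trans hs'
    rwa [Arc.head_head] at this
  · change s * (e₁.scale * e₂.scale) = e₂.scale * (s * e₁.scale)
    rw [mul_comm e₁.scale, mul_left_comm]

lemma Refines.exists_eventually_rightOf_iff {e' e : ArcChart F} (href : e'.Refines e) {η : Arc F}
    (hη : Function.Injective η) (he : η ∈ e.source) (he' : η ∈ e'.source) :
    ∃ ε : Prop, ∀ᶠ p : Arc F × Arc F in 𝓝 (η, η), Disjoint (range p.1) (range p.2) →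
      ((e.read p.1).RightOf (e.read p.2) ↔ ((e'.read p.1).RightOf (e'.read p.2) ↔ ε)) := by
  obtain ⟨hsub, t, ht, hscale⟩ := href
  obtain ⟨k, hk⟩ := exists_comp_eq_of_range_subset e.isOpenEmbedding.isEmbedding hsub
  have hkinj : Function.Injective k := by
    have := e'.isOpenEmbedding.injective
    rw [← hk] at this
    exact .of_comp (f := e.toFun) this
  have hcomp {γ : Arc F} (h : γ ∈ e.source) (h' : γ ∈ e'.source) :
      (e.read γ).head t = k.comp (e'.read γ) := by
    apply (Arc.isOpenEmbedding_comp e.isOpenEmbedding).injective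
    rw [← ContinuousMap.comp_assoc, hk, comp_read h', hscale, ← Arc.head_head, ← comp_read h]
    rfl
  have hread {e : ArcChart F} (h : η ∈ e.source) : ContinuousAt (Prod.map e.read e.read) (η, η) :=
    (continuousAt_read h).prodMap' (continuousAt_read h)
  obtain ⟨ε, hε⟩ := Arc.exists_eventually_rightOf_comp_iff hkinj (α := e'.read η)
    ((injective_read he' hη).ne zero_ne_one)
  refine ⟨ε, ?_⟩
  have hhead := ((hread he).tendsto.prodMk_nhds (tendsto_const_nhds (x := (t, t)))).eventually
    (Arc.eventually_rightOf_head_iff (injective_read he hη) ht)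
  have hs := (e.isOpen_source.mem_nhds he)
  have hs' := (e'.isOpen_source.mem_nhds he')
  filter_upwards [hhead, (hread he').tendsto.eventually hε, prod_mem_nhds hs hs,
    prod_mem_nhds hs' hs'] with p hp hp' h h' hdisj
  simp only [Prod.map_fst, Prod.map_snd] at hp hp'
  rw [← hp (disjoint_range_read h.1 h.2 hdisj), hcomp h.1 h'.1, hcomp h.2 h'.2,
    hp' (disjoint_range_read h'.1 h'.2 hdisj)]

lemma exists_eventually_rightOf_iff (hF : IsLocallyPlanar F) {e₁ e₂ : ArcChart F} {η : Arc F}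
    (hη : Function.Injective η) (h₁ : η ∈ e₁.source) (h₂ : η ∈ e₂.source) :
    ∃ ε : Prop, ∀ᶠ p : Arc F × Arc F in 𝓝 (η, η), Disjoint (range p.1) (range p.2) →
      ((e₁.read p.1).RightOf (e₁.read p.2) ↔ ((e₂.read p.1).RightOf (e₂.read p.2) ↔ ε)) := by
  obtain ⟨e, he, href₁, href₂⟩ := exists_refines hF h₁ h₂
  obtain ⟨ε₁, hε₁⟩ := href₁.exists_eventually_rightOf_iff hη h₁ he
  obtain ⟨ε₂, hε₂⟩ := href₂.exists_eventually_rightOf_iff hη h₂ he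
  refine ⟨ε₁ ↔ ε₂, ?_⟩
  filter_upwards [hε₁, hε₂] with p hp₁ hp₂ hdisj
  rw [hp₁ hdisj, hp₂ hdisj]
  tauto

end ArcChart

/-- A set `domain` of arcs in a surface, any two disjoint members of which can be told apart by
which of them lies to the right of the other in the chart; `height` realises this order in `ℝ`. -/
structure LocalOrder (F : Type*) [TopologicalSpace F] extends ArcChart F where
  domain : Set (Arc F)
  domain_subset_source : domain ⊆ toArcChart.source
  height : Arc F → ℝ
  comparable : ∀ γ ∈ domain, ∀ δ ∈ domain, Disjoint (range γ) (range δ) →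
    (toArcChart.read γ).Comparable (toArcChart.read δ)
  rightOf_iff : ∀ γ ∈ domain, ∀ δ ∈ domain, Disjoint (range γ) (range δ) →
    ((toArcChart.read γ).RightOf (toArcChart.read δ) ↔ height γ < height δ)

namespace LocalOrder

lemma exists_domain_mem_nhds (hF : IsLocallyPlanar F) {α : Arc F} (hα : Function.Injective α) :
    ∃ o : LocalOrder F, o.domain ∈ 𝓝 α := by
  obtain ⟨e, he⟩ := ArcChart.exists_mem_source hF α
  have hread := e.injective_read he hα
  obtain ⟨Y, hY⟩ := Arc.exists_height hread
  have hev := hY.and (Arc.eventually_not_sameRay_sub (hread.ne zero_ne_one))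
  rw [nhds_prod_eq] at hev
  obtain ⟨N, hN, h⟩ := eventually_prod_self_iff'.1 hev
  refine ⟨⟨e, e.source ∩ e.read ⁻¹' N, inter_subset_left, fun γ ↦ Y (e.read γ),
    fun γ hγ δ hδ hdisj ↦ ?_, fun γ hγ δ hδ hdisj ↦ ?_⟩,
    inter_mem (e.isOpen_source.mem_nhds he) (ArcChart.continuousAt_read he hN)⟩
  all_goals have hdisj' := ArcChart.disjoint_range_read hγ.1 hδ.1 hdisj
  · exact ⟨hdisj', (h _ hγ.2 _ hδ.2).2⟩
  · exact (h _ hγ.2 _ hδ.2).1 hdisj'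

variable {o o' : LocalOrder F} {γ δ η : Arc F}

lemma height_ne (hγ : γ ∈ o.domain) (hδ : δ ∈ o.domain) (h : Disjoint (range γ) (range δ)) :
    o.height γ ≠ o.height δ := by
  have hswap := (o.comparable γ hγ δ hδ h).rightOf_swap
  rw [o.rightOf_iff γ hγ δ hδ h, o.rightOf_iff δ hδ γ hγ h.symm] at hswap
  grind

lemma eventually_height_lt_iff (hγ : o.domain ∈ 𝓝 γ) (hδ : o.domain ∈ 𝓝 δ)
    (h : Disjoint (range γ) (range δ)) :
    ∀ᶠ p : Arc F × Arc F in 𝓝 (γ, δ), Disjoint (range p.1) (range p.2) →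
      (o.height p.1 < o.height p.2 ↔ o.height γ < o.height δ) := by
  have hγ' := mem_of_mem_nhds hγ
  have hδ' := mem_of_mem_nhds hδ
  have hread : ContinuousAt (Prod.map o.read o.read) (γ, δ) :=
    (ArcChart.continuousAt_read (o.domain_subset_source hγ')).prodMap'
      (ArcChart.continuousAt_read (o.domain_subset_source hδ'))
  filter_upwards [prod_mem_nhds hγ hδ,
    hread.eventually (o.comparable γ hγ' δ hδ' h).eventually_rightOf_iff] with p hp hp' hdisj
  rw [← o.rightOf_iff _ hp.1 _ hp.2 hdisj, ← o.rightOf_iff γ hγ' δ hδ' h]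
  exact hp'

/-- The height orders the pairs `γ, δ` and `γ', δ'` in the same way. Unlike the order itself, this
does not depend on the orientation of the chart. -/
def Concordant (o : LocalOrder F) (γ δ γ' δ' : Arc F) : Prop :=
  o.height γ < o.height δ ↔ o.height γ' < o.height δ'

lemma eventually_concordant_iff (hF : IsLocallyPlanar F) (hη : Function.Injective η)
    (h : o.domain ∈ 𝓝 η) (h' : o'.domain ∈ 𝓝 η) :
    ∀ᶠ p : (Arc F × Arc F) × (Arc F × Arc F) in 𝓝 ((η, η), (η, η)),
      Disjoint (range p.1.1) (range p.1.2) → Disjoint (range p.2.1) (range p.2.2) →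
        (o.Concordant p.1.1 p.1.2 p.2.1 p.2.2 ↔ o'.Concordant p.1.1 p.1.2 p.2.1 p.2.2) := by
  obtain ⟨ε, hε⟩ := ArcChart.exists_eventually_rightOf_iff hF hη
    (o.domain_subset_source (mem_of_mem_nhds h)) (o'.domain_subset_source (mem_of_mem_nhds h'))
  have hheight : ∀ᶠ p : Arc F × Arc F in 𝓝 (η, η), Disjoint (range p.1) (range p.2) →
      (o.height p.1 < o.height p.2 ↔ (o'.height p.1 < o'.height p.2 ↔ ε)) := by
    filter_upwards [hε, prod_mem_nhds h h, prod_mem_nhds h' h'] with p hp hd hd' hdisj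
    rw [← o.rightOf_iff _ hd.1 _ hd.2 hdisj, ← o'.rightOf_iff _ hd'.1 _ hd'.2 hdisj, hp hdisj]
  filter_upwards [hheight.prod_nhds hheight] with p hp hdisj hdisj'
  rw [Concordant, Concordant, hp.1 hdisj, hp.2 hdisj']
  tauto

end LocalOrder

end Charts

section OrderAtlas

variable {G : Type u} [Mul G] [TopologicalSpace G] {F : Type*} [TopologicalSpace F] {H : G → Arc F}

/-- Finitely many local orders on arcs `H x`, each used over a closed set of parameters `x`. Every
order also applies to the arcs `H (x * v)` with `v ∈ V`, where any two of them agree up to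
reversal. -/
structure OrderAtlas (H : G → Arc F) (V : Set G) where
  ι : Type u
  finite : Finite ι
  order : ι → LocalOrder F
  carrier : ι → Set G
  isClosed_carrier : ∀ i, IsClosed (carrier i)
  exists_mem : ∀ x, ∃ i, x ∈ carrier i
  exists_subset : ∃ i, V ⊆ carrier i
  domain_mem_nhds : ∀ i, ∀ x ∈ carrier i, ∀ v ∈ V, (order i).domain ∈ 𝓝 (H (x * v))
  concordant_iff : ∀ i j, ∀ x ∈ carrier i ∩ carrier j, ∀ a ∈ V, ∀ b ∈ V, ∀ c ∈ V, ∀ d ∈ V,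
    Disjoint (range (H (x * a))) (range (H (x * b))) →
    Disjoint (range (H (x * c))) (range (H (x * d))) →
      ((order i).Concordant (H (x * a)) (H (x * b)) (H (x * c)) (H (x * d)) ↔
        (order j).Concordant (H (x * a)) (H (x * b)) (H (x * c)) (H (x * d)))

namespace OrderAtlas

variable [ContinuousMul G] {V : Set G}

lemma eventually_concordant_iff (A : OrderAtlas H V) (hH : Continuous H) {a b c d : G}
    (ha : a ∈ V) (hb : b ∈ V) (hc : c ∈ V) (hd : d ∈ V)
    (hab : ∀ x, Disjoint (range (H (x * a))) (range (H (x * b))))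
    (hcd : ∀ x, Disjoint (range (H (x * c))) (range (H (x * d)))) {x : G} {i : A.ι}
    (hx : x ∈ A.carrier i) : ∀ᶠ y in 𝓝 x,
      ((A.order i).Concordant (H (y * a)) (H (y * b)) (H (y * c)) (H (y * d)) ↔
        (A.order i).Concordant (H (x * a)) (H (x * b)) (H (x * c)) (H (x * d))) := by
  have hlt {a b : G} (ha : a ∈ V) (hb : b ∈ V)
      (hab : ∀ x, Disjoint (range (H (x * a))) (range (H (x * b)))) :=
    (by fun_prop : Continuous fun y ↦ (H (y * a), H (y * b))).tendsto x |>.eventually <|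
      LocalOrder.eventually_height_lt_iff (A.domain_mem_nhds i x hx a ha)
        (A.domain_mem_nhds i x hx b hb) (hab x)
  filter_upwards [hlt ha hb hab, hlt hc hd hcd] with y hy hy'
  rw [LocalOrder.Concordant, LocalOrder.Concordant, hy (hab y), hy' (hcd y)]

lemma concordant_congr [PreconnectedSpace G] (A : OrderAtlas H V) (hH : Continuous H)
    {a b c d : G} (ha : a ∈ V) (hb : b ∈ V) (hc : c ∈ V) (hd : d ∈ V)
    (hab : ∀ x, Disjoint (range (H (x * a))) (range (H (x * b))))
    (hcd : ∀ x, Disjoint (range (H (x * c))) (range (H (x * d)))) {x y : G} {i j : A.ι}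
    (hx : x ∈ A.carrier i) (hy : y ∈ A.carrier j) :
    (A.order i).Concordant (H (x * a)) (H (x * b)) (H (x * c)) (H (x * d)) ↔
      (A.order j).Concordant (H (y * a)) (H (y * b)) (H (y * c)) (H (y * d)) := by
  have := A.finite
  choose idx hidx using A.exists_mem
  let S (z : G) : Prop :=
    (A.order (idx z)).Concordant (H (z * a)) (H (z * b)) (H (z * c)) (H (z * d))
  have hS {z : G} {i : A.ι} (hz : z ∈ A.carrier i) :
      (A.order i).Concordant (H (z * a)) (H (z * b)) (H (z * c)) (H (z * d)) ↔ S z :=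
    A.concordant_iff i (idx z) z ⟨hz, hidx z⟩ a ha b hb c hc d hd (hab z) (hcd z)
  have hconst : IsLocallyConstant S := by
    refine (IsLocallyConstant.iff_eventually_eq _).2 fun z ↦ ?_
    have hmem : ∀ᶠ z' in 𝓝 z, ∀ i, z' ∈ A.carrier i → z ∈ A.carrier i := by
      refine eventually_all.2 fun i ↦ ?_
      by_cases hz : z ∈ A.carrier i
      · exact .of_forall fun _ _ ↦ hz
      · filter_upwards [(A.isClosed_carrier i).isOpen_compl.mem_nhds hz] with z' hz' h
        exact absurd h hz'
    have hconc : ∀ᶠ z' in 𝓝 z, ∀ i, z ∈ A.carrier i →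
        ((A.order i).Concordant (H (z' * a)) (H (z' * b)) (H (z' * c)) (H (z' * d)) ↔
          (A.order i).Concordant (H (z * a)) (H (z * b)) (H (z * c)) (H (z * d))) :=
      eventually_all.2 fun i ↦ eventually_imp_distrib_left.2 <|
        A.eventually_concordant_iff hH ha hb hc hd hab hcd
    filter_upwards [hmem, hconc] with z' hz hz'
    exact propext <| (hz' _ (hz _ (hidx z'))).trans (hS (hz _ (hidx z')))
  rw [hS hx, hS hy, hconst.apply_eq_of_preconnectedSpace x y]

end OrderAtlas

section Subgroup

variable {G : Type u} [Group G] [TopologicalSpace G] [ContinuousMul G] {F : Type*}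
  [TopologicalSpace F] {H : G → Arc F}

lemma OrderAtlas.height_mul_self_mul_lt_iff [PreconnectedSpace G] {V : Set G}
    (A : OrderAtlas H V) (hH : Continuous H) {K : Subgroup G} (hKV : (K : Set G) ⊆ V)
    (hK : ∀ x, ∀ k ∈ K, ∀ k' ∈ K, k ≠ k' → Disjoint (range (H (x * k))) (range (H (x * k'))))
    {i : A.ι} (hi : V ⊆ A.carrier i) {t k k' : G} (ht : t ∈ K) (hk : k ∈ K) (hk' : k' ∈ K)
    (hne : k ≠ k') :
    (A.order i).height (H (t * t * k)) < (A.order i).height (H (t * t * k')) ↔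
      (A.order i).height (H k) < (A.order i).height (H k') := by
  have htk := K.mul_mem ht hk
  have htk' := K.mul_mem ht hk'
  have hconc := A.concordant_congr hH (hKV hk) (hKV hk') (hKV htk) (hKV htk')
    (fun x ↦ hK x k hk k' hk' hne)
    (fun x ↦ hK x _ htk _ htk' ((mul_right_injective t).ne hne))
    (hi (hKV K.one_mem)) (hi (hKV ht))
  simp only [LocalOrder.Concordant, one_mul, ← mul_assoc] at hconc
  tauto

end Subgroup

end OrderAtlas

lemma strictMono_or_strictAnti_pow {M : Type*} [Monoid M] {h : M → ℝ} {U : M}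
    (hne : ∀ n : ℕ, h (U ^ n) ≠ h (U ^ (n + 1)))
    (hstep : ∀ n : ℕ, h (U * U ^ n) < h (U * U ^ (n + 1)) ↔ h (U ^ n) < h (U ^ (n + 1))) :
    StrictMono (fun n : ℕ ↦ h (U ^ n)) ∨ StrictAnti fun n : ℕ ↦ h (U ^ n) := by
  have hall (n : ℕ) : h (U ^ n) < h (U ^ (n + 1)) ↔ h (U ^ 0) < h (U ^ 1) := by
    induction n with
    | zero => rfl
    | succ n ih => rw [← ih, ← hstep n, ← pow_succ', ← pow_succ']
  obtain hlt | hgt := (hne 0).lt_or_gt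
  · exact .inl (strictMono_nat_of_lt_succ fun n ↦ (hall n).2 hlt)
  · exact .inr (strictAnti_nat_of_succ_lt fun n ↦
      (hne n).lt_or_gt.resolve_left fun h ↦ hgt.not_gt ((hall n).1 h))

namespace LocalOrder

lemma exists_finite_cover {X : Type*} [TopologicalSpace X] [CompactSpace X] [RegularSpace X]
    {F : Type*} [TopologicalSpace F] {H : X → Arc F} (hF : IsLocallyPlanar F)
    (hH : Continuous H) (hinj : ∀ x, Function.Injective (H x)) :
    ∃ (T : Finset X) (o : X → LocalOrder F) (C : X → Set X), (∀ i, IsClosed (C i)) ∧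
      (∀ x, ∃ i ∈ T, C i ∈ 𝓝 x) ∧ ∀ i, ∀ x ∈ C i, (o i).domain ∈ 𝓝 (H x) := by
  choose o ho using fun x ↦ exists_domain_mem_nhds hF (hinj x)
  have hev (x : X) : {y | (o x).domain ∈ 𝓝 (H y)} ∈ 𝓝 x :=
    hH.continuousAt.eventually (eventually_eventually_nhds.2 (ho x))
  choose C hC hclosed hsub using fun x ↦ exists_mem_nhds_isClosed_subset (hev x)
  obtain ⟨T, -, hT⟩ := isCompact_univ.elim_nhds_subcover (fun x ↦ interior (C x))
    fun x _ ↦ interior_mem_nhds.2 (hC x)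
  refine ⟨T, o, C, hclosed, fun x ↦ ?_, fun i x hx ↦ hsub i hx⟩
  simpa [mem_interior_iff_mem_nhds] using hT (mem_univ x)

end LocalOrder

section CompactMonoid

variable {G : Type u} [Monoid G] [TopologicalSpace G] [ContinuousMul G] [CompactSpace G]
  {F : Type*} [TopologicalSpace F] {H : G → Arc F}

namespace LocalOrder

variable {o o' : LocalOrder F} {C : Set G}

lemma eventually_domain_mem_nhds (hH : Continuous H) (hC : IsClosed C)
    (h : ∀ x ∈ C, o.domain ∈ 𝓝 (H x)) :
    ∀ᶠ v in 𝓝 1, ∀ x ∈ C, o.domain ∈ 𝓝 (H (x * v)) := by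
  refine hC.isCompact.eventually_forall_of_forall_eventually fun x hx ↦ ?_
  have hlim : Tendsto (fun z : G × G ↦ H (z.2 * z.1)) (𝓝 (1, x)) (𝓝 (H x)) := by
    simpa using (by fun_prop : Continuous fun z : G × G ↦ H (z.2 * z.1)).tendsto (1, x)
  exact hlim.eventually (eventually_eventually_nhds.2 (h x hx))

lemma eventually_concordant_mul_iff (hF : IsLocallyPlanar F) (hH : Continuous H)
    (hinj : ∀ x, Function.Injective (H x)) (hC : IsClosed C)
    (h : ∀ x ∈ C, o.domain ∈ 𝓝 (H x) ∧ o'.domain ∈ 𝓝 (H x)) :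
    ∀ᶠ p : (G × G) × (G × G) in 𝓝 ((1, 1), (1, 1)), ∀ x ∈ C,
      Disjoint (range (H (x * p.1.1))) (range (H (x * p.1.2))) →
      Disjoint (range (H (x * p.2.1))) (range (H (x * p.2.2))) →
        (o.Concordant (H (x * p.1.1)) (H (x * p.1.2)) (H (x * p.2.1)) (H (x * p.2.2)) ↔
          o'.Concordant (H (x * p.1.1)) (H (x * p.1.2)) (H (x * p.2.1)) (H (x * p.2.2))) := by
  refine hC.isCompact.eventually_forall_of_forall_eventually fun x hx ↦ ?_
  have hcont : Continuous fun z : ((G × G) × (G × G)) × G ↦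
      ((H (z.2 * z.1.1.1), H (z.2 * z.1.1.2)), (H (z.2 * z.1.2.1), H (z.2 * z.1.2.2))) := by
    fun_prop
  have hlim := hcont.tendsto (((1, 1), (1, 1)), x)
  simp only [mul_one] at hlim
  exact hlim.eventually (eventually_concordant_iff hF (hinj x) (h x hx).1 (h x hx).2)

end LocalOrder

lemma exists_orderAtlas [RegularSpace G] (hF : IsLocallyPlanar F) (hH : Continuous H)
    (hinj : ∀ x, Function.Injective (H x)) : ∃ V ∈ 𝓝 (1 : G), Nonempty (OrderAtlas H V) := by
  obtain ⟨T, o, C, hclosed, hcover, hdomain⟩ := LocalOrder.exists_finite_cover hF hH hinj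
  obtain ⟨i₁, hi₁, hC₁⟩ := hcover 1
  have hnhds : ∀ᶠ v in 𝓝 1, ∀ i : T, ∀ x ∈ C i, (o i).domain ∈ 𝓝 (H (x * v)) :=
    eventually_all.2 fun i ↦
      LocalOrder.eventually_domain_mem_nhds hH (hclosed i) (hdomain i)
  have hconc := eventually_all.2 fun i : T ↦ eventually_all.2 fun j : T ↦
    LocalOrder.eventually_concordant_mul_iff hF hH hinj ((hclosed i).inter (hclosed j))
      fun x hx ↦ ⟨hdomain i x hx.1, hdomain j x hx.2⟩
  rw [nhds_prod_eq] at hconc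
  obtain ⟨W, hW, h⟩ := eventually_prod_self_iff'.1 hconc
  rw [nhds_prod_eq] at hW
  obtain ⟨V, hV, hVW⟩ := mem_prod_self_iff.1 hW
  refine ⟨V ∩ _ ∩ C i₁, inter_mem (inter_mem hV hnhds) hC₁, ⟨{
    ι := T
    finite := inferInstance
    order := fun i ↦ o i
    carrier := fun i ↦ C i
    isClosed_carrier := fun i ↦ hclosed i
    exists_mem := fun x ↦ ?_
    exists_subset := ⟨⟨i₁, hi₁⟩, inter_subset_right⟩
    domain_mem_nhds := fun i x hx v hv ↦ hv.1.2 i x hx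
    concordant_iff := fun i j x hx a ha b hb c hc d hd ↦
      h (a, b) (hVW ⟨ha.1.1, hb.1.1⟩) (c, d) (hVW ⟨hc.1.1, hd.1.1⟩) i j x hx }⟩⟩
  obtain ⟨i, hi, hx⟩ := hcover x
  exact ⟨⟨i, hi⟩, mem_of_mem_nhds hx⟩

end CompactMonoid

section CompactGroup

variable {G : Type u} [Group G] [TopologicalSpace G] [IsTopologicalGroup G] [CompactSpace G]

lemma frequently_powers_not_lt_iff {h : G → ℝ} {U : G}
    (hU : StrictMono (fun n : ℕ ↦ h (U ^ n)) ∨ StrictAnti fun n : ℕ ↦ h (U ^ n)) :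
    ∃ᶠ x in 𝓝 1, x ∈ Submonoid.powers U ∧ h x ≠ h U ∧ ¬ (h x < h U ↔ h 1 < h U) := by
  intro hnot
  refine (mapClusterPt_one_atTop_pow U).frequently hnot ?_
  filter_upwards [eventually_gt_atTop 1] with n hn
  refine not_not.2 ⟨⟨n, rfl⟩, ?_⟩
  obtain hmono | hanti := hU
  · have h₀ := hmono zero_lt_one
    have h₁ := hmono hn
    simp only [pow_zero, pow_one] at h₀ h₁
    exact ⟨h₁.ne', fun h ↦ h₁.not_gt (h.2 h₀)⟩
  · have h₀ := hanti zero_lt_one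
    have h₁ := hanti hn
    simp only [pow_zero, pow_one] at h₀ h₁
    exact ⟨h₁.ne, fun h ↦ h₀.not_gt (h.1 h₁)⟩

theorem exists_nhds_one_forall_subgroup_mul_self_eq_one [PreconnectedSpace G] {F : Type*}
    [TopologicalSpace F] {H : G → Arc F} (hF : IsLocallyPlanar F) (hH : Continuous H)
    (hinj : ∀ x, Function.Injective (H x)) :
    ∃ V ∈ 𝓝 (1 : G), ∀ K : Subgroup G, (K : Set G) ⊆ V →
      (∀ x, ∀ k ∈ K, ∀ k' ∈ K, k ≠ k' → Disjoint (range (H (x * k))) (range (H (x * k')))) →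
        ∀ t ∈ K, t * t = 1 := by
  obtain ⟨V, hV, ⟨A⟩⟩ := exists_orderAtlas hF hH hinj
  refine ⟨V, hV, fun K hKV hK t ht ↦ ?_⟩
  obtain ⟨i, hi⟩ := A.exists_subset
  let h (x : G) : ℝ := (A.order i).height (H x)
  have hdomain {k : G} (hk : k ∈ K) : (A.order i).domain ∈ 𝓝 (H k) := by
    simpa using A.domain_mem_nhds i 1 (hi (hKV K.one_mem)) k (hKV hk)
  have hdisj {k k' : G} (hk : k ∈ K) (hk' : k' ∈ K) (hne : k ≠ k') :
      Disjoint (range (H k)) (range (H k')) := by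
    simpa using hK 1 k hk k' hk' hne
  have hheight {k k' : G} (hk : k ∈ K) (hk' : k' ∈ K) (hne : k ≠ k') : h k ≠ h k' :=
    LocalOrder.height_ne (mem_of_mem_nhds (hdomain hk)) (mem_of_mem_nhds (hdomain hk'))
      (hdisj hk hk' hne)
  by_contra! hU
  set U := t * t
  have hUK : U ∈ K := K.mul_mem ht ht
  have hpow (n : ℕ) : U ^ n ≠ U ^ (n + 1) := by simpa [pow_succ] using hU
  have hmono := strictMono_or_strictAnti_pow
    (fun n ↦ hheight (K.pow_mem hUK n) (K.pow_mem hUK _) (hpow n))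
    fun n ↦ A.height_mul_self_mul_lt_iff hH hKV hK hi ht (K.pow_mem hUK n) (K.pow_mem hUK _)
      (hpow n)
  have hlim : Tendsto (fun x ↦ (H x, H U)) (𝓝 1) (𝓝 (H 1, H U)) :=
    Continuous.tendsto (by fun_prop) 1
  have hstable := hlim.eventually <| LocalOrder.eventually_height_lt_iff (hdomain K.one_mem)
    (hdomain hUK) (hdisj K.one_mem hUK hU.symm)
  obtain ⟨x, ⟨⟨n, hn⟩, hne, hnot⟩, hx⟩ :=
    ((frequently_powers_not_lt_iff hmono).and_eventually hstable).exists
  exact hnot (hx (hdisj (hn ▸ K.pow_mem hUK n) hUK (ne_of_apply_ne h hne)))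

end CompactGroup

namespace Solenoid

variable {w : ℕ → ℕ}

instance : CompactSpace (Solenoid w) := by
  have h : (solenoidSubgroup w : Set (ℕ → Circle)) = ⋂ n, {x | x n = x (n + 1) ^ w n} :=
    ofPred_forall _
  refine isCompact_iff_compactSpace.1 (IsClosed.isCompact (h ▸ isClosed_iInter fun n ↦ ?_))
  exact isClosed_eq (by fun_prop) (by fun_prop)

lemma apply_eq_of_le {x y : Solenoid w} {m n : ℕ} (hmn : m ≤ n) (h : x.1 n = y.1 n) :
    x.1 m = y.1 m := by
  induction n, hmn using Nat.le_induction with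
  | base => exact h
  | succ n _ ih => exact ih (by rw [x.2 n, y.2 n, h])

lemma exists_forall_apply_eq_mem {x : Solenoid w} {V : Set (Solenoid w)} (hV : V ∈ 𝓝 x) :
    ∃ n, ∀ y : Solenoid w, y.1 n = x.1 n → y ∈ V := by
  rw [nhds_subtype, mem_comap] at hV
  obtain ⟨s, hs, hsV⟩ := hV
  rw [nhds_pi, Filter.mem_pi] at hs
  obtain ⟨J, hJ, t, ht, hts⟩ := hs
  obtain ⟨n, hn⟩ := hJ.bddAbove
  refine ⟨n, fun y hy ↦ hsV (hts fun i hi ↦ ?_)⟩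
  rw [apply_eq_of_le (hn hi) hy]
  exact mem_of_mem_nhds (ht i)

/-- The kernel of the projection of the solenoid onto its `n`-th circle. -/
noncomputable def coordKer (w : ℕ → ℕ) (n : ℕ) : Subgroup (Solenoid w) :=
  ((Pi.evalMonoidHom (fun _ ↦ Circle) n).comp (solenoidSubgroup w).subtype).ker

lemma mem_coordKer {n : ℕ} {x : Solenoid w} : x ∈ coordKer w n ↔ x.1 n = 1 := Iff.rfl

section Line

variable [∀ n, NeZero (w n)]

/-- The one-parameter subgroup `t ↦ (exp (i t / (w 0 ⋯ w (n - 1))))ₙ` of the solenoid. The arcs that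
get ordered are the translates of its restriction to the unit interval. -/
noncomputable def line (t : ℝ) : Solenoid w :=
  ⟨fun n ↦ Circle.exp (t / ∏ i ∈ Finset.range n, (w i : ℝ)), fun n ↦ by
    have hw : (w n : ℝ) ≠ 0 := Nat.cast_ne_zero.2 (NeZero.ne _)
    rw [← Circle.exp_natCast_mul, Finset.prod_range_succ]
    field_simp⟩

lemma line_apply (t : ℝ) (n : ℕ) :
    (line t : Solenoid w).1 n = Circle.exp (t / ∏ i ∈ Finset.range n, (w i : ℝ)) := rfl

lemma continuous_line : Continuous (line : ℝ → Solenoid w) :=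
  Continuous.subtype_mk (continuous_pi fun n ↦ by fun_prop) _

lemma exists_line_apply_eq (n : ℕ) (z : Circle) : ∃ t, (line t : Solenoid w).1 n = z := by
  have hprod : ∏ i ∈ Finset.range n, (w i : ℝ) ≠ 0 :=
    Finset.prod_ne_zero_iff.2 fun i _ ↦ Nat.cast_ne_zero.2 (NeZero.ne _)
  obtain ⟨θ, rfl⟩ := Circle.exp_surjective z
  exact ⟨θ * ∏ i ∈ Finset.range n, (w i : ℝ), by rw [line_apply, mul_div_cancel_right₀ _ hprod]⟩

lemma denseRange_line : DenseRange (line : ℝ → Solenoid w) := by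
  refine fun x ↦ mem_closure_iff_nhds.2 fun V hV ↦ ?_
  obtain ⟨n, hn⟩ := exists_forall_apply_eq_mem hV
  obtain ⟨t, ht⟩ := exists_line_apply_eq (w := w) n (x.1 n)
  exact ⟨line t, hn _ ht, mem_range_self t⟩

instance : PreconnectedSpace (Solenoid w) :=
  denseRange_line.preconnectedSpace continuous_line

lemma eq_of_mul_line_eq_mul_line {x y : Solenoid w} (h₀ : x.1 0 = y.1 0) {u v : I}
    (h : x * line u = y * line v) : x = y ∧ u = v := by
  have hexp : Circle.exp u = Circle.exp v := by
    have h' : x.1 0 * (line u : Solenoid w).1 0 = y.1 0 * (line v : Solenoid w).1 0 :=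
      congrArg (fun z : Solenoid w ↦ z.1 0) h
    simpa [h₀, line_apply] using h'
  obtain rfl : u = v := Subtype.ext <|
    Circle.exp_injOn_Icc (by linarith [Real.pi_gt_three]) u.2 v.2 hexp
  exact ⟨mul_right_cancel h, rfl⟩

lemma exists_mem_coordKer_mul_self_ne_one (hw : ∀ n, 1 < w n) (n : ℕ) :
    ∃ t ∈ coordKer w n, t * t ≠ 1 := by
  have hN : (4 : ℝ) ≤ w (n + 1) * w n := by exact_mod_cast Nat.mul_le_mul (hw (n + 1)) (hw n)
  obtain ⟨s, hs⟩ := exists_line_apply_eq (w := w) (n + 2)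
    (Circle.exp (2 * Real.pi / (w (n + 1) * w n)))
  refine ⟨line s, ?_, fun h ↦ ?_⟩
  · rw [mem_coordKer, (line s).2 n, (line s).2 (n + 1), hs, ← pow_mul, ← Circle.exp_natCast_mul,
      Nat.cast_mul, mul_div_cancel₀ _ (by linarith), Circle.exp_two_pi]
  · have h' : (line s : Solenoid w).1 (n + 2) * (line s : Solenoid w).1 (n + 2) = 1 :=
      congrArg (fun z : Solenoid w ↦ z.1 (n + 2)) h
    rw [hs, ← Circle.exp_add, ← Circle.exp_zero] at h'
    have hlt : 2 * Real.pi / (w (n + 1) * w n) + 2 * Real.pi / (w (n + 1) * w n) < 2 * Real.pi := by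
      rw [← add_div, div_lt_iff₀ (by linarith)]
      nlinarith [Real.pi_pos]
    have hpos : 0 < 2 * Real.pi / (w (n + 1) * w n) := div_pos Real.two_pi_pos (by linarith)
    have := Circle.exp_injOn_Ico (a := 0) (by simp) ⟨by linarith, hlt⟩
      ⟨le_rfl, Real.two_pi_pos⟩ h'
    linarith

end Line

end Solenoid

theorem no_embedding_of_solenoid_into_surface_general
    (w : ℕ → ℕ) (hw : ∀ n, 1 < w n) {F : Type*} [TopologicalSpace F] (hF : IsLocallyPlanar F) :
    ¬ ∃ f : Solenoid w → F, Continuous f ∧ Function.Injective f := by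
  rintro ⟨f, hf, hinj⟩
  have (n : ℕ) : NeZero (w n) := ⟨(zero_lt_one.trans (hw n)).ne'⟩
  let H (z : Solenoid w) : Arc F :=
    ⟨fun u ↦ f (z * Solenoid.line u), by have := Solenoid.continuous_line (w := w); fun_prop⟩
  have hH : Continuous H := ContinuousMap.continuous_of_continuous_uncurry _ <| by
    have := Solenoid.continuous_line (w := w)
    exact hf.comp (by fun_prop)
  have hHinj (x : Solenoid w) : Function.Injective (H x) := fun u v h ↦
    (Solenoid.eq_of_mul_line_eq_mul_line rfl (hinj h)).2
  obtain ⟨V, hV, hsq⟩ := exists_nhds_one_forall_subgroup_mul_self_eq_one hF hH hHinj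
  obtain ⟨n, hn⟩ := Solenoid.exists_forall_apply_eq_mem hV
  obtain ⟨t, ht, htt⟩ := Solenoid.exists_mem_coordKer_mul_self_ne_one hw n
  refine htt (hsq (Solenoid.coordKer w n) hn (fun x k hk k' hk' hne ↦ ?_) t ht)
  rw [disjoint_range_iff]
  intro u v h
  have h₀ : (x * k).1 0 = (x * k').1 0 := Solenoid.apply_eq_of_le (Nat.zero_le n) <|
    congrArg (x.1 n * ·) (hk.trans hk'.symm)
  exact hne (mul_left_cancel (Solenoid.eq_of_mul_line_eq_mul_line h₀ (hinj h)).1)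

/-- **No solenoid embeds into a surface.** -/
theorem no_embedding_of_solenoid_into_surface
    (w : ℕ → ℕ) (hw : ∀ n, 1 < w n)
    (F : Type*) [TopologicalSpace F] (hF : IsSurface F) :
    ¬ ∃ f : Solenoid w → F, IsEmbedding f :=
  fun ⟨f, hf⟩ ↦ no_embedding_of_solenoid_into_surface_general w hw hF.2.2.2
    ⟨f, hf.continuous, hf.injective⟩
end

section
/- No solenoid is planar: for any sequence of integers w₁, w₂, … with each wₙ > 1, there is no topological embedding of the solenoid Θ of type (w₁, w₂, …) into the plane ℝ². -/
open Topology

/-!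
Eilenberg's theorem: on a compact set `K ⊆ ℂ`, every nonvanishing continuous function is the product
of a rational function and an exponential. To see this, sweep `K` by vertical lines. Near a line
the function has a logarithm, which differs from the logarithm already found on the left by an
integer multiple of `2πi`; this integer is a step function along the line, jumping only at points
off `K`, and the jumps are absorbed by linear factors vanishing at those points.

A rational function has a logarithm on `K` if and only if its divisor has degree zero on each
bounded component of `ℂ ∖ K`. If `f` has `m`-th roots for arbitrarily large `m`, the corresponding
degrees are divisible by all these `m`, so they vanish and `f` has a logarithm.

On the solenoid, `x₀ = xₙ ^ (w₁ ⋯ wₙ)` has such roots but no logarithm: along the one-parameter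
subgroup over `exp (it)` a logarithm would be `it + c`, which is unbounded, while the solenoid is
compact. So the solenoid cannot lie in the plane.
-/

section Logarithms

variable {X Y : Type*} [TopologicalSpace X] [TopologicalSpace Y] {f g : X → ℂ} {s t : Set X}

/-- `f` has a continuous logarithm on `s`. The logarithm is a total function of which only the
values on `s` matter. -/
def HasLogOn (f : X → ℂ) (s : Set X) : Prop :=
  ∃ h : X → ℂ, ContinuousOn h s ∧ ∀ x ∈ s, f x = Complex.exp (h x)

namespace HasLogOn

theorem mono (hf : HasLogOn f t) (hst : s ⊆ t) : HasLogOn f s :=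
  let ⟨h, hc, he⟩ := hf
  ⟨h, hc.mono hst, fun x hx => he x (hst hx)⟩

theorem congr (hf : HasLogOn f s) (hfg : Set.EqOn f g s) : HasLogOn g s :=
  let ⟨h, hc, he⟩ := hf
  ⟨h, hc, fun x hx => (hfg hx).symm.trans (he x hx)⟩

theorem comp {φ : Y → X} {u : Set Y} (hf : HasLogOn f s) (hφ : ContinuousOn φ u)
    (hu : Set.MapsTo φ u s) : HasLogOn (fun y => f (φ y)) u :=
  let ⟨h, hc, he⟩ := hf
  ⟨fun y => h (φ y), hc.comp hφ hu, fun y hy => he (φ y) (hu hy)⟩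

theorem ne_zero (hf : HasLogOn f s) : ∀ x ∈ s, f x ≠ 0 :=
  let ⟨_, _, he⟩ := hf
  fun x hx => he x hx ▸ Complex.exp_ne_zero _

theorem const {c : ℂ} (hc : c ≠ 0) : HasLogOn (fun _ => c) s :=
  ⟨fun _ => Complex.log c, continuousOn_const, fun _ _ => (Complex.exp_log hc).symm⟩

theorem mul (hf : HasLogOn f s) (hg : HasLogOn g s) : HasLogOn (fun x => f x * g x) s :=
  let ⟨h, hc, he⟩ := hf
  let ⟨k, kc, ke⟩ := hg
  ⟨fun x => h x + k x, hc.add kc, fun x hx => by simp only [he x hx, ke x hx, Complex.exp_add]⟩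

theorem div (hf : HasLogOn f s) (hg : HasLogOn g s) : HasLogOn (fun x => f x / g x) s :=
  let ⟨h, hc, he⟩ := hf
  let ⟨k, kc, ke⟩ := hg
  ⟨fun x => h x - k x, hc.sub kc, fun x hx => by simp only [he x hx, ke x hx, Complex.exp_sub]⟩

theorem zpow (hf : HasLogOn f s) (n : ℤ) : HasLogOn (fun x => f x ^ n) s :=
  let ⟨h, hc, he⟩ := hf
  ⟨fun x => n * h x, continuousOn_const.mul hc, fun x hx => by
    simp only [he x hx, Complex.exp_int_mul]⟩

theorem pow (hf : HasLogOn f s) (n : ℕ) : HasLogOn (fun x => f x ^ n) s := by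
  simpa using hf.zpow n

theorem prod {ι : Type*} {F : ι → X → ℂ} {u : Finset ι} (hF : ∀ i ∈ u, HasLogOn (F i) s) :
    HasLogOn (fun x => ∏ i ∈ u, F i x) s := by
  choose! h hc he using hF
  refine ⟨fun x => ∑ i ∈ u, h i x, continuousOn_finsetSum _ hc, fun x hx => ?_⟩
  rw [Complex.exp_sum]
  exact Finset.prod_congr rfl fun i hi => he i hi x hx

theorem of_slitPlane (hf : ContinuousOn f s) (hs : ∀ x ∈ s, f x ∈ Complex.slitPlane) :
    HasLogOn f s :=
  ⟨fun x => Complex.log (f x), hf.clog hs, fun x hx =>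
    (Complex.exp_log (Complex.slitPlane_ne_zero (hs x hx))).symm⟩

theorem of_subsingleton (hs : s.Subsingleton) (hf : ∀ x ∈ s, f x ≠ 0) : HasLogOn f s :=
  ⟨fun x => Complex.log (f x), hs.continuousOn _, fun x hx => (Complex.exp_log (hf x hx)).symm⟩

theorem div_of_norm_sub_lt (hf : ContinuousOn f s) (hg : ContinuousOn g s)
    (h : ∀ x ∈ s, ‖f x - g x‖ < ‖g x‖) : HasLogOn (fun x => f x / g x) s := by
  have hg0 : ∀ x ∈ s, g x ≠ 0 := fun x hx =>
    norm_pos_iff.1 ((norm_nonneg _).trans_lt (h x hx))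
  refine of_slitPlane (hf.div hg hg0) fun x hx => ?_
  have hlt : ‖(f x - g x) / g x‖ < 1 := by
    rw [norm_div, div_lt_one (norm_pos_iff.2 (hg0 x hx))]
    exact h x hx
  have heq : f x / g x = 1 + (f x - g x) / g x := by
    rw [sub_div, div_self (hg0 x hx), add_sub_cancel]
  rw [heq]
  exact Complex.mem_slitPlane_of_norm_lt_one hlt

end HasLogOn

theorem exists_continuousOn_union {Z : Type*} [TopologicalSpace Z] {h₁ h₂ : X → Z}
    (hs : IsClosed s) (ht : IsClosed t) (c₁ : ContinuousOn h₁ s) (c₂ : ContinuousOn h₂ t)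
    (h : Set.EqOn h₁ h₂ (s ∩ t)) :
    ∃ H : X → Z, ContinuousOn H (s ∪ t) ∧ Set.EqOn H h₁ s ∧ Set.EqOn H h₂ t := by
  classical
  have e₁ : Set.EqOn (s.piecewise h₁ h₂) h₁ s := s.piecewise_eqOn h₁ h₂
  have e₂ : Set.EqOn (s.piecewise h₁ h₂) h₂ t := fun x hx => by
    by_cases hxs : x ∈ s
    · rw [e₁ hxs, h ⟨hxs, hx⟩]
    · exact s.piecewise_eq_of_notMem h₁ h₂ hxs
  exact ⟨_, (c₁.congr e₁).union_of_isClosed (c₂.congr e₂) hs ht, e₁, e₂⟩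

theorem HasLogOn.union_of_eqOn {h₁ h₂ : X → ℂ} (hs : IsClosed s) (ht : IsClosed t)
    (c₁ : ContinuousOn h₁ s) (c₂ : ContinuousOn h₂ t) (e₁ : ∀ x ∈ s, f x = Complex.exp (h₁ x))
    (e₂ : ∀ x ∈ t, f x = Complex.exp (h₂ x)) (h : Set.EqOn h₁ h₂ (s ∩ t)) :
    HasLogOn f (s ∪ t) := by
  obtain ⟨H, hc, k₁, k₂⟩ := exists_continuousOn_union hs ht c₁ c₂ h
  refine ⟨H, hc, fun x hx => ?_⟩
  rcases hx with hx | hx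
  · rw [k₁ hx, e₁ x hx]
  · rw [k₂ hx, e₂ x hx]

theorem HasLogOn.union_of_subsingleton_inter (hs : IsClosed s) (ht : IsClosed t)
    (fs : HasLogOn f s) (ft : HasLogOn f t) (hst : (s ∩ t).Subsingleton) :
    HasLogOn f (s ∪ t) := by
  obtain ⟨h₁, c₁, e₁⟩ := fs
  obtain ⟨h₂, c₂, e₂⟩ := ft
  rcases (s ∩ t).eq_empty_or_nonempty with hempty | ⟨p, hps, hpt⟩
  · exact union_of_eqOn hs ht c₁ c₂ e₁ e₂ (hempty ▸ Set.eqOn_empty _ _)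
  · refine union_of_eqOn (h₂ := fun x => h₂ x + (h₁ p - h₂ p)) hs ht c₁
      (c₂.add continuousOn_const) e₁ (fun x hx => ?_) fun x hx => ?_
    · rw [Complex.exp_add, Complex.exp_sub, ← e₁ p hps, ← e₂ p hpt, div_self, mul_one, e₂ x hx]
      exact e₂ p hpt ▸ Complex.exp_ne_zero _
    · simp only [hst hx ⟨hps, hpt⟩, add_sub_cancel]

theorem exists_continuousMap_eqOn [NormalSpace X] {h : X → ℂ} (hs : IsClosed s)
    (hc : ContinuousOn h s) : ∃ H : C(X, ℂ), Set.EqOn H h s := by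
  obtain ⟨H, hH⟩ := ContinuousMap.exists_restrict_eq hs ⟨s.domRestrict h, hc.domRestrict⟩
  exact ⟨H, fun x hx => congrArg (fun k => k ⟨x, hx⟩) hH⟩

theorem HasLogOn.exists_mem_nhds_of_fiber [T4Space X] [T2Space Y] {K : Set X} (hK : IsCompact K)
    (hf : ContinuousOn f K) {π : X → Y} (hπ : Continuous π) {y : Y}
    (hy : HasLogOn f (K ∩ π ⁻¹' {y})) : ∃ U ∈ 𝓝 y, HasLogOn f (K ∩ π ⁻¹' U) := by
  obtain ⟨h, hc, he⟩ := hy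
  obtain ⟨H, hH⟩ :=
    exists_continuousMap_eqOn (hK.isClosed.inter (isClosed_singleton.preimage hπ)) hc
  let q : X → ℂ := fun x => f x / Complex.exp (H x)
  have hq : ContinuousOn q K := hf.div (by fun_prop) fun x _ => Complex.exp_ne_zero _
  let bad : Set X := K ∩ q ⁻¹' Complex.slitPlaneᶜ
  have hbad : IsClosed (π '' bad) :=
    ((hK.of_isClosed_subset (hq.preimage_isClosed_of_isClosed hK.isClosed
      Complex.isOpen_slitPlane.isClosed_compl) Set.inter_subset_left).image hπ).isClosed
  have hy : y ∉ π '' bad := by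
    rintro ⟨x, ⟨hxK, hx⟩, hxy⟩
    refine hx ?_
    simp [q, he x ⟨hxK, hxy⟩, hH ⟨hxK, hxy⟩]
  refine ⟨(π '' bad)ᶜ, hbad.isOpen_compl.mem_nhds hy, ?_⟩
  have hlog : HasLogOn q (K ∩ π ⁻¹' (π '' bad)ᶜ) :=
    of_slitPlane (hq.mono Set.inter_subset_left) fun x hx => by
      by_contra hxq
      exact hx.2 ⟨x, ⟨hx.1, hxq⟩, rfl⟩
  have hexp : HasLogOn (fun x => Complex.exp (H x)) (K ∩ π ⁻¹' (π '' bad)ᶜ) :=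
    ⟨H, H.continuous.continuousOn, fun _ _ => rfl⟩
  exact (hlog.mul hexp).congr fun x _ => div_mul_cancel₀ _ (Complex.exp_ne_zero _)

theorem hasLogOn_univ_of_continuous {f : ℂ → ℂ} (hf : Continuous f) (h0 : ∀ z, f z ≠ 0) :
    HasLogOn f Set.univ := by
  have huniv : ContractibleSpace (Set.univ : Set ℂ) :=
    convex_univ.contractibleSpace Set.univ_nonempty
  obtain ⟨h, hc, he⟩ := Complex.exists_continuousOn_eqOn_exp_comp (U := Set.univ)
    (SimplyConnectedSpace.ofContractible _) isOpen_univ hf.continuousOn (by simpa using h0)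
  exact ⟨h, hc, fun z hz => (he hz).symm⟩

end Logarithms

section Sweep

theorem interval_induction {P : ℝ → Prop} {a b : ℝ} (hab : a ≤ b) (ha : P a)
    (h : ∀ x, ∃ U ∈ 𝓝 x, ∀ y y', y ≤ y' → Set.Icc y y' ⊆ U → P y → P y') : P b := by
  choose U hU h using h
  obtain ⟨t, t0, tm, ⟨m, hm⟩, ht⟩ := exists_monotone_Icc_subset_open_cover_Icc hab
    (c := fun x => (↑) ⁻¹' interior (U x))
    (fun x => isOpen_interior.preimage continuous_subtype_val)
    (fun y _ => Set.mem_iUnion.2 ⟨y, mem_interior_iff_mem_nhds.2 (hU y)⟩)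
  have hP : ∀ n, P (t n) := fun n => by
    induction n with
    | zero => rwa [t0]
    | succ k ih =>
      obtain ⟨x, hx⟩ := ht k
      have hle : t k ≤ t (k + 1) := tm k.le_succ
      refine h x _ _ hle (fun u hu => interior_subset ?_) ih
      exact @hx ⟨u, (t k).2.1.trans hu.1, hu.2.trans (t (k + 1)).2.2⟩ hu
  exact hm m le_rfl ▸ hP m

theorem hasLogOn_of_isCompact_real {C : Set ℝ} {f : ℝ → ℂ} (hC : IsCompact C)
    (hf : ContinuousOn f C) (h0 : ∀ x ∈ C, f x ≠ 0) : HasLogOn f C := by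
  obtain ⟨a, ha⟩ := hC.bddBelow
  obtain ⟨b, hb⟩ := hC.bddAbove
  have hsweep : HasLogOn f (C ∩ Set.Iic (max a b)) := by
    refine interval_induction (P := fun y => HasLogOn f (C ∩ Set.Iic y)) (le_max_left a b)
      (.of_subsingleton ?_ fun x hx => h0 x hx.1) fun x => ?_
    · exact fun u hu v hv => (hu.2.antisymm (ha hu.1)).trans (hv.2.antisymm (ha hv.1)).symm
    · have hfib : HasLogOn f (C ∩ id ⁻¹' {x}) :=
        .of_subsingleton (Set.subsingleton_singleton.anti Set.inter_subset_right)
          fun x hx => h0 x hx.1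
      obtain ⟨U, hU, hlog⟩ := hfib.exists_mem_nhds_of_fiber hC hf continuous_id
      refine ⟨U, hU, fun y y' hyy' hyU hy => ?_⟩
      have hglue : HasLogOn f (C ∩ Set.Iic y ∪ C ∩ Set.Icc y y') := by
        refine hy.union_of_subsingleton_inter (hC.isClosed.inter isClosed_Iic)
          (hC.isClosed.inter isClosed_Icc)
          (hlog.mono (Set.inter_subset_inter_right C hyU)) ?_
        exact fun u hu v hv =>
          (hu.1.2.antisymm hu.2.2.1).trans (hv.1.2.antisymm hv.2.2.1).symm
      rwa [← Set.inter_union_distrib_left, Set.Iic_union_Icc_eq_Iic hyy'] at hglue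
  exact hsweep.mono fun x hx => ⟨hx, (hb hx).trans (le_max_right a b)⟩

theorem isClosedEmbedding_complex_mk (x : ℝ) : IsClosedEmbedding (Complex.mk x) :=
  Function.LeftInverse.isClosedEmbedding (fun _ => rfl) Complex.continuous_im
    (Complex.equivRealProdCLM.symm.continuous.comp (Continuous.prodMk_right x))

theorem hasLogOn_inter_re_fiber {K : Set ℂ} {f : ℂ → ℂ} (hK : IsCompact K)
    (hf : ContinuousOn f K) (h0 : ∀ z ∈ K, f z ≠ 0) (x : ℝ) :
    HasLogOn f (K ∩ Complex.re ⁻¹' {x}) := by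
  have hline := isClosedEmbedding_complex_mk x
  have hlog : HasLogOn (fun y => f ⟨x, y⟩) (Complex.mk x ⁻¹' K) :=
    hasLogOn_of_isCompact_real (hline.isCompact_preimage hK)
      (hf.comp hline.continuous.continuousOn (Set.mapsTo_preimage _ K)) fun y hy => h0 _ hy
  refine (hlog.comp Complex.continuous_im.continuousOn ?_).congr ?_
  · rintro z ⟨hz, rfl⟩
    exact hz
  · rintro z ⟨-, rfl⟩
    rfl

end Sweep

section Jumps

theorem exists_int_of_exp_eq_one {X : Type*} [TopologicalSpace X] {d : X → ℂ} {s : Set X}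
    (hd : ContinuousOn d s) (h : ∀ x ∈ s, Complex.exp (d x) = 1) :
    ∃ k : X → ℤ, ContinuousOn k s ∧ ∀ x ∈ s, d x = k x * (2 * Real.pi * Complex.I) := by
  choose! k hk using fun x hx => Complex.exp_eq_one_iff.1 (h x hx)
  refine ⟨k, Int.isClosedEmbedding_coe_real.isEmbedding.continuousOn_iff.2 ?_, hk⟩
  refine (Complex.continuous_re.comp_continuousOn
    (hd.div_const (2 * Real.pi * Complex.I))).congr fun x hx => ?_
  simp [hk x hx]

/-- The integer-valued step functions on `ℝ` with finitely many jumps, none of them at a point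
of `C`. -/
def stepFunctions (C : Set ℝ) : AddSubgroup (ℝ → ℤ) :=
  AddSubgroup.closure (insert 1 ((fun y => (Set.Ioi y).indicator 1) '' Cᶜ))

variable {C : Set ℝ}

theorem indicator_Ioi_mem_stepFunctions {y : ℝ} (hy : y ∉ C) :
    (Set.Ioi y).indicator 1 ∈ stepFunctions C :=
  AddSubgroup.subset_closure (Set.mem_insert_of_mem _ ⟨y, hy, rfl⟩)

theorem exists_mem_stepFunctions_eventually_const {d s : ℝ → ℤ}
    (hs : s ∈ stepFunctions C) {y : ℝ} {e : ℤ} (hsd : Set.EqOn s d (C ∩ Set.Iic y))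
    (hse : ∀ t ∈ C, y ≤ t → s t = e) {c : ℤ} (hc : y ∈ C → d y = c) :
    ∃ s' ∈ stepFunctions C, Set.EqOn s' d (C ∩ Set.Iic y) ∧ ∀ t ∈ C, y ≤ t → s' t = c := by
  by_cases hy : y ∈ C
  · have hec : e = c := by rw [← hse y hy le_rfl, hsd ⟨hy, Set.self_mem_Iic⟩, hc hy]
    exact ⟨s, hs, hsd, fun t ht hyt => (hse t ht hyt).trans hec⟩
  · refine ⟨s + (c - e) • (Set.Ioi y).indicator 1,
      add_mem hs (zsmul_mem (indicator_Ioi_mem_stepFunctions hy) _), fun t ht => ?_,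
      fun t ht hyt => ?_⟩
    · have hty : t ∉ Set.Ioi y := Set.notMem_Ioi.2 ht.2
      simp [hsd ht, hty]
    · have hty : t ∈ Set.Ioi y := hyt.lt_of_ne fun h => hy (h ▸ ht)
      simp [hse t ht hyt, hty]

theorem exists_mem_stepFunctions_eqOn {d : ℝ → ℤ} (hC : IsCompact C) (hd : ContinuousOn d C) :
    ∃ s ∈ stepFunctions C, Set.EqOn s d C := by
  obtain ⟨a, ha⟩ := hC.bddBelow
  obtain ⟨b, hb⟩ := hC.bddAbove
  have hsweep : ∃ s ∈ stepFunctions C, Set.EqOn s d (C ∩ Set.Iic (max (a - 1) b)) ∧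
      ∃ e, ∀ t ∈ C, max (a - 1) b ≤ t → s t = e := by
    refine interval_induction (P := fun y => ∃ s ∈ stepFunctions C,
      Set.EqOn s d (C ∩ Set.Iic y) ∧ ∃ e, ∀ t ∈ C, y ≤ t → s t = e) (le_max_left (a - 1) b)
      ⟨0, zero_mem _, fun t ht => ?_, 0, fun _ _ _ => rfl⟩ fun x => ?_
    · linarith [ha ht.1, ht.2.out]
    obtain ⟨U, hU, c, hc⟩ : ∃ U ∈ 𝓝 x, ∃ c, ∀ t ∈ U ∩ C, d t = c := by
      by_cases hx : x ∈ C
      · obtain ⟨U, hU, hUd⟩ := mem_nhdsWithin_iff_exists_mem_nhds_inter.1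
          ((hd x hx) (IsOpen.mem_nhds (isOpen_discrete {d x}) rfl))
        exact ⟨U, hU, d x, hUd⟩
      · exact ⟨Cᶜ, hC.isClosed.isOpen_compl.mem_nhds hx, 0, fun t ht => absurd ht.2 ht.1⟩
    refine ⟨U, hU, fun y y' hyy' hyU ⟨s, hs, hsd, e, hse⟩ => ?_⟩
    obtain ⟨s', hs', hsd', hsc⟩ := exists_mem_stepFunctions_eventually_const hs hsd hse
      fun hy => hc y ⟨hyU ⟨le_rfl, hyy'⟩, hy⟩
    refine ⟨s', hs', fun t ht => ?_, c, fun t ht hyt => hsc t ht (hyy'.trans hyt)⟩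
    rcases le_total t y with hty | hyt
    · exact hsd' ⟨ht.1, hty⟩
    · rw [hsc t ht.1 hyt, hc t ⟨hyU ⟨hyt, ht.2⟩, ht.1⟩]
  obtain ⟨s, hs, hsd, -⟩ := hsweep
  exact ⟨s, hs, fun t ht => hsd ⟨ht, (hb ht).trans (le_max_right _ _)⟩⟩

end Jumps

section RationalFunctions

/-- The rational function with divisor `n`, i.e. with a zero of order `n a` at each `a`, normalised
to be a product of powers of linear factors. At a pole it takes the junk value `0`. -/
noncomputable def ratFun (n : ℂ →₀ ℤ) (z : ℂ) : ℂ :=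
  n.prod fun a k => (z - a) ^ k

variable {m n : ℂ →₀ ℤ} {K : Set ℂ}

@[simp]
theorem ratFun_zero (z : ℂ) : ratFun 0 z = 1 :=
  Finsupp.prod_zero_index

@[simp]
theorem ratFun_single (a z : ℂ) (k : ℤ) : ratFun (Finsupp.single a k) z = (z - a) ^ k :=
  Finsupp.prod_single_index (zpow_zero _)

theorem sub_ne_zero_of_mem_supported (hn : n ∈ Finsupp.supported ℤ ℤ Kᶜ) {a z : ℂ}
    (ha : a ∈ n.support) (hz : z ∈ K) : z - a ≠ 0 :=
  sub_ne_zero.2 fun h => hn ha (h ▸ hz)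

theorem ratFun_ne_zero (hn : n ∈ Finsupp.supported ℤ ℤ Kᶜ) {z : ℂ} (hz : z ∈ K) :
    ratFun n z ≠ 0 :=
  Finset.prod_ne_zero_iff.2 fun _ ha => zpow_ne_zero _ (sub_ne_zero_of_mem_supported hn ha hz)

theorem continuousOn_ratFun (hn : n ∈ Finsupp.supported ℤ ℤ Kᶜ) : ContinuousOn (ratFun n) K :=
  continuousOn_finsetProd _ fun a ha =>
    (by fun_prop : ContinuousOn (fun z => z - a) K).zpow₀ _ fun _ hz =>
      .inl (sub_ne_zero_of_mem_supported hn ha hz)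

theorem ratFun_add (hm : m ∈ Finsupp.supported ℤ ℤ Kᶜ) (hn : n ∈ Finsupp.supported ℤ ℤ Kᶜ)
    {z : ℂ} (hz : z ∈ K) : ratFun (m + n) z = ratFun m z * ratFun n z := by
  classical
  refine Finsupp.prod_add_index (fun a _ => zpow_zero _) fun a ha k l => zpow_add₀ ?_ k l
  rcases Finset.mem_union.1 ha with ha | ha
  · exact sub_ne_zero_of_mem_supported hm ha hz
  · exact sub_ne_zero_of_mem_supported hn ha hz

theorem ratFun_smul (k : ℤ) (n : ℂ →₀ ℤ) (z : ℂ) : ratFun (k • n) z = ratFun n z ^ k := by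
  refine (Finsupp.prod_mapRange_index fun _ => zpow_zero _).trans ?_
  rw [ratFun, Finsupp.prod, Finsupp.prod, ← Finset.prod_zpow]
  exact Finset.prod_congr rfl fun a _ => by rw [smul_eq_mul, mul_comm, zpow_mul]

theorem ratFun_neg (n : ℂ →₀ ℤ) (z : ℂ) : ratFun (-n) z = (ratFun n z)⁻¹ := by
  simpa using ratFun_smul (-1) n z

end RationalFunctions

section Eilenberg

variable {K : Set ℂ}

/-- The integer-valued functions `s` on the line `re z = x` (parametrised by `im z`) for which some
rational function without zeros or poles on `K` has continuous logarithms on the left part and on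
the right part of `K` that differ by `2πi s` on that line. -/
def logJumps (K : Set ℂ) (x : ℝ) : AddSubgroup (ℝ → ℤ) where
  carrier := {s | ∃ n ∈ Finsupp.supported ℤ ℤ Kᶜ, ∃ u v : ℂ → ℂ,
    ContinuousOn u (K ∩ Complex.re ⁻¹' Set.Iic x) ∧
    ContinuousOn v (K ∩ Complex.re ⁻¹' Set.Ici x) ∧
    (∀ z ∈ K ∩ Complex.re ⁻¹' Set.Iic x, ratFun n z = Complex.exp (u z)) ∧
    (∀ z ∈ K ∩ Complex.re ⁻¹' Set.Ici x, ratFun n z = Complex.exp (v z)) ∧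
    ∀ z ∈ K ∩ Complex.re ⁻¹' {x}, v z - u z = s z.im * (2 * Real.pi * Complex.I)}
  zero_mem' := ⟨0, zero_mem _, 0, 0, continuousOn_const, continuousOn_const, by simp, by simp,
    by simp⟩
  add_mem' := by
    rintro s t ⟨m, hm, u, v, cu, cv, eu, ev, hs⟩ ⟨n, hn, u', v', cu', cv', eu', ev', ht⟩
    refine ⟨m + n, add_mem hm hn, u + u', v + v', cu.add cu', cv.add cv', fun z hz => ?_,
      fun z hz => ?_, fun z hz => ?_⟩
    · rw [ratFun_add hm hn hz.1, eu z hz, eu' z hz, Pi.add_apply, Complex.exp_add]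
    · rw [ratFun_add hm hn hz.1, ev z hz, ev' z hz, Pi.add_apply, Complex.exp_add]
    · simp only [Pi.add_apply, Int.cast_add]
      linear_combination hs z hz + ht z hz
  neg_mem' := by
    rintro s ⟨n, hn, u, v, cu, cv, eu, ev, hs⟩
    refine ⟨-n, neg_mem hn, -u, -v, cu.neg, cv.neg, fun z hz => ?_, fun z hz => ?_,
      fun z hz => ?_⟩
    · rw [ratFun_neg, eu z hz, Pi.neg_apply, Complex.exp_neg]
    · rw [ratFun_neg, ev z hz, Pi.neg_apply, Complex.exp_neg]
    · simp only [Pi.neg_apply, Int.cast_neg]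
      linear_combination -hs z hz

theorem one_mem_logJumps (K : Set ℂ) (x : ℝ) : 1 ∈ logJumps K x :=
  ⟨0, zero_mem _, 0, fun _ => 2 * Real.pi * Complex.I, continuousOn_const, continuousOn_const,
    by simp, by simp [Complex.exp_two_pi_mul_I], by simp⟩

theorem sub_mem_slitPlane {a z : ℂ} (hre : a.re ≤ z.re) (hza : z ≠ a) :
    z - a ∈ Complex.slitPlane := by
  rw [Complex.mem_slitPlane_iff, Complex.sub_re, Complex.sub_im, sub_pos, sub_ne_zero]
  by_contra! h
  exact hza (Complex.ext (h.1.antisymm hre) h.2)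

theorem log_sub_sub_log_sub {a z : ℂ} (hre : z.re = a.re) (hza : z ≠ a) :
    Complex.log (z - a) - (Complex.log (a - z) - Real.pi * Complex.I) =
      ((Set.Ioi a.im).indicator 1 z.im : ℤ) * (2 * Real.pi * Complex.I) := by
  have him : z.im ≠ a.im := fun h => hza (Complex.ext hre h)
  rw [← neg_sub z a, Complex.log, Complex.log, norm_neg]
  rcases him.lt_or_gt with hlt | hgt
  · rw [Complex.arg_neg_eq_arg_add_pi_of_im_neg (by simpa using hlt),
      Set.indicator_of_notMem (Set.notMem_Ioi.2 hlt.le)]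
    push_cast
    ring
  · rw [Complex.arg_neg_eq_arg_sub_pi_of_im_pos (by simpa using hgt),
      Set.indicator_of_mem (Set.mem_Ioi.2 hgt)]
    push_cast
    simp only [Pi.one_apply, Int.cast_one]
    ring

theorem indicator_Ioi_mem_logJumps {a : ℂ} (ha : a ∉ K) :
    (Set.Ioi a.im).indicator 1 ∈ logJumps K a.re := by
  have hne : ∀ z ∈ K, z ≠ a := fun z hz h => ha (h ▸ hz)
  have hleft : ∀ z ∈ K ∩ Complex.re ⁻¹' Set.Iic a.re, a - z ∈ Complex.slitPlane :=
    fun z hz => sub_mem_slitPlane hz.2 (hne z hz.1).symm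
  have hright : ∀ z ∈ K ∩ Complex.re ⁻¹' Set.Ici a.re, z - a ∈ Complex.slitPlane :=
    fun z hz => sub_mem_slitPlane hz.2 (hne z hz.1)
  refine ⟨Finsupp.single a 1, Finsupp.single_mem_supported ℤ 1 ha,
    fun z => Complex.log (a - z) - Real.pi * Complex.I, fun z => Complex.log (z - a),
    ((by fun_prop : ContinuousOn (fun z => a - z) _).clog hleft).sub continuousOn_const,
    (by fun_prop : ContinuousOn (fun z => z - a) _).clog hright, fun z hz => ?_, fun z hz => ?_,
    fun z hz => log_sub_sub_log_sub hz.2 (hne z hz.1)⟩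
  · rw [Complex.exp_sub, Complex.exp_log (Complex.slitPlane_ne_zero (hleft z hz)),
      Complex.exp_pi_mul_I, div_neg, div_one, neg_sub, ratFun_single, zpow_one]
  · rw [Complex.exp_log (Complex.slitPlane_ne_zero (hright z hz))]
    simp

theorem stepFunctions_le_logJumps (K : Set ℂ) (x : ℝ) :
    stepFunctions {y | (⟨x, y⟩ : ℂ) ∈ K} ≤ logJumps K x := by
  rw [stepFunctions, AddSubgroup.closure_le]
  rintro _ (rfl | ⟨y, hy, rfl⟩)
  · exact one_mem_logJumps K x
  · exact indicator_Ioi_mem_logJumps (a := ⟨x, y⟩) hy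

theorem exists_mem_logJumps {d : ℂ → ℂ} {x : ℝ} (hK : IsCompact K)
    (hd : ContinuousOn d (K ∩ Complex.re ⁻¹' {x}))
    (h : ∀ z ∈ K ∩ Complex.re ⁻¹' {x}, Complex.exp (d z) = 1) :
    ∃ s ∈ logJumps K x, ∀ z ∈ K ∩ Complex.re ⁻¹' {x},
      d z = s z.im * (2 * Real.pi * Complex.I) := by
  have hline := isClosedEmbedding_complex_mk x
  obtain ⟨k, hkc, hk⟩ := exists_int_of_exp_eq_one (d := fun y => d ⟨x, y⟩)
    (s := Complex.mk x ⁻¹' K) (hd.comp hline.continuous.continuousOn fun y hy => ⟨hy, rfl⟩)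
    fun y hy => h _ ⟨hy, rfl⟩
  obtain ⟨s, hs, hsk⟩ := exists_mem_stepFunctions_eqOn (hline.isCompact_preimage hK) hkc
  refine ⟨s, stepFunctions_le_logJumps K x hs, ?_⟩
  rintro z ⟨hz, rfl⟩
  rw [hsk hz]
  exact hk z.im hz

theorem exists_hasLogOn_div_ratFun_union {g : ℂ → ℂ} {y y' : ℝ} (hK : IsCompact K) (hyy' : y ≤ y')
    (hleft : HasLogOn g (K ∩ Complex.re ⁻¹' Set.Iic y))
    (hslab : HasLogOn g (K ∩ Complex.re ⁻¹' Set.Icc y y')) :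
    ∃ n ∈ Finsupp.supported ℤ ℤ Kᶜ,
      HasLogOn (fun z => g z / ratFun n z) (K ∩ Complex.re ⁻¹' Set.Iic y') ∧
      HasLogOn (ratFun n) (K ∩ Complex.re ⁻¹' Set.Ici y) := by
  obtain ⟨h₁, c₁, e₁⟩ := hleft
  obtain ⟨h₂, c₂, e₂⟩ := hslab
  have line_left : K ∩ Complex.re ⁻¹' {y} ⊆ K ∩ Complex.re ⁻¹' Set.Iic y :=
    fun z hz => ⟨hz.1, hz.2.le⟩
  have line_slab : K ∩ Complex.re ⁻¹' {y} ⊆ K ∩ Complex.re ⁻¹' Set.Icc y y' :=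
    fun z hz => ⟨hz.1, hz.2.ge, hz.2.trans_le hyy'⟩
  have slab_right : K ∩ Complex.re ⁻¹' Set.Icc y y' ⊆ K ∩ Complex.re ⁻¹' Set.Ici y :=
    fun z hz => ⟨hz.1, hz.2.1⟩
  obtain ⟨s, ⟨n, hn, u, v, cu, cv, eu, ev, huv⟩, hs⟩ :=
    exists_mem_logJumps hK ((c₂.mono line_slab).sub (c₁.mono line_left)) fun z hz => by
      rw [Pi.sub_apply, Complex.exp_sub, ← e₁ z (line_left hz), ← e₂ z (line_slab hz), div_self]
      exact e₁ z (line_left hz) ▸ Complex.exp_ne_zero _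
  refine ⟨n, hn, ?_, v, cv, ev⟩
  have hunion := HasLogOn.union_of_eqOn (f := fun z => g z / ratFun n z)
    (hK.isClosed.inter (isClosed_Iic.preimage Complex.continuous_re))
    (hK.isClosed.inter (isClosed_Icc.preimage Complex.continuous_re))
    (c₁.sub cu) (c₂.sub (cv.mono slab_right))
    (fun z hz => by rw [e₁ z hz, eu z hz, Pi.sub_apply, Complex.exp_sub])
    (fun z hz => by rw [e₂ z hz, ev z (slab_right hz), Pi.sub_apply, Complex.exp_sub])
    fun z hz => by
      have hzy : z ∈ K ∩ Complex.re ⁻¹' {y} := ⟨hz.1.1, hz.1.2.antisymm hz.2.2.1⟩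
      have hjump : h₂ z - h₁ z = v z - u z := (hs z hzy).trans (huv z hzy).symm
      change h₁ z - u z = h₂ z - v z
      linear_combination -hjump
  rwa [← Set.inter_union_distrib_left, ← Set.preimage_union,
    Set.Iic_union_Icc_eq_Iic hyy'] at hunion

theorem exists_ratFun_hasLogOn_extend {f : ℂ → ℂ} {n : ℂ →₀ ℤ} {y y' : ℝ} (hK : IsCompact K)
    (hn : n ∈ Finsupp.supported ℤ ℤ Kᶜ) (hyy' : y ≤ y')
    (hleft : HasLogOn (fun z => f z / ratFun n z) (K ∩ Complex.re ⁻¹' Set.Iic y))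
    (hright : HasLogOn (ratFun n) (K ∩ Complex.re ⁻¹' Set.Ici y))
    (hslab : HasLogOn f (K ∩ Complex.re ⁻¹' Set.Icc y y')) :
    ∃ m ∈ Finsupp.supported ℤ ℤ Kᶜ,
      HasLogOn (fun z => f z / ratFun m z) (K ∩ Complex.re ⁻¹' Set.Iic y') ∧
      HasLogOn (ratFun m) (K ∩ Complex.re ⁻¹' Set.Ici y') := by
  obtain ⟨p, hp, hleft', hright'⟩ := exists_hasLogOn_div_ratFun_union hK hyy' hleft
    (hslab.div (hright.mono fun z hz => ⟨hz.1, hz.2.1⟩))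
  refine ⟨n + p, add_mem hn hp, hleft'.congr fun z hz => ?_,
    ((hright.mul hright').mono fun z hz => ⟨hz.1, hyy'.trans hz.2⟩).congr fun z hz => ?_⟩
  · rw [ratFun_add hn hp hz.1]
    exact div_div _ _ _
  · rw [ratFun_add hn hp hz.1]

theorem exists_hasLogOn_div_ratFun {f : ℂ → ℂ} (hK : IsCompact K) (hf : ContinuousOn f K)
    (h0 : ∀ z ∈ K, f z ≠ 0) :
    ∃ n ∈ Finsupp.supported ℤ ℤ Kᶜ, HasLogOn (fun z => f z / ratFun n z) K := by
  obtain ⟨R, hR⟩ := hK.isBounded.subset_closedBall 0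
  have hre : ∀ z ∈ K, |z.re| ≤ |R| := fun z hz =>
    ((Complex.abs_re_le_norm z).trans (mem_closedBall_zero_iff.1 (hR hz))).trans (le_abs_self R)
  have hsweep : ∃ n ∈ Finsupp.supported ℤ ℤ Kᶜ,
      HasLogOn (fun z => f z / ratFun n z) (K ∩ Complex.re ⁻¹' Set.Iic |R|) ∧
      HasLogOn (ratFun n) (K ∩ Complex.re ⁻¹' Set.Ici |R|) := by
    refine interval_induction (P := fun x => ∃ n ∈ Finsupp.supported ℤ ℤ Kᶜ,
      HasLogOn (fun z => f z / ratFun n z) (K ∩ Complex.re ⁻¹' Set.Iic x) ∧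
      HasLogOn (ratFun n) (K ∩ Complex.re ⁻¹' Set.Ici x)) (a := -|R|)
      (neg_le_self (abs_nonneg R)) ⟨0, zero_mem _, ?_, ?_⟩ fun x => ?_
    · refine (hasLogOn_inter_re_fiber hK hf h0 (-|R|)).congr (fun z _ => by simp) |>.mono ?_
      exact fun z hz => ⟨hz.1, hz.2.antisymm (abs_le.1 (hre z hz.1)).1⟩
    · exact (HasLogOn.const one_ne_zero).congr fun z _ => (ratFun_zero z).symm
    · obtain ⟨U, hU, hlog⟩ := (hasLogOn_inter_re_fiber hK hf h0 x).exists_mem_nhds_of_fiber hK hf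
        Complex.continuous_re
      exact ⟨U, hU, fun y y' hyy' hyU ⟨n, hn, hl, hr⟩ =>
        exists_ratFun_hasLogOn_extend hK hn hyy' hl hr
          (hlog.mono (Set.inter_subset_inter_right K (Set.preimage_mono hyU)))⟩
  obtain ⟨n, hn, hlog, -⟩ := hsweep
  exact ⟨n, hn, hlog.mono fun z hz => ⟨hz, (abs_le.1 (hre z hz)).2⟩⟩

end Eilenberg

section ArgumentPrinciple

variable {K V : Set ℂ} {n : ℂ →₀ ℤ}

theorem sub_eq_sub_of_exp_eq_exp {X : Type*} [TopologicalSpace X] [PreconnectedSpace X]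
    {φ ψ : X → ℂ} (hφ : Continuous φ) (hψ : Continuous ψ)
    (h : ∀ x, Complex.exp (φ x) = Complex.exp (ψ x)) (x y : X) : φ x - φ y = ψ x - ψ y := by
  obtain ⟨k, hkc, hk⟩ := exists_int_of_exp_eq_one (hφ.sub hψ).continuousOn (s := Set.univ)
    fun x _ => by rw [Pi.sub_apply, Complex.exp_sub, h, div_self (Complex.exp_ne_zero _)]
  have hkxy : k x = k y :=
    PreconnectedSpace.constant inferInstance (continuousOn_univ.1 hkc)
  have hx := hk x trivial
  have hy := hk y trivial
  rw [Pi.sub_apply] at hx hy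
  rw [hkxy] at hx
  linear_combination hx - hy

theorem eq_zero_of_hasLogOn_zpow_sphere {R : ℝ} (hR : 0 < R) {N : ℤ}
    (h : HasLogOn (fun z => z ^ N) (Metric.sphere 0 R)) : N = 0 := by
  obtain ⟨k, hk, he⟩ := h
  have hmem : ∀ t, circleMap 0 R t ∈ Metric.sphere 0 R := circleMap_mem_sphere 0 hR.le
  have hloop := sub_eq_sub_of_exp_eq_exp (φ := fun t => k (circleMap 0 R t))
    (ψ := fun t => k (circleMap 0 R 0) + N * (t * Complex.I))
    (hk.comp_continuous (continuous_circleMap 0 R) hmem) (by fun_prop) (fun t => by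
      rw [Complex.exp_add, ← he _ (hmem t), ← he _ (hmem 0), Complex.exp_int_mul, ← mul_zpow]
      simp [circleMap]) (2 * Real.pi) 0
  have hperiod : circleMap 0 R (2 * Real.pi) = circleMap 0 R 0 := by
    simpa using periodic_circleMap 0 R 0
  simpa [hperiod, Real.pi_ne_zero] using hloop.symm

theorem prod_const_zpow_eq_zpow_degree {c : ℂ} (hc : c ≠ 0) (n : ℂ →₀ ℤ) :
    n.prod (fun _ k => c ^ k) = c ^ n.degree := by
  induction n using Finsupp.induction_linear with
  | zero => simp
  | add m n hm hn =>
    rw [Finsupp.prod_add_index' (fun _ => zpow_zero c) fun _ => zpow_add₀ hc, hm, hn, map_add,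
      zpow_add₀ hc]
  | single a k => simp

theorem hasLogOn_ratFun_div_zpow_degree {g : ℂ → ℂ} {s : Set ℂ} (hg : ∀ z ∈ s, g z ≠ 0)
    (h : ∀ a ∈ n.support, HasLogOn (fun z => (z - a) / g z) s) :
    HasLogOn (fun z => ratFun n z / g z ^ n.degree) s := by
  refine (HasLogOn.prod fun a ha => (h a ha).zpow (n a)).congr fun z hz => ?_
  simp only [← prod_const_zpow_eq_zpow_degree (hg z hz), ratFun, Finsupp.prod, div_zpow,
    Finset.prod_div_distrib]

theorem degree_eq_zero_of_hasLogOn_sphere {R : ℝ} (hR : 0 < R)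
    (hn : n ∈ Finsupp.supported ℤ ℤ (Metric.ball 0 R))
    (h : HasLogOn (ratFun n) (Metric.sphere 0 R)) : n.degree = 0 := by
  have hquot : HasLogOn (fun z => ratFun n z / z ^ n.degree) (Metric.sphere 0 R) := by
    refine hasLogOn_ratFun_div_zpow_degree (fun z hz => ne_zero_of_mem_sphere hR.ne' ⟨z, hz⟩)
      fun a ha => .div_of_norm_sub_lt (by fun_prop) (g := fun z => z) continuousOn_id fun z hz => ?_
    have haR : ‖a‖ < R := mem_ball_zero_iff.1 (hn ha)
    rwa [sub_sub_cancel_left, norm_neg, mem_sphere_zero_iff_norm.1 hz]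
  refine eq_zero_of_hasLogOn_zpow_sphere hR ((h.div hquot).congr fun z hz => ?_)
  exact div_div_cancel₀ (h.ne_zero z hz)

theorem filter_mem_supported {α : Type*} {d : α →₀ ℤ} {s : Set α} {p : α → Prop}
    [DecidablePred p] (hd : d ∈ Finsupp.supported ℤ ℤ s) :
    d.filter p ∈ Finsupp.supported ℤ ℤ (s ∩ {a | p a}) := fun a ha => by
  obtain ⟨hda, hpa⟩ := Finset.mem_filter.1 (Finsupp.support_filter p d ▸ ha)
  exact ⟨hd hda, hpa⟩

theorem hasLogOn_compl_of_eqOn_frontier {f g : ℂ → ℂ} (hV : IsOpen V)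
    (hf : ContinuousOn f (closure V)) (hg : ContinuousOn g Vᶜ) (hf0 : ∀ z ∈ closure V, f z ≠ 0)
    (hg0 : ∀ z ∈ Vᶜ, g z ≠ 0) (hfg : Set.EqOn f g (frontier V)) : HasLogOn g Vᶜ := by
  obtain ⟨G, hGc, hGf, hGg⟩ := exists_continuousOn_union isClosed_closure hV.isClosed_compl hf hg
    fun z hz => hfg ⟨hz.1, hV.interior_eq.symm ▸ hz.2⟩
  have huniv : closure V ∪ Vᶜ = Set.univ :=
    Set.eq_univ_of_univ_subset
      ((Set.union_compl_self V).ge.trans (Set.union_subset_union_left _ subset_closure))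
  rw [huniv, continuousOn_univ] at hGc
  have hG0 : ∀ z, G z ≠ 0 := fun z => by
    rcases huniv.ge (Set.mem_univ z) with hz | hz
    · exact hGf hz ▸ hf0 z hz
    · exact hGg hz ▸ hg0 z hz
  exact ((hasLogOn_univ_of_continuous hGc hG0).mono (Set.subset_univ _)).congr hGg

open Classical in
theorem hasLogOn_ratFun_filter_compl (hK : IsClosed K) (hV : IsOpen V) (hVK : frontier V ⊆ K)
    (hn : n ∈ Finsupp.supported ℤ ℤ Kᶜ) (h : HasLogOn (ratFun n) K) :
    HasLogOn (ratFun (n.filter (· ∈ V))) Vᶜ := by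
  obtain ⟨h, hc, he⟩ := h
  obtain ⟨H, hH⟩ := exists_continuousMap_eqOn hK hc
  let m := n.filter (· ∈ V)
  let p := n.filter (· ∉ V)
  have hmK : m ∈ Finsupp.supported ℤ ℤ Kᶜ :=
    Finsupp.supported_mono Set.inter_subset_left (filter_mem_supported hn)
  have hpK : p ∈ Finsupp.supported ℤ ℤ Kᶜ :=
    Finsupp.supported_mono Set.inter_subset_left (filter_mem_supported hn)
  have hm : m ∈ Finsupp.supported ℤ ℤ Vᶜᶜ :=
    Finsupp.supported_mono (fun a ha => not_not_intro ha.2) (filter_mem_supported hn)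
  have hp : p ∈ Finsupp.supported ℤ ℤ (closure V)ᶜ := by
    refine Finsupp.supported_mono (fun a ha => ?_) (filter_mem_supported hn)
    rw [closure_eq_self_union_frontier]
    exact not_or_intro ha.2 fun h => ha.1 (hVK h)
  -- `exp H / ratFun p` extends `ratFun m` over `V` without zeros.
  refine hasLogOn_compl_of_eqOn_frontier (f := fun z => Complex.exp (H z) / ratFun p z) hV
    (ContinuousOn.div (by fun_prop) (continuousOn_ratFun hp) fun z hz => ratFun_ne_zero hp hz)
    (continuousOn_ratFun hm)
    (fun z hz => div_ne_zero (Complex.exp_ne_zero _) (ratFun_ne_zero hp hz))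
    (fun z hz => ratFun_ne_zero hm hz) fun z hz => ?_
  change Complex.exp (H z) / ratFun p z = ratFun m z
  rw [hH (hVK hz), ← he z (hVK hz), div_eq_iff (ratFun_ne_zero hpK (hVK hz)),
    ← ratFun_add hmK hpK (hVK hz), Finsupp.filter_add_filter_not]

open Classical in
theorem degree_filter_eq_zero (hK : IsClosed K) (hV : IsOpen V) (hVb : Bornology.IsBounded V)
    (hVK : frontier V ⊆ K) (hn : n ∈ Finsupp.supported ℤ ℤ Kᶜ) (h : HasLogOn (ratFun n) K) :
    (n.filter (· ∈ V)).degree = 0 := by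
  obtain ⟨R, hR, hVR⟩ := hVb.subset_ball_lt 0 0
  refine degree_eq_zero_of_hasLogOn_sphere hR (fun a ha => ?_)
    ((hasLogOn_ratFun_filter_compl hK hV hVK hn h).mono fun z hz hzV => ?_)
  · exact hVR (filter_mem_supported hn ha).2
  · exact (Metric.sphere_disjoint_ball).le_bot ⟨hz, hVR hzV⟩

end ArgumentPrinciple

section Components

variable {K V : Set ℂ} {n : ℂ →₀ ℤ}

theorem frontier_connectedComponentIn_subset {X : Type*} [TopologicalSpace X]
    [LocallyConnectedSpace X] {U : Set X} (hU : IsOpen U) (x : X) :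
    frontier (connectedComponentIn U x) ⊆ Uᶜ := by
  intro z hz hzU
  have hzz : z ∈ connectedComponentIn U z := mem_connectedComponentIn hzU
  obtain ⟨y, hyz, hyx⟩ := mem_closure_iff.1 hz.1 _ hU.connectedComponentIn hzz
  refine hz.2 ?_
  rwa [hU.connectedComponentIn.interior_eq, connectedComponentIn_eq hyx,
    ← connectedComponentIn_eq hyz]

theorem hasLogOn_sub_div_sub (hK : IsClosed K) (hV : IsPreconnected V) (hVK : Disjoint V K)
    {a b : ℂ} (ha : a ∈ V) (hb : b ∈ V) : HasLogOn (fun z => (z - a) / (z - b)) K := by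
  have hne : ∀ c ∈ V, ∀ z ∈ K, z - c ≠ 0 := fun c hc z hz =>
    sub_ne_zero.2 fun h => hVK.le_bot ⟨hc, h ▸ hz⟩
  refine hV.induction₂ (fun b a => HasLogOn (fun z => (z - a) / (z - b)) K) (fun b hb => ?_)
    (fun c b a _ hb _ hbc hab => ?_) (fun a b _ _ hab => ?_) hb ha
  · obtain ⟨ε, hε, hball⟩ := Metric.isOpen_iff.1 hK.isOpen_compl b (hVK.subset_compl_right hb)
    filter_upwards [nhdsWithin_le_nhds (Metric.ball_mem_nhds b hε)] with a ha
    refine .div_of_norm_sub_lt (by fun_prop) (by fun_prop) fun z hz => ?_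
    have hzb : ε ≤ ‖z - b‖ := by
      by_contra! hlt
      exact hball (mem_ball_iff_norm.2 hlt) hz
    rw [sub_sub_sub_cancel_left]
    exact (mem_ball_iff_norm'.1 ha).trans_le hzb
  · exact (hab.mul hbc).congr fun z hz => div_mul_div_cancel₀ (hne b hb z hz)
  · exact ((HasLogOn.const one_ne_zero).div hab).congr fun z _ => one_div_div _ _

theorem hasLogOn_sub_of_not_isBounded (hK : IsCompact K) (hV : IsPreconnected V)
    (hVK : Disjoint V K) (hVb : ¬ Bornology.IsBounded V) {a : ℂ} (ha : a ∈ V) :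
    HasLogOn (fun z => z - a) K := by
  obtain ⟨R, hR0, hR⟩ := hK.isBounded.subset_closedBall_lt 0 0
  obtain ⟨b, hb, hbR⟩ : ∃ b ∈ V, R < ‖b‖ := by
    by_contra! hVR
    exact hVb (Metric.isBounded_closedBall.subset fun z hz => mem_closedBall_zero_iff.2 (hVR z hz))
  have hsmall : ∀ z ∈ K, ‖z‖ < ‖b‖ := fun z hz => (mem_closedBall_zero_iff.1 (hR hz)).trans_lt hbR
  have hb0 : -b ≠ 0 := neg_ne_zero.2 (norm_pos_iff.1 (hR0.trans hbR))
  have hquot : HasLogOn (fun z => (z - b) / -b) K :=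
    .div_of_norm_sub_lt (by fun_prop) continuousOn_const fun z hz => by
      simpa using hsmall z hz
  have hfar : HasLogOn (fun z => z - b) K :=
    (hquot.mul (.const hb0)).congr fun z _ => div_mul_cancel₀ _ hb0
  refine ((hasLogOn_sub_div_sub hK.isClosed hV hVK ha hb).mul hfar).congr fun z hz => ?_
  exact div_mul_cancel₀ _ (sub_ne_zero.2 fun h => (hsmall z hz).ne (h ▸ rfl))

open Classical in
theorem ratFun_eq_prod_connectedComponentIn {U : Set ℂ} (hn : n ∈ Finsupp.supported ℤ ℤ U)
    (z : ℂ) : ratFun n z = ∏ V ∈ n.support.image (connectedComponentIn U),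
      ratFun (n.filter (· ∈ V)) z := by
  rw [ratFun, Finsupp.prod, ← Finset.prod_fiberwise_of_maps_to
    (fun a ha => Finset.mem_image_of_mem (connectedComponentIn U) ha)]
  refine Finset.prod_congr rfl fun V hV => ?_
  obtain ⟨b, -, rfl⟩ := Finset.mem_image.1 hV
  have hmem : ∀ a ∈ n.support, connectedComponentIn U a = connectedComponentIn U b ↔
      a ∈ connectedComponentIn U b := fun a ha =>
    ⟨fun h => h ▸ mem_connectedComponentIn (hn ha), fun h => (connectedComponentIn_eq h).symm⟩
  rw [ratFun, Finsupp.prod, Finsupp.support_filter, Finset.filter_congr hmem]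
  exact Finset.prod_congr rfl fun a ha => by
    rw [Finsupp.filter_apply_pos _ _ (Finset.mem_filter.1 ha).2]

open Classical in
theorem hasLogOn_ratFun_of_degree_eq_zero (hK : IsCompact K)
    (hn : n ∈ Finsupp.supported ℤ ℤ Kᶜ)
    (h : ∀ a ∉ K, Bornology.IsBounded (connectedComponentIn Kᶜ a) →
      (n.filter (· ∈ connectedComponentIn Kᶜ a)).degree = 0) : HasLogOn (ratFun n) K := by
  refine (HasLogOn.prod fun V hV => ?_).congr fun z _ =>
    (ratFun_eq_prod_connectedComponentIn hn z).symm
  obtain ⟨b, hb, rfl⟩ := Finset.mem_image.1 hV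
  have hbV : b ∈ connectedComponentIn Kᶜ b := mem_connectedComponentIn (hn hb)
  have hpre : IsPreconnected (connectedComponentIn Kᶜ b) := isPreconnected_connectedComponentIn
  have hdisj : Disjoint (connectedComponentIn Kᶜ b) K :=
    Set.disjoint_left.2 (connectedComponentIn_subset Kᶜ b)
  have hmem : ∀ a ∈ (n.filter (· ∈ connectedComponentIn Kᶜ b)).support,
      a ∈ connectedComponentIn Kᶜ b := fun a ha =>
    (filter_mem_supported hn ha).2
  by_cases hbdd : Bornology.IsBounded (connectedComponentIn Kᶜ b)
  · refine (hasLogOn_ratFun_div_zpow_degree (g := fun z => z - b) (fun z hz => ?_) fun a ha =>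
      hasLogOn_sub_div_sub hK.isClosed hpre hdisj (hmem a ha) hbV).congr fun z _ => ?_
    · exact sub_ne_zero.2 fun hzb => hdisj.le_bot ⟨hbV, hzb ▸ hz⟩
    · simp [h b (hn hb) hbdd]
  · refine HasLogOn.prod fun a ha => HasLogOn.zpow ?_ _
    exact hasLogOn_sub_of_not_isBounded hK hpre hdisj hbdd (hmem a ha)

open Classical in
theorem dvd_degree_filter {f g : ℂ → ℂ} {m : ℕ} (hK : IsCompact K) (hV : IsOpen V)
    (hVb : Bornology.IsBounded V) (hVK : frontier V ⊆ K) (hn : n ∈ Finsupp.supported ℤ ℤ Kᶜ)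
    (hfn : HasLogOn (fun z => f z / ratFun n z) K) (hg : ContinuousOn g K)
    (hg0 : ∀ z ∈ K, g z ≠ 0) (hfg : ∀ z ∈ K, f z = g z ^ m) :
    (m : ℤ) ∣ (n.filter (· ∈ V)).degree := by
  obtain ⟨p, hp, hgp⟩ := exists_hasLogOn_div_ratFun hK hg hg0
  have hlog : HasLogOn (ratFun (n + (-m : ℤ) • p)) K := by
    refine ((hgp.pow m).div hfn).congr fun z hz => ?_
    have hn0 := ratFun_ne_zero hn hz
    have hp0 := ratFun_ne_zero hp hz
    have hz0 := hg0 z hz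
    simp only [ratFun_add hn (Submodule.smul_mem _ _ hp) hz, ratFun_smul, hfg z hz, zpow_neg,
      zpow_natCast, div_pow]
    field_simp
  have hdeg := degree_filter_eq_zero hK.isClosed hV hVb hVK
    (add_mem hn (Submodule.smul_mem _ _ hp)) hlog
  rw [Finsupp.filter_add, Finsupp.filter_smul, map_add, map_zsmul, smul_eq_mul] at hdeg
  exact ⟨(p.filter (· ∈ V)).degree, by linear_combination hdeg⟩

theorem hasLogOn_of_frequently_pow {f : ℂ → ℂ} (hK : IsCompact K) (hf : ContinuousOn f K)
    (h0 : ∀ z ∈ K, f z ≠ 0)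
    (hroot : ∃ᶠ m in Filter.atTop, ∃ g, ContinuousOn g K ∧ ∀ z ∈ K, f z = g z ^ m) :
    HasLogOn f K := by
  classical
  obtain ⟨n, hn, hfn⟩ := exists_hasLogOn_div_ratFun hK hf h0
  suffices hnlog : HasLogOn (ratFun n) K from
    (hfn.mul hnlog).congr fun z hz => div_mul_cancel₀ _ (ratFun_ne_zero hn hz)
  refine hasLogOn_ratFun_of_degree_eq_zero hK hn fun a _ hbdd => ?_
  obtain ⟨m, hm, g, hg, hfg⟩ := Filter.frequently_atTop'.1 hroot
    (n.filter (· ∈ connectedComponentIn Kᶜ a)).degree.natAbs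
  have hopen := hK.isClosed.isOpen_compl
  refine Int.eq_zero_of_abs_lt_dvd (m := m) (dvd_degree_filter hK hopen.connectedComponentIn hbdd
    (by simpa using frontier_connectedComponentIn_subset hopen a) hn hfn hg
    (fun z hz hgz => h0 z hz ?_) hfg) (by rw [Int.abs_eq_natAbs]; omega)
  rw [hfg z hz, hgz, zero_pow (by omega)]

theorem hasLogOn_univ_of_frequently_pow {X : Type*} [TopologicalSpace X] [CompactSpace X]
    {i : X → ℂ} (hi : IsEmbedding i) {f : X → ℂ} (hf : Continuous f) (h0 : ∀ x, f x ≠ 0)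
    (hroot : ∃ᶠ m in Filter.atTop, ∃ g : X → ℂ, Continuous g ∧ ∀ x, f x = g x ^ m) :
    HasLogOn f Set.univ := by
  have hcl : IsClosedEmbedding i := ⟨hi, (isCompact_range hi.continuous).isClosed⟩
  have hext : ∀ g : X → ℂ, Continuous g → ∃ G : C(ℂ, ℂ), ∀ x, G (i x) = g x := fun g hg =>
    let ⟨G, hG⟩ := ContinuousMap.exists_extension hcl ⟨g, hg⟩
    ⟨G, DFunLike.congr_fun hG⟩
  obtain ⟨F, hF⟩ := hext f hf
  have hlog : HasLogOn F (Set.range i) := by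
    refine hasLogOn_of_frequently_pow (isCompact_range hi.continuous) F.continuous.continuousOn
      (Set.forall_mem_range.2 fun x => hF x ▸ h0 x) (hroot.mono ?_)
    rintro m ⟨g, hg, hfg⟩
    obtain ⟨G, hG⟩ := hext g hg
    exact ⟨G, G.continuous.continuousOn, Set.forall_mem_range.2 fun x => by rw [hF, hG, hfg]⟩
  exact (hlog.comp hi.continuous.continuousOn fun x _ => Set.mem_range_self x).congr
    fun x _ => hF x

end Components

section Solenoid

variable {w : ℕ → ℕ}

instance compactSpace_solenoid : CompactSpace (Solenoid w) := by
  have hclosed : IsClosed {x : ℕ → Circle | ∀ n, x n = x (n + 1) ^ w n} := by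
    rw [Set.ofPred_forall]
    exact isClosed_iInter fun n => isClosed_eq (by fun_prop) (by fun_prop)
  exact isCompact_iff_compactSpace.1 hclosed.isCompact

theorem continuous_solenoid_apply (n : ℕ) : Continuous fun x : Solenoid w => (x.1 n : ℂ) :=
  continuous_subtype_val.comp ((continuous_apply n).comp continuous_subtype_val)

theorem solenoid_apply_zero (x : Solenoid w) (n : ℕ) :
    x.1 0 = x.1 n ^ ∏ k ∈ Finset.range n, w k := by
  induction n with
  | zero => simp
  | succ n ih => rw [ih, x.2 n, ← pow_mul, Finset.prod_range_succ, mul_comm]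

/-- The one-parameter subgroup of the solenoid lying over `t ↦ exp (it)`. -/
noncomputable def solenoidLine (hw : ∀ n, w n ≠ 0) (t : ℝ) : Solenoid w :=
  ⟨fun n => Circle.exp (t / (∏ k ∈ Finset.range n, w k : ℕ)), fun n => by
    have hwn : (w n : ℝ) ≠ 0 := Nat.cast_ne_zero.2 (hw n)
    rw [← Circle.exp_nsmul, nsmul_eq_mul, Finset.prod_range_succ, Nat.cast_mul, ← div_div,
      mul_div_cancel₀ _ hwn]⟩

theorem continuous_solenoidLine (hw : ∀ n, w n ≠ 0) : Continuous (solenoidLine hw) :=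
  Continuous.subtype_mk (by fun_prop) _

theorem not_hasLogOn_solenoid_apply_zero (hw : ∀ n, w n ≠ 0) :
    ¬ HasLogOn (fun x : Solenoid w => (x.1 0 : ℂ)) Set.univ := by
  rintro ⟨h, hc, he⟩
  have hc := continuousOn_univ.1 hc
  obtain ⟨R, hR⟩ := (isCompact_range hc).isBounded.exists_norm_le
  have hbound : ∀ x, ‖h x‖ ≤ R := fun x => hR _ ⟨x, rfl⟩
  have hlift := sub_eq_sub_of_exp_eq_exp (φ := fun t => h (solenoidLine hw t))
    (ψ := fun t : ℝ => t * Complex.I) (hc.comp (continuous_solenoidLine hw)) (by fun_prop)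
    (fun t => by rw [← he _ trivial]; simp [solenoidLine]) (2 * R + 1) 0
  have hnorm := norm_sub_le (h (solenoidLine hw (2 * R + 1))) (h (solenoidLine hw 0))
  rw [hlift, Complex.ofReal_zero, zero_mul, sub_zero, norm_mul, Complex.norm_I, mul_one,
    Complex.norm_real, Real.norm_eq_abs] at hnorm
  linarith [le_abs_self (2 * R + 1), hbound (solenoidLine hw (2 * R + 1)),
    hbound (solenoidLine hw 0)]

theorem le_prod_range_of_one_lt (hw : ∀ n, 1 < w n) (N : ℕ) : N ≤ ∏ k ∈ Finset.range N, w k := by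
  calc N ≤ 2 ^ (Finset.range N).card := (Finset.card_range N).symm ▸ N.lt_two_pow_self.le
    _ ≤ ∏ k ∈ Finset.range N, w k := Finset.pow_card_le_prod _ _ _ fun k _ => hw k

end Solenoid

/-- **No solenoid is planar**: no solenoid embeds into the plane ℝ². -/
theorem no_embedding_of_solenoid_into_plane
    (w : ℕ → ℕ) (hw : ∀ n, 1 < w n) :
    ¬ ∃ f : Solenoid w → EuclideanSpace ℝ (Fin 2), IsEmbedding f := by
  rintro ⟨f, hf⟩
  have hplanar := Complex.orthonormalBasisOneI.repr.symm.toHomeomorph.isEmbedding.comp hf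
  refine not_hasLogOn_solenoid_apply_zero (fun n => (hw n).ne_bot) ?_
  refine hasLogOn_univ_of_frequently_pow hplanar (continuous_solenoid_apply 0)
    (fun x => (x.1 0).coe_ne_zero) ?_
  refine Filter.frequently_atTop.2 fun N => ⟨_, le_prod_range_of_one_lt hw N, ?_⟩
  refine ⟨_, continuous_solenoid_apply N, fun x => ?_⟩
  rw [solenoid_apply_zero x N, Circle.coe_pow]
end

section
/- No solenoid embeds into the 2-sphere: for any sequence of integers w₁, w₂, … with each wₙ > 1, there is no topological embedding of the solenoid Θ of type (w₁, w₂, …) into the 2-sphere S² = {v ∈ ℝ³ : ‖v‖ = 1}. -/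
open Topology

/-!
For compact `X`, nowhere vanishing functions modulo exponentials form the group `H¹(X; ℤ)`. When
`X` lies in the plane this group is free on suitable classes of functions `z - c` with `c ∉ X`:
they generate because every function is, up to a small relative error, the restriction of a
function on the plane with finitely many zeros, by Sard's theorem, and they are independent by
winding numbers (Borsuk, Eilenberg). On a solenoid the coordinate `x 0` has roots of unbounded
order, so an embedding into the plane would force its class to vanish. But `x 0` has no continuous
logarithm, because the one-parameter subgroup of the solenoid is recurrent. An embedding onto the
whole sphere is excluded by the same recurrence: removing a point at negative time leaves a plane,
on which `x 0` has a logarithm, containing the whole orbit at positive times.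
-/

open Set Filter Metric

section LogClass

variable {X : Type*} [TopologicalSpace X]

/-- The nowhere vanishing functions on `X` that have a continuous logarithm. -/
def logSubgroup (X : Type*) [TopologicalSpace X] : Subgroup C(X, ℂˣ) where
  carrier := {f | ∃ g : C(X, ℂ), ∀ x, (f x : ℂ) = Complex.exp (g x)}
  one_mem' := ⟨0, by simp⟩
  mul_mem' := by
    rintro f₁ f₂ ⟨g₁, h₁⟩ ⟨g₂, h₂⟩
    exact ⟨g₁ + g₂, fun x => by simp [h₁, h₂, Complex.exp_add]⟩
  inv_mem' := by
    rintro f ⟨g, h⟩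
    exact ⟨-g, fun x => by simp [h, Complex.exp_neg]⟩

/-- The Bruschlinsky group `C(X, ℂˣ) / exp C(X, ℂ)`, written additively. For compact Hausdorff `X`
it is the first Čech cohomology group `H¹(X; ℤ)`. -/
def BruschlinskyGroup (X : Type*) [TopologicalSpace X] : Type _ :=
  Additive (C(X, ℂˣ) ⧸ logSubgroup X)

noncomputable instance : AddCommGroup (BruschlinskyGroup X) :=
  inferInstanceAs (AddCommGroup (Additive (C(X, ℂˣ) ⧸ logSubgroup X)))

/-- The class of a nowhere vanishing function modulo exponentials. -/
noncomputable def logClass (f : C(X, ℂˣ)) : BruschlinskyGroup X :=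
  .ofMul (f : C(X, ℂˣ) ⧸ logSubgroup X)

theorem logClass_surjective : Function.Surjective (logClass (X := X)) :=
  QuotientGroup.mk_surjective

theorem logClass_mul (f g : C(X, ℂˣ)) : logClass (f * g) = logClass f + logClass g := rfl

theorem logClass_zpow (f : C(X, ℂˣ)) (k : ℤ) : logClass (f ^ k) = k • logClass f := rfl

theorem logClass_prod {ι : Type*} (s : Finset ι) (f : ι → C(X, ℂˣ)) :
    logClass (∏ i ∈ s, f i) = ∑ i ∈ s, logClass (f i) :=
  map_prod (QuotientGroup.mk' (logSubgroup X)) f s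

theorem logClass_eq_zero_iff {f : C(X, ℂˣ)} :
    logClass f = 0 ↔ ∃ g : C(X, ℂ), ∀ x, (f x : ℂ) = Complex.exp (g x) :=
  (ofMul_eq_zero).trans (QuotientGroup.eq_one_iff f)

theorem logClass_eq_of_div_mem_slitPlane {f g : C(X, ℂˣ)}
    (h : ∀ x, (f x / g x : ℂ) ∈ Complex.slitPlane) : logClass f = logClass g := by
  have hlog : Continuous fun x => Complex.log (f x / g x) := by
    refine Continuous.clog ?_ h
    exact (Units.continuous_val.comp f.continuous).div₀
      (Units.continuous_val.comp g.continuous) fun x => (g x).ne_zero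
  have hdiv : logClass (f / g) = 0 := logClass_eq_zero_iff.2 ⟨⟨_, hlog⟩, fun x => by
    simp [Complex.exp_log (Complex.slitPlane_ne_zero (h x))]⟩
  exact sub_eq_zero.1 hdiv

theorem div_mem_slitPlane_of_norm_sub_lt {z w : ℂ} (h : ‖z - w‖ < ‖w‖) :
    z / w ∈ Complex.slitPlane := by
  have hw : w ≠ 0 := norm_pos_iff.1 ((norm_nonneg _).trans_lt h)
  have := Complex.mem_slitPlane_of_norm_lt_one (z := z / w - 1) (by
    rwa [← div_self hw, ← sub_div, norm_div, div_lt_one (norm_pos_iff.2 hw)])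
  simpa using this

theorem logClass_eq_of_norm_sub_lt {f g : C(X, ℂˣ)}
    (h : ∀ x, ‖(f x - g x : ℂ)‖ < ‖(g x : ℂ)‖) : logClass f = logClass g :=
  logClass_eq_of_div_mem_slitPlane fun x => div_mem_slitPlane_of_norm_sub_lt (h x)

theorem logClass_const (u : ℂˣ) : logClass (ContinuousMap.const X u) = 0 :=
  logClass_eq_zero_iff.2 ⟨.const X (Complex.log u), fun _ => by simp [Complex.exp_log]⟩

theorem exists_forall_eq_exp [SimplyConnectedSpace X] [LocallyPathConnectedSpace X] (f : C(X, ℂ))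
    (hf : ∀ x, f x ≠ 0) : ∃ g : C(X, ℂ), ∀ x, f x = Complex.exp (g x) := by
  obtain ⟨x₀⟩ : Nonempty X := inferInstance
  obtain ⟨g, ⟨-, hg⟩, -⟩ := Complex.isCoveringMapOn_exp.existsUnique_continuousMap_lifts f
    (Complex.exp_log (hf x₀)) hf
  exact ⟨g, fun x => (congrFun hg x).symm⟩

theorem eq_of_isPreconnected_of_exp_eq_one {Y : Type*} [TopologicalSpace Y] {s : Set Y}
    (hs : IsPreconnected s) {g : Y → ℂ} (hg : ContinuousOn g s)
    (h : ∀ x ∈ s, Complex.exp (g x) = 1) {a b : Y} (ha : a ∈ s) (hb : b ∈ s) : g a = g b :=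
  Complex.isCoveringMap_exp.constOn_of_comp hs hg
    (fun x hx y hy => Subtype.ext ((h x hx).trans (h y hy).symm)) ha hb

end LogClass

section SubPoint

variable {K : Type*} [TopologicalSpace K]

theorem isOpen_compl_range [CompactSpace K] {Y : Type*} [TopologicalSpace Y] [T2Space Y]
    (j : C(K, Y)) : IsOpen (range j)ᶜ :=
  (isCompact_range j.continuous).isClosed.isOpen_compl

variable (j : C(K, ℂ))

/-- The function `x ↦ j x - c`, for a point `c` outside the image of `j`. -/
noncomputable def subPoint (c : ↥(range j)ᶜ) : C(K, ℂˣ) :=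
  ContinuousMap.unitsOfForallIsUnit (f := j - .const K (c : ℂ)) fun x =>
    (sub_ne_zero.2 fun h => c.2 ⟨x, h⟩).isUnit

@[simp]
theorem coe_subPoint_apply (c : ↥(range j)ᶜ) (x : K) : (subPoint j c x : ℂ) = j x - c := rfl

variable [CompactSpace K]

theorem isLocallyConstant_logClass_subPoint :
    IsLocallyConstant fun c => logClass (subPoint j c) := by
  rw [IsLocallyConstant.iff_eventually_eq]
  intro c
  obtain ⟨δ, hδ, hball⟩ := Metric.isOpen_iff.1 (isOpen_compl_range j) c c.2
  filter_upwards [ball_mem_nhds c hδ] with c' hc'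
  refine logClass_eq_of_norm_sub_lt fun x => ?_
  have hx : δ ≤ ‖j x - c‖ := by
    by_contra! hlt
    exact hball (mem_ball_iff_norm.2 hlt) ⟨x, rfl⟩
  rw [coe_subPoint_apply, coe_subPoint_apply, sub_sub_sub_cancel_left, norm_sub_rev]
  exact (mem_ball_iff_norm.1 hc').trans_le hx

theorem exists_logClass_subPoint_eq_zero :
    ∃ R : ℝ, ∀ c : ↥(range j)ᶜ, R < ‖(c : ℂ)‖ → logClass (subPoint j c) = 0 := by
  obtain ⟨R, hR⟩ := (isCompact_range j.continuous).isBounded.exists_norm_le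
  refine ⟨max R 0, fun c hc => ?_⟩
  have hc0 : -(c : ℂ) ≠ 0 := neg_ne_zero.2 (norm_pos_iff.1 ((le_max_right R 0).trans_lt hc))
  rw [← logClass_const (Units.mk0 _ hc0)]
  refine logClass_eq_of_norm_sub_lt fun x => ?_
  simpa using (hR _ (mem_range_self x)).trans_lt ((le_max_left R 0).trans_lt hc)

end SubPoint

section Independence

theorem eq_zero_of_zpow_eq_exp_on_sphere {c : ℂ} {R : ℝ} (hR : 0 < R) {k : ℤ} {g : ℂ → ℂ}
    (hg : ContinuousOn g (sphere c R)) (h : ∀ z ∈ sphere c R, (z - c) ^ k = Complex.exp (g z)) :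
    k = 0 := by
  have hmem (θ : ℝ) : circleMap c R θ ∈ sphere c R := circleMap_mem_sphere c hR.le θ
  have hφ : Continuous fun θ : ℝ =>
      g (circleMap c R θ) - k * (Real.log R + θ * Complex.I) :=
    (hg.comp_continuous (continuous_circleMap c R) hmem).sub (by fun_prop)
  have hexp (θ : ℝ) :
      Complex.exp (g (circleMap c R θ) - k * (Real.log R + θ * Complex.I)) = 1 := by
    rw [Complex.exp_sub, ← h _ (hmem θ), Complex.exp_int_mul, Complex.exp_add,
      ← Complex.ofReal_exp, Real.exp_log hR, circleMap, add_sub_cancel_left]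
    exact div_self (zpow_ne_zero _ (by simp [hR.ne']))
  have hends := eq_of_isPreconnected_of_exp_eq_one isPreconnected_univ hφ.continuousOn
    (fun θ _ => hexp θ) (mem_univ 0) (mem_univ (2 * Real.pi))
  have hloop : circleMap c R (2 * Real.pi) = circleMap c R 0 := by
    simpa using periodic_circleMap c R 0
  simpa [hloop, mul_add, Real.pi_ne_zero] using hends

/-- Glued to `(z - c) ^ k` outside `U`, the extension has no zeros in the plane, hence winding
number zero on a large circle. -/
theorem eq_zero_of_zpow_extends {U : Set ℂ} (hU : Bornology.IsBounded U) {c : ℂ}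
    (hc : c ∈ interior U) {A : ℂ → ℂ} (hA : ContinuousOn A (closure U))
    (hA0 : ∀ z ∈ closure U, A z ≠ 0) {k : ℤ} (h : ∀ z ∈ frontier U, A z = (z - c) ^ k) :
    k = 0 := by
  classical
  have hne : ∀ z ∉ interior U, z - c ≠ 0 := fun z hz h0 => hz (sub_eq_zero.1 h0 ▸ hc)
  have hcont : Continuous (U.piecewise A fun z => (z - c) ^ k) := by
    refine continuous_piecewise h hA ?_
    rw [closure_compl]
    exact ContinuousOn.zpow₀ (by fun_prop) k fun z hz => .inl (hne z hz)
  obtain ⟨g, hg⟩ := exists_forall_eq_exp ⟨_, hcont⟩ fun z => by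
    by_cases hz : z ∈ U
    · simpa [hz] using hA0 z (subset_closure hz)
    · simpa [hz] using zpow_ne_zero k (hne z fun hi => hz (interior_subset hi))
  obtain ⟨R, hR, hUR⟩ := hU.subset_ball_lt 0 c
  refine eq_zero_of_zpow_eq_exp_on_sphere (c := c) hR g.continuous.continuousOn fun z hz => ?_
  have hzU : z ∉ U := fun hzU => sphere_disjoint_ball.notMem_of_mem_left hz (hUR hzU)
  simpa [hzU] using hg z

theorem frontier_image_val_subset {Y : Type*} [TopologicalSpace Y] {V : Set Y} (hV : IsOpen V)
    {T : Set V} (hT : IsClopen T) : frontier (Subtype.val '' T) ⊆ Vᶜ := by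
  intro y hy hyV
  have : (⟨y, hyV⟩ : V) ∈ frontier T := by
    rw [← preimage_image_eq T Subtype.val_injective,
      ← hV.isOpenEmbedding_subtypeVal.isOpenMap.preimage_frontier_eq_frontier_preimage
        continuous_subtype_val]
    exact hy
  simp [hT.frontier_eq] at this

variable {K : Type*} [TopologicalSpace K] [CompactSpace K] {j : C(K, ℂ)}

theorem exists_isBounded_frontier_subset_range {c : ↥(range j)ᶜ}
    (hc : logClass (subPoint j c) ≠ 0) :
    ∃ U : Set ℂ, IsOpen U ∧ Bornology.IsBounded U ∧ (c : ℂ) ∈ U ∧ frontier U ⊆ range j ∧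
      ∀ d : ↥(range j)ᶜ, (d : ℂ) ∈ closure U →
        logClass (subPoint j d) = logClass (subPoint j c) := by
  set T : Set ↥(range j)ᶜ := {d | logClass (subPoint j d) = logClass (subPoint j c)}
  have hT : IsClopen T := (isLocallyConstant_logClass_subPoint j).isClopen_fiber _
  have hfr : frontier (Subtype.val '' T) ⊆ range j := by
    simpa using frontier_image_val_subset (isOpen_compl_range j) hT
  obtain ⟨R, hR⟩ := exists_logClass_subPoint_eq_zero j
  refine ⟨Subtype.val '' T, (isOpen_compl_range j).isOpenMap_subtype_val _ hT.isOpen, ?_,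
    ⟨c, rfl, rfl⟩, hfr, fun d hd => ?_⟩
  · refine isBounded_iff_forall_norm_le.2 ⟨R, ?_⟩
    rintro _ ⟨d, hd, rfl⟩
    by_contra! hlt
    exact hc (hd ▸ hR d hlt)
  · rw [closure_eq_self_union_frontier] at hd
    obtain ⟨d', hd', hdd'⟩ := hd.resolve_right fun h => d.2 (hfr h)
    rwa [← Subtype.ext hdd']

theorem linearIndependent_logClass_subPoint (hj : Function.Injective j) {ι : Type*}
    (c : ι → ↥(range j)ᶜ) (hinj : Function.Injective fun i => logClass (subPoint j (c i)))
    (hne : ∀ i, logClass (subPoint j (c i)) ≠ 0) :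
    LinearIndependent ℤ fun i => logClass (subPoint j (c i)) := by
  classical
  refine linearIndependent_iff'.2 fun s k hsum i hi => ?_
  simp only [← logClass_zpow, ← logClass_prod] at hsum
  obtain ⟨γ, hγ⟩ := logClass_eq_zero_iff.1 hsum
  simp only [ContinuousMap.prod_apply, ContinuousMap.zpow_apply, Units.coe_prod,
    Units.val_zpow_eq_zpow_val, coe_subPoint_apply] at hγ
  obtain ⟨γ', hγ'⟩ := γ.exists_extension' (j.continuous.isClosedEmbedding hj)
  obtain ⟨U, hUo, hUb, hcU, hfr, hcl⟩ := exists_isBounded_frontier_subset_range (hne i)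
  have hsub : ∀ l ∈ s.erase i, ∀ z ∈ closure U, z - (c l : ℂ) ≠ 0 := fun l hl z hz h0 =>
    Finset.ne_of_mem_erase hl (hinj (hcl (c l) (sub_eq_zero.1 h0 ▸ hz)))
  refine eq_zero_of_zpow_extends hUb (hUo.interior_eq.symm ▸ hcU)
    (A := fun z => Complex.exp (γ' z) * ∏ l ∈ s.erase i, (z - (c l : ℂ)) ^ (-k l)) ?_ ?_ ?_
  · refine ContinuousOn.mul (by fun_prop) (continuousOn_finsetProd _ fun l hl => ?_)
    exact ContinuousOn.zpow₀ (by fun_prop) _ fun z hz => .inl (hsub l hl z hz)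
  · exact fun z hz => mul_ne_zero (Complex.exp_ne_zero _)
      (Finset.prod_ne_zero_iff.2 fun l hl => zpow_ne_zero _ (hsub l hl z hz))
  · intro z hz
    obtain ⟨x, rfl⟩ := hfr hz
    have hprod : ∏ l ∈ s.erase i, (j x - (c l : ℂ)) ^ k l ≠ 0 := Finset.prod_ne_zero_iff.2
      fun l hl => zpow_ne_zero _ (hsub l hl _ (frontier_subset_closure hz))
    have hγx : γ' (j x) = γ x := congrFun hγ' x
    simp only [zpow_neg, Finset.prod_inv_distrib]
    rw [hγx, ← hγ, ← Finset.mul_prod_erase s _ hi, mul_inv_cancel_right₀ hprod]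

end Independence

section Approximation

variable {E : Type*} [NormedAddCommGroup E] [NormedSpace ℝ E] [FiniteDimensional ℝ E]

theorem dense_regularValues {g : E → E} (hg : Differentiable ℝ g) :
    Dense {v | ∀ z, g z = v → (fderiv ℝ g z).det ≠ 0} := by
  let _ : MeasurableSpace E := borel E
  have : BorelSpace E := ⟨rfl⟩
  have hsard := MeasureTheory.addHaar_image_eq_zero_of_det_fderivWithin_eq_zero
    MeasureTheory.Measure.addHaar (s := {z | (fderiv ℝ g z).det = 0})
    (fun z _ => (hg z).hasFDerivAt.hasFDerivWithinAt) fun _ hz => hz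
  refine MeasureTheory.Measure.dense_of_ae (μ := MeasureTheory.Measure.addHaar) ?_
  filter_upwards [MeasureTheory.measure_eq_zero_iff_ae_notMem.1 hsard] with v hv z hz hdet
  exact hv ⟨z, hdet, hz⟩

theorem finite_preimage_of_det_ne_zero {g : E → E} (hg : Differentiable ℝ g) {v : E}
    (hv : ∀ z, g z = v → (fderiv ℝ g z).det ≠ 0) (hcomp : IsCompact (g ⁻¹' {v})) :
    (g ⁻¹' {v}).Finite := by
  refine hcomp.finite (isDiscrete_iff_nhdsNE.2 fun z hz => ?_)
  let e := (fderiv ℝ g z).toContinuousLinearEquivOfDetNeZero (hv z hz)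
  have he : AntilipschitzWith _ (fderiv ℝ g z) := e.antilipschitz
  exact inf_principal_eq_bot.2 ((hg z).hasFDerivAt.eventually_ne ⟨_, he⟩)

theorem exists_finite_zeros_norm_sub_lt {a : E} (ha : a ≠ 0) {h : E → E} (hh : Continuous h)
    (hsupp : HasCompactSupport h) {ε : ℝ} (hε : 0 < ε) :
    ∃ F : E → E, Continuous F ∧ (F ⁻¹' {0}).Finite ∧ ∀ z, ‖a + h z - F z‖ < ε := by
  have : CompleteSpace E := FiniteDimensional.complete ℝ E
  obtain ⟨δ, hδ, hδε, hδa⟩ : ∃ δ > 0, 2 * δ ≤ ε ∧ 2 * δ ≤ ‖a‖ := by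
    have := norm_pos_iff.2 ha
    exact ⟨min ε ‖a‖ / 2, by positivity, by simp [mul_div_cancel₀]⟩
  obtain ⟨g, hg, hgh⟩ :=
    (hsupp.uniformContinuous_of_continuous hh).exists_contDiff_dist_le hδ
  have hgd : Differentiable ℝ g := hg.differentiable (by simp)
  obtain ⟨v, hv, hva⟩ := (dense_regularValues hgd).exists_dist_lt (-a) hδ
  have hclose (z : E) : ‖a + h z - (g z - v)‖ < 2 * δ := by
    calc ‖a + h z - (g z - v)‖ = ‖(h z - g z) - (-a - v)‖ := by congr 1; abel
      _ ≤ ‖h z - g z‖ + ‖-a - v‖ := norm_sub_le _ _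
      _ < δ + δ := add_lt_add (by simpa [dist_eq_norm'] using hgh z) (by rwa [← dist_eq_norm])
      _ = 2 * δ := (two_mul δ).symm
  refine ⟨fun z => g z - v, by fun_prop, ?_, fun z => (hclose z).trans_le hδε⟩
  have hpre : (fun z => g z - v) ⁻¹' {0} = g ⁻¹' {v} := by ext z; simp [sub_eq_zero]
  rw [hpre]
  refine finite_preimage_of_det_ne_zero hgd hv (hsupp.isCompact.of_isClosed_subset
    (isClosed_singleton.preimage hgd.continuous) fun z hz => ?_)
  by_contra hzs
  have hza := hclose z
  rw [image_eq_zero_of_notMem_tsupport hzs, show g z = v from hz, sub_self, add_zero,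
    sub_zero] at hza
  exact (hza.trans_le hδa).false

end Approximation

section Spanning

theorem exists_eq_zpow_mul_exp (f : C(Circle, ℂ)) (hf : ∀ z, f z ≠ 0) :
    ∃ (k : ℤ) (g : C(Circle, ℂ)), ∀ z, f z = (z : ℂ) ^ k * Complex.exp (g z) := by
  obtain ⟨φ, hφ⟩ := exists_forall_eq_exp (f.comp Circle.exp) fun θ => hf (Circle.exp θ)
  simp only [ContinuousMap.comp_apply] at hφ
  have hexp (θ : ℝ) : Complex.exp (φ (θ + 2 * Real.pi) - φ θ) = 1 := by
    rw [Complex.exp_sub, ← hφ, ← hφ, Circle.periodic_exp, div_self (hf _)]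
  obtain ⟨k, hk⟩ := Complex.exp_eq_one_iff.1 (hexp 0)
  have hstep (θ : ℝ) : φ (θ + 2 * Real.pi) = φ θ + k * (2 * Real.pi * Complex.I) := by
    rw [← sub_eq_iff_eq_add', ← hk]
    exact eq_of_isPreconnected_of_exp_eq_one isPreconnected_univ
      (Continuous.continuousOn (by fun_prop)) (fun θ _ => hexp θ) (mem_univ θ) (mem_univ 0)
  let ψ : C(ℝ, ℂ) := ⟨fun θ => φ θ - k * (θ * Complex.I), by fun_prop⟩
  have hψ : Function.Periodic ψ (2 * Real.pi) := fun θ => by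
    simp only [ψ, ContinuousMap.coe_mk, hstep]
    push_cast
    ring
  have hquot : IsQuotientMap Circle.exp := Circle.isCoveringMap_exp.isLocalHomeomorph.isOpenMap
    |>.isQuotientMap Circle.exp.continuous Circle.exp_surjective
  have hfactor : Function.FactorsThrough ψ Circle.exp := fun a b hab => by
    obtain ⟨m, rfl⟩ := Circle.exp_eq_exp.1 hab
    exact hψ.int_mul m b
  refine ⟨k, hquot.lift ψ hfactor, fun z => ?_⟩
  obtain ⟨θ, rfl⟩ := Circle.exp_surjective z
  have hlift : hquot.lift ψ hfactor (Circle.exp θ) = ψ θ :=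
    ContinuousMap.congr_fun (hquot.lift_comp ψ hfactor) θ
  rw [hφ, hlift, Circle.coe_exp, ← Complex.exp_int_mul, ← Complex.exp_add]
  simp [ψ]

theorem exists_eq_zpow_mul_exp_on_sphere {c : ℂ} {R : ℝ} (hR : 0 < R) {F : ℂ → ℂ}
    (hF : ContinuousOn F (sphere c R)) (hF0 : ∀ z ∈ sphere c R, F z ≠ 0) :
    ∃ (k : ℤ) (g : C(ℂ, ℂ)), ∀ z ∈ sphere c R, F z = (z - c) ^ k * Complex.exp (g z) := by
  have hR0 : (R : ℂ) ≠ 0 := by exact_mod_cast hR.ne'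
  let p : C(Circle, ℂ) := ⟨fun u => c + R * u, by fun_prop⟩
  have hp : IsClosedEmbedding p := p.continuous.isClosedEmbedding fun u v huv =>
    Circle.coe_injective (mul_left_cancel₀ hR0 (add_left_cancel huv))
  have hmem (u : Circle) : p u ∈ sphere c R := by simp [p, abs_of_pos hR, Circle.norm_coe]
  obtain ⟨k, g, hg⟩ := exists_eq_zpow_mul_exp ⟨F ∘ p, hF.comp_continuous p.continuous hmem⟩
    fun u => hF0 _ (hmem u)
  obtain ⟨g', hg'⟩ := g.exists_extension' hp
  refine ⟨k, g' - .const ℂ (k * Real.log R), fun z hz => ?_⟩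
  have hu : (z - c) / R ∈ Submonoid.unitSphere ℂ := by
    simp [Submonoid.unitSphere, mem_sphere_iff_norm.1 hz, abs_of_pos hR, hR.ne']
  obtain ⟨u, rfl⟩ : ∃ u, p u = z := ⟨⟨_, hu⟩, by simp [p, mul_div_cancel₀ _ hR0]⟩
  have hgu : g' (p u) = g u := congrFun hg' u
  rw [show F (p u) = _ from hg u, ContinuousMap.sub_apply, ContinuousMap.const_apply, hgu,
    Complex.exp_sub, Complex.exp_int_mul, ← Complex.ofReal_exp, Real.exp_log hR]
  simp only [p, ContinuousMap.coe_mk, add_sub_cancel_left, mul_zpow]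
  field_simp

theorem exists_continuousOn_eq_zpow_mul {V W : Set ℂ} (hV : IsOpen V) {c : ℂ} (hc : c ∈ V)
    (hW : W ∈ 𝓝 c) {F : ℂ → ℂ} (hF : ContinuousOn F (V \ {c})) (hF0 : ∀ z ∈ V \ {c}, F z ≠ 0) :
    ∃ (k : ℤ) (G : ℂ → ℂ), ContinuousOn G V ∧ (∀ z ∈ V, G z ≠ 0) ∧
      ∀ z ∉ W, F z = (z - c) ^ k * G z := by
  classical
  obtain ⟨R, hR, hball⟩ := Metric.nhds_basis_closedBall.mem_iff.1
    (inter_mem (hV.mem_nhds hc) hW)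
  have hne : ∀ z ∉ ball c R, z ≠ c := fun z hz h => hz (h ▸ mem_ball_self hR)
  have hsph : sphere c R ⊆ V \ {c} := fun z hz =>
    ⟨(hball (sphere_subset_closedBall hz)).1,
      hne z (sphere_disjoint_ball.notMem_of_mem_left hz)⟩
  obtain ⟨k, g, hg⟩ := exists_eq_zpow_mul_exp_on_sphere hR (hF.mono hsph) fun z hz =>
    hF0 z (hsph hz)
  refine ⟨k, (ball c R).piecewise (fun z => Complex.exp (g z)) fun z => (z - c) ^ (-k) * F z,
    ContinuousOn.piecewise ?_ (by fun_prop) (ContinuousOn.mul ?_ (hF.mono ?_)), ?_, ?_⟩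
  · rw [frontier_ball c hR.ne']
    rintro z ⟨-, hz⟩
    rw [hg z hz, zpow_neg, inv_mul_cancel_left₀ (zpow_ne_zero _ (sub_ne_zero.2 (hsph hz).2))]
  · rw [isOpen_ball.isClosed_compl.closure_eq]
    exact ContinuousOn.zpow₀ (by fun_prop) _ fun z hz => .inl (sub_ne_zero.2 (hne z hz.2))
  · rw [isOpen_ball.isClosed_compl.closure_eq]
    exact fun z hz => ⟨hz.1, hne z hz.2⟩
  · intro z hz
    by_cases hzb : z ∈ ball c R
    · simp [hzb]
    · simpa only [piecewise_eq_of_notMem _ _ _ hzb] using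
        mul_ne_zero (zpow_ne_zero _ (sub_ne_zero.2 (hne z hzb))) (hF0 z ⟨hz, hne z hzb⟩)
  · intro z hz
    have hzb : z ∉ ball c R := fun h => hz (hball (ball_subset_closedBall h)).2
    simp [hzb, zpow_ne_zero k (sub_ne_zero.2 (hne z hzb))]

variable {K : Type*} [TopologicalSpace K] {j : C(K, ℂ)}

theorem logClass_mem_span_of_finite [CompactSpace K] (s : Finset ℂ) (hs : ↑s ⊆ (range j)ᶜ)
    {F : ℂ → ℂ} (hF : ContinuousOn F (↑s)ᶜ) (hF0 : ∀ z ∉ s, F z ≠ 0) {f : C(K, ℂˣ)}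
    (hf : ∀ x, (f x : ℂ) = F (j x)) :
    logClass f ∈ Submodule.span ℤ (range fun c => logClass (subPoint j c)) := by
  induction s using Finset.induction_on generalizing F f with
  | empty =>
    obtain ⟨g, hg⟩ := exists_forall_eq_exp ⟨F, by simpa using hF⟩ fun z =>
      hF0 z (Finset.notMem_empty z)
    have : logClass f = 0 := logClass_eq_zero_iff.2 ⟨g.comp j, fun x => (hf x).trans (hg (j x))⟩
    exact this ▸ zero_mem _
  | insert c s hcs ih =>
    have hc : c ∈ (range j)ᶜ := hs (Finset.mem_insert_self c s)
    obtain ⟨k, G, hG, hG0, hFG⟩ := exists_continuousOn_eq_zpow_mul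
      (V := (↑s)ᶜ) s.finite_toSet.isClosed.isOpen_compl hcs
      ((isOpen_compl_range j).mem_nhds hc) (F := F)
      (hF.mono fun z hz => by simpa [and_comm] using hz)
      (fun z hz => hF0 z (by simpa [and_comm] using hz))
    have hf' : f = subPoint j ⟨c, hc⟩ ^ k * (f / subPoint j ⟨c, hc⟩ ^ k) :=
      (mul_div_cancel _ f).symm
    rw [hf', logClass_mul, logClass_zpow]
    refine add_mem (Submodule.smul_mem _ k (Submodule.subset_span ⟨_, rfl⟩))
      (ih ((Finset.coe_subset.2 (Finset.subset_insert c s)).trans hs) hG hG0 fun x => ?_)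
    have hx : j x - c ≠ 0 := sub_ne_zero.2 fun h => hc ⟨x, h⟩
    simp [hf, hFG (j x) (by simp), hx, zpow_ne_zero]

theorem exists_finite_zeros_approx [CompactSpace K] (hj : Function.Injective j) (f : C(K, ℂˣ)) :
    ∃ F : ℂ → ℂ, Continuous F ∧ (F ⁻¹' {0}).Finite ∧
      ∀ x, ‖(f x - F (j x) : ℂ)‖ < ‖(f x : ℂ)‖ := by
  have hfc : Continuous fun x => (f x : ℂ) := Units.continuous_val.comp f.continuous
  obtain ⟨m, hm, hmf⟩ := isCompact_univ.exists_forall_le' hfc.norm.continuousOn (a := 0)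
    fun x _ => norm_pos_iff.2 (f x).ne_zero
  obtain ⟨f', hf'⟩ := ContinuousMap.exists_extension' (j.continuous.isClosedEmbedding hj)
    ⟨fun x => (f x : ℂ) - 1, hfc.sub continuous_const⟩
  obtain ⟨φ, hφ1, -, hφc, -⟩ := exists_continuous_one_zero_of_isCompact
    (isCompact_range j.continuous) isClosed_empty (disjoint_empty _)
  obtain ⟨F, hF, hFfin, hclose⟩ := exists_finite_zeros_norm_sub_lt (one_ne_zero (α := ℂ))
    (h := fun z => (φ z : ℂ) * f' z) (by fun_prop)
    (hφc.comp_left Complex.ofReal_zero).mul_right hm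
  refine ⟨F, hF, hFfin, fun x => ?_⟩
  have hfx : f' (j x) = f x - 1 := congrFun hf' x
  have hx := hclose (j x)
  rw [hφ1 (mem_range_self x), hfx] at hx
  simpa using hx.trans_le (hmf x (mem_univ x))

theorem span_logClass_subPoint [CompactSpace K] (hj : Function.Injective j) :
    Submodule.span ℤ (range fun c => logClass (subPoint j c)) = ⊤ := by
  refine Submodule.eq_top_iff'.2 fun u => ?_
  obtain ⟨f, rfl⟩ := logClass_surjective u
  obtain ⟨F, hF, hfin, hclose⟩ := exists_finite_zeros_approx hj f
  have hFj (x : K) : F (j x) ≠ 0 := fun h0 => by simpa [h0] using hclose x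
  let f₁ : C(K, ℂˣ) := ContinuousMap.unitsOfForallIsUnit (f := (⟨F, hF⟩ : C(ℂ, ℂ)).comp j)
    fun x => (hFj x).isUnit
  have hff₁ : logClass f₁ = logClass f :=
    logClass_eq_of_norm_sub_lt fun x => by rw [norm_sub_rev]; exact hclose x
  rw [← hff₁]
  refine logClass_mem_span_of_finite hfin.toFinset ?_ hF.continuousOn (by simp) fun x => rfl
  rintro z hz ⟨x, rfl⟩
  exact hFj x (by simpa using hz)

end Spanning

section Free

theorem free_bruschlinskyGroup {K : Type*} [TopologicalSpace K] [CompactSpace K] {j : C(K, ℂ)}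
    (hj : Function.Injective j) : Module.Free ℤ (BruschlinskyGroup K) := by
  let ι := ↥((range fun c => logClass (subPoint j c)) \ {0})
  choose c hc using fun i : ι => i.2.1
  have hcval : (fun i => logClass (subPoint j (c i))) = (Subtype.val : ι → _) := funext hc
  have hindep := linearIndependent_logClass_subPoint hj c
    (hcval ▸ Subtype.val_injective) fun i => (hc i).trans_ne i.2.2
  refine .of_basis (.mk hindep ?_)
  rw [hcval, Subtype.range_coe, Submodule.span_sdiff_singleton_zero, span_logClass_subPoint hj]

theorem eq_zero_of_forall_exists_nsmul_eq {M : Type*} [AddCommGroup M] [Module.Free ℤ M] {u : M}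
    (hu : ∀ n : ℕ, ∃ m > n, ∃ y : M, m • y = u) : u = 0 := by
  let b := Module.Free.chooseBasis ℤ M
  refine b.ext_elem fun i => ?_
  obtain ⟨m, hm, y, rfl⟩ := hu (b.repr u i).natAbs
  have hdvd : (m : ℤ) ∣ b.repr (m • y) i := ⟨b.repr y i, by simp⟩
  rw [map_zero, Finsupp.zero_apply]
  exact Int.eq_zero_of_abs_lt_dvd hdvd (by rwa [Int.abs_eq_natAbs, Nat.cast_lt])

end Free

section Chart

theorem exists_chart_compl_singleton (p : sphere (0 : EuclideanSpace ℝ (Fin 3)) 1) :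
    ∃ e : OpenPartialHomeomorph (sphere (0 : EuclideanSpace ℝ (Fin 3)) 1) ℂ,
      e.source = {p}ᶜ ∧ e.target = univ := by
  have : Fact (Module.finrank ℝ (EuclideanSpace ℝ (Fin 3)) = 2 + 1) := ⟨by simp⟩
  let T : ℂ ≃ₜ EuclideanSpace ℝ (Fin 2) := Complex.orthonormalBasisOneI.repr.toHomeomorph
  exact ⟨(stereographic' 2 p).transHomeomorph T.symm, stereographic'_source p, by simp⟩

theorem exists_continuousOn_log_of_chart {Y Z : Type*} [TopologicalSpace Y] [TopologicalSpace Z]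
    [SimplyConnectedSpace Z] [LocallyPathConnectedSpace Z] (e : OpenPartialHomeomorph Y Z)
    (he : e.target = univ) {χ : Y → ℂ} (hχ : ContinuousOn χ e.source)
    (hχ0 : ∀ y ∈ e.source, χ y ≠ 0) :
    ∃ g : Y → ℂ, ContinuousOn g e.source ∧ ∀ y ∈ e.source, χ y = Complex.exp (g y) := by
  have hmem (z : Z) : e.symm z ∈ e.source := e.map_target (he ▸ mem_univ z)
  have hsymm : Continuous e.symm := by
    simpa only [he, continuousOn_univ] using e.continuousOn_symm
  obtain ⟨g, hg⟩ := exists_forall_eq_exp ⟨_, hχ.comp_continuous hsymm hmem⟩ fun z => hχ0 _ (hmem z)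
  refine ⟨g ∘ e, g.continuous.comp_continuousOn e.continuousOn, fun y hy => ?_⟩
  simpa [e.left_inv hy] using hg (e y)

end Chart

namespace Solenoid

variable {w : ℕ → ℕ}

instance inst_s2 : CompactSpace (Solenoid w) := by
  refine isCompact_iff_compactSpace.1 (IsClosed.isCompact ?_)
  have hinter : (solenoidSubgroup w : Set (ℕ → Circle)) = ⋂ n, {x | x n = x (n + 1) ^ w n} := by
    ext x; simp [solenoidSubgroup]
  rw [hinter]
  exact isClosed_iInter fun n => isClosed_eq (by fun_prop) (by fun_prop)

/-- The degree of `x n ↦ x 0`, that is, `x 0 = x n ^ degree w n`. -/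
def degree (w : ℕ → ℕ) (n : ℕ) : ℕ := ∏ i ∈ Finset.range n, w i

theorem degree_succ (w : ℕ → ℕ) (n : ℕ) : degree w (n + 1) = degree w n * w n :=
  Finset.prod_range_succ w n

theorem degree_dvd_degree (w : ℕ → ℕ) {m n : ℕ} (h : m ≤ n) : degree w m ∣ degree w n :=
  Finset.prod_dvd_prod_of_subset _ _ w (Finset.range_subset_range.2 h)

theorem degree_ne_zero (hw : ∀ n, w n ≠ 0) (n : ℕ) : degree w n ≠ 0 :=
  Finset.prod_ne_zero_iff.2 fun i _ => hw i

theorem lt_degree (hw : ∀ n, 1 < w n) (n : ℕ) : n < degree w n :=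
  calc n < 2 ^ n := n.lt_two_pow_self
    _ = ∏ _i ∈ Finset.range n, 2 := by simp
    _ ≤ degree w n := Finset.prod_le_prod' fun i _ => hw i

/-- The `n`-th coordinate of the solenoid, as a nowhere vanishing complex function. -/
noncomputable def coord (w : ℕ → ℕ) (n : ℕ) : C(Solenoid w, ℂˣ) :=
  ContinuousMap.unitsOfForallIsUnit
    (f := ⟨fun x => (x.1 n : ℂ),
      continuous_subtype_val.comp ((continuous_apply n).comp continuous_subtype_val)⟩)
    fun x => (Circle.coe_ne_zero (x.1 n)).isUnit

@[simp]
theorem coe_coord_apply (n : ℕ) (x : Solenoid w) : (coord w n x : ℂ) = x.1 n := rfl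

theorem coord_pow_degree (w : ℕ → ℕ) (n : ℕ) : coord w n ^ degree w n = coord w 0 := by
  induction n with
  | zero => simp [degree]
  | succ n ih =>
    have hstep : coord w n = coord w (n + 1) ^ w n := by
      ext x
      simp [x.2 n]
    rw [← ih, hstep, ← pow_mul, degree_succ, mul_comm]

theorem logClass_coord_zero (hw : ∀ n, 1 < w n) {f : Solenoid w → ℂ} (hf : Continuous f)
    (hinj : Function.Injective f) : logClass (coord w 0) = 0 := by
  have := free_bruschlinskyGroup (j := ⟨f, hf⟩) hinj
  refine eq_zero_of_forall_exists_nsmul_eq fun n =>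
    ⟨degree w n, lt_degree hw n, logClass (coord w n), ?_⟩
  rw [← coord_pow_degree w n, ← zpow_natCast, logClass_zpow, natCast_zsmul]

/-- The one-parameter subgroup of the solenoid that passes over `x 0 = exp (i t)` at time `t`. -/
noncomputable def flow (hw : ∀ n, w n ≠ 0) (t : ℝ) : Solenoid w :=
  ⟨fun n => Circle.exp (t / degree w n), fun n => by
    have : (w n : ℝ) ≠ 0 := Nat.cast_ne_zero.2 (hw n)
    rw [← Circle.exp_nsmul, degree_succ, nsmul_eq_mul]
    push_cast
    field_simp⟩

theorem flow_injective (hw : ∀ n, 1 < w n) :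
    Function.Injective (flow fun n => Nat.ne_zero_of_lt (hw n)) := by
  intro s t hst
  obtain ⟨n, hn⟩ := exists_nat_gt |s - t|
  have hdeg : (n : ℝ) < degree w n := by exact_mod_cast lt_degree hw n
  have hpos : (0 : ℝ) < degree w n := (Nat.cast_nonneg n).trans_lt hdeg
  obtain ⟨m, hm⟩ := Circle.exp_eq_exp.1 (congrFun (congrArg Subtype.val hst) n)
  have hsub : s - t = m * (2 * Real.pi) * degree w n := by
    field_simp at hm
    linear_combination hm
  obtain rfl | hm0 := eq_or_ne m 0
  · simpa [sub_eq_zero] using hsub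
  · have hm1 : (1 : ℝ) ≤ |(m : ℝ)| := by exact_mod_cast Int.one_le_abs hm0
    have hle : (degree w n : ℝ) ≤ |s - t| := by
      rw [hsub, abs_mul, abs_mul, abs_of_pos Real.two_pi_pos, Nat.abs_cast]
      exact le_mul_of_one_le_left hpos.le
        (one_le_mul_of_one_le_of_one_le hm1 (by linarith [Real.pi_gt_three]))
    linarith

section Flow

variable (hw : ∀ n, w n ≠ 0)

theorem continuous_flow : Continuous (flow hw) := by
  unfold flow
  fun_prop

theorem flow_apply_zero (t : ℝ) : (flow hw t).1 0 = Circle.exp t := by simp [flow, degree]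

theorem tendsto_flow_two_pi_mul_degree :
    Tendsto (fun n => flow hw (2 * Real.pi * degree w n)) atTop (𝓝 (flow hw 0)) := by
  refine tendsto_subtype_rng.2 (tendsto_pi_nhds.2 fun m => tendsto_const_nhds.congr' ?_)
  filter_upwards [eventually_ge_atTop m] with n hmn
  have hm : (degree w m : ℝ) ≠ 0 := Nat.cast_ne_zero.2 (degree_ne_zero hw m)
  obtain ⟨d, hd⟩ := degree_dvd_degree w hmn
  refine Circle.exp_eq_exp.2 ⟨-d, ?_⟩
  rw [hd]
  push_cast
  field_simp
  ring

/-- A logarithm of the coordinate `x 0` grows linearly along the flow, yet the flow returns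
arbitrarily close to its origin. -/
theorem not_exists_log_of_flow_mem {S : Set (Solenoid w)} (hS : ∀ t, 0 ≤ t → flow hw t ∈ S) :
    ¬ ∃ g : Solenoid w → ℂ, ContinuousOn g S ∧ ∀ x ∈ S, (x.1 0 : ℂ) = Complex.exp (g x) := by
  rintro ⟨g, hg, hexp⟩
  have hlin {t : ℝ} (ht : 0 ≤ t) : g (flow hw t) - t * Complex.I = g (flow hw 0) := by
    have hcont : ContinuousOn (fun t : ℝ => g (flow hw t) - t * Complex.I) (Ici 0) :=
      (hg.comp (continuous_flow hw).continuousOn hS).sub (by fun_prop)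
    simpa using eq_of_isPreconnected_of_exp_eq_one isPreconnected_Ici hcont (fun s hs => by
      rw [Complex.exp_sub, ← hexp _ (hS s hs), flow_apply_zero, Circle.coe_exp,
        div_self (Complex.exp_ne_zero _)]) ht self_mem_Ici
  have hτ (n : ℕ) : 0 ≤ 2 * Real.pi * degree w n := by positivity
  have hreturn : Tendsto (fun n => g (flow hw (2 * Real.pi * degree w n))) atTop
      (𝓝 (g (flow hw 0))) :=
    (hg _ (hS 0 le_rfl)).tendsto.comp (tendsto_nhdsWithin_iff.2
      ⟨tendsto_flow_two_pi_mul_degree hw, .of_forall fun n => hS _ (hτ n)⟩)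
  have hdist (n : ℕ) : 1 ≤ dist (g (flow hw (2 * Real.pi * degree w n))) (g (flow hw 0)) := by
    have hdeg : (1 : ℝ) ≤ degree w n := by
      exact_mod_cast Nat.one_le_iff_ne_zero.2 (degree_ne_zero hw n)
    rw [dist_eq_norm, ← hlin (hτ n), sub_sub_cancel, norm_mul, Complex.norm_I, mul_one,
      Complex.norm_real, Real.norm_of_nonneg (hτ n)]
    nlinarith [Real.pi_gt_three]
  exact absurd (ge_of_tendsto' (tendsto_iff_dist_tendsto_zero.1 hreturn) hdist) (by norm_num)

end Flow

theorem not_injective_of_continuous (hw : ∀ n, 1 < w n) {f : Solenoid w → ℂ}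
    (hf : Continuous f) : ¬ Function.Injective f := by
  intro hinj
  obtain ⟨g, hg⟩ := logClass_eq_zero_iff.1 (logClass_coord_zero hw hf hinj)
  exact not_exists_log_of_flow_mem (fun n => Nat.ne_zero_of_lt (hw n)) (S := univ)
    (fun _ _ => mem_univ _) ⟨g, g.continuous.continuousOn, fun x _ => hg x⟩

theorem surjective_of_continuous_injective (hw : ∀ n, 1 < w n)
    {f : Solenoid w → sphere (0 : EuclideanSpace ℝ (Fin 3)) 1} (hf : Continuous f)
    (hinj : Function.Injective f) : Function.Surjective f := by
  intro p
  by_contra hp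
  obtain ⟨e, he, -⟩ := exists_chart_compl_singleton p
  have hmem (x : Solenoid w) : f x ∈ e.source := he ▸ fun hx => hp ⟨x, hx⟩
  exact not_injective_of_continuous hw (e.continuousOn.comp_continuous hf hmem)
    fun x y hxy => hinj (e.injOn (hmem x) (hmem y) hxy)

end Solenoid

/-- **No solenoid embeds into the 2-sphere** S² = {v ∈ ℝ³ : ‖v‖ = 1}. -/
theorem no_embedding_of_solenoid_into_sphere
    (w : ℕ → ℕ) (hw : ∀ n, 1 < w n) :
    ¬ ∃ f : Solenoid w → ↥(Metric.sphere (0 : EuclideanSpace ℝ (Fin 3)) 1),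
      IsEmbedding f := by
  rintro ⟨f, hf⟩
  let h := hf.toHomeomorphOfSurjective
    (Solenoid.surjective_of_continuous_injective hw hf.continuous hf.injective)
  let γ := Solenoid.flow fun n => Nat.ne_zero_of_lt (hw n)
  obtain ⟨e, hsource, htarget⟩ := exists_chart_compl_singleton (h (γ (-1)))
  obtain ⟨g, hg, hexp⟩ := exists_continuousOn_log_of_chart e htarget
    (χ := fun y => (Solenoid.coord w 0 (h.symm y) : ℂ))
    (Units.continuous_val.comp (by fun_prop)).continuousOn fun y _ => Units.ne_zero _
  have hγ (t : ℝ) (ht : 0 ≤ t) : γ t ∈ h ⁻¹' e.source := by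
    rw [hsource]
    intro heq
    linarith [Solenoid.flow_injective hw (h.injective heq)]
  refine Solenoid.not_exists_log_of_flow_mem _ hγ
    ⟨g ∘ h, hg.comp h.continuous.continuousOn (mapsTo_preimage _ _), fun x hx => ?_⟩
  simpa using hexp (h x) hx
end
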